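/- arXiv:1109.2939 — 3 statements merged into one kernel-verified Lean document; each statement's English description precedes it below -/
import Mathlib

section
/- Let r ≤ m be positive integers and let L be an r×m matrix of integers of full rank r. For every ε > 0 there exists δ = δ(L, ε) > 0 such that the following holds: if A_1, …, A_m are Borel measurable subsets of the circle group T = ℝ/ℤ with S_L(A_1, …, A_m) ≤ δ, then there exist Borel measurable sets E_1, …, E_m ⊆ T with μ_T(E_i) ≤ ε for all i ∈ {1, …, m}, such that ((A_1 \ E_1) × ⋯ × (A_m \ E_m)) ∩ ker_T L = ∅. -/
open MeasureTheory Set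

noncomputable section

/-- The circle group `𝕋 = ℝ/ℤ`, with its normalized Haar (probability) measure `volume`. -/
abbrev 𝕋 : Type := AddCircle (1 : ℝ)

/-- The group homomorphism `x ↦ Lx` induced by an integer matrix `L`. -/
def Lhom {r m : ℕ} (L : Matrix (Fin r) (Fin m) ℤ) (G : Type*) [AddCommGroup G] :
    (Fin m → G) →+ (Fin r → G) where
  toFun x := fun i => ∑ j, L i j • x j
  map_zero' := by ext i; simp
  map_add' x y := by ext i; simp [smul_add, Finset.sum_add_distrib]

/-- `ker_𝕋 L`, the closed subgroup `{x ∈ 𝕋^m : Lx = 0}` of `𝕋^m`. -/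
def kerT {r m : ℕ} (L : Matrix (Fin r) (Fin m) ℤ) : AddSubgroup (Fin m → 𝕋) :=
  (Lhom L 𝕋).ker

set_option linter.unusedSectionVars false

section Loeb
open Filter Topology ENNReal

/-- A fixed nonprincipal ultrafilter on `ℕ`. -/
def UF : Ultrafilter ℕ := Filter.hyperfilter ℕ

lemma UF_ge (K : ℕ) : ∀ᶠ n in (UF : Filter ℕ), K ≤ n :=
  Nat.hyperfilter_le_atTop (Filter.eventually_ge_atTop K)

/-- The type of internal points. -/
def Om (X : Type*) : Type _ := ℕ → X

variable {X : Type*}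

/-- Internal sets. -/
def intl (S : ℕ → Set X) : Set (Om X) := {x | ∀ᶠ n in (UF : Filter ℕ), x n ∈ S n}

lemma mem_intl {S : ℕ → Set X} {x : Om X} : x ∈ intl S ↔ ∀ᶠ n in (UF : Filter ℕ), x n ∈ S n := Iff.rfl

lemma intl_compl (S : ℕ → Set X) : (intl S)ᶜ = intl (fun n => (S n)ᶜ) := by
  ext x
  simp only [mem_compl_iff, mem_intl]
  exact (Ultrafilter.eventually_not).symm

lemma intl_inter (S T : ℕ → Set X) : intl S ∩ intl T = intl (fun n => S n ∩ T n) := by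
  ext x
  simp only [mem_inter_iff, mem_intl, eventually_and]

lemma intl_union (S T : ℕ → Set X) : intl S ∪ intl T = intl (fun n => S n ∪ T n) := by
  ext x
  simp only [mem_union, mem_intl]
  exact (Ultrafilter.eventually_or).symm

lemma intl_sdiff (S T : ℕ → Set X) : intl S \ intl T = intl (fun n => S n \ T n) := by
  rw [sdiff_eq, intl_compl, intl_inter]; rfl

lemma intl_empty : intl (fun _ => (∅ : Set X)) = ∅ := by
  ext x
  simp [mem_intl, UF.neBot.ne]

lemma intl_univ : intl (fun _ => (univ : Set X)) = univ := by
  ext x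
  simp [mem_intl]

lemma intl_subset_iff [Nonempty X] {S T : ℕ → Set X} :
    intl S ⊆ intl T ↔ ∀ᶠ n in (UF : Filter ℕ), S n ⊆ T n := by
  constructor
  · intro h
    by_contra hc
    rw [← Ultrafilter.eventually_not] at hc
    classical
    have : ∀ n, ∃ x, ¬ (S n ⊆ T n) → x ∈ S n ∧ x ∉ T n := by
      intro n
      by_cases hn : S n ⊆ T n
      · exact ⟨Classical.arbitrary X, fun h => absurd hn h⟩
      · obtain ⟨x, hx, hx'⟩ := Set.not_subset.1 hn
        exact ⟨x, fun _ => ⟨hx, hx'⟩⟩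
    choose x hx using this
    have h1 : (x : Om X) ∈ intl S := by
      filter_upwards [hc] with n hn using (hx n hn).1
    have h2 := h h1
    have h3 : ∀ᶠ n in (UF : Filter ℕ), False := by
      filter_upwards [hc, h2] with n hn hn' using (hx n hn).2 hn'
    simp [UF.neBot.ne] at h3
  · intro h x hx
    filter_upwards [h, hx] with n h1 h2 using h1 h2

lemma intl_eq_empty_iff [Nonempty X] {S : ℕ → Set X} :
    intl S = ∅ ↔ ∀ᶠ n in (UF : Filter ℕ), S n = ∅ := by
  rw [← Set.subset_empty_iff, ← intl_empty, intl_subset_iff]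
  simp only [subset_empty_iff]

lemma saturation [Nonempty X] (B : ℕ → ℕ → Set X) (hanti : ∀ n K L, K ≤ L → B L n ⊆ B K n)
    (hne : ∀ K, ∀ᶠ n in (UF : Filter ℕ), (B K n).Nonempty) : ∃ x : Om X, ∀ K, x ∈ intl (B K) := by
  classical
  have : ∀ n, ∃ x, ∀ K, K ≤ n → (B K n).Nonempty → x ∈ B K n := by
    intro n
    set K0 := Nat.findGreatest (fun K => (B K n).Nonempty) n with hK0
    by_cases h0 : (B K0 n).Nonempty
    · obtain ⟨x, hx⟩ := h0
      refine ⟨x, fun K hK hK' => hanti n K K0 ?_ hx⟩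
      exact Nat.le_findGreatest hK hK'
    · refine ⟨Classical.arbitrary X, fun K hK hK' => absurd ?_ h0⟩
      exact Nat.findGreatest_spec (P := fun K => (B K n).Nonempty) hK hK'
  choose x hx using this
  refine ⟨x, fun K => ?_⟩
  filter_upwards [hne K, UF_ge K] with n h1 h2 using hx n K h2 h1

lemma finite_cover [Nonempty X] (S : ℕ → Set X) (T : ℕ → ℕ → Set X)
    (h : intl S ⊆ ⋃ k, intl (T k)) : ∃ K, ∀ᶠ n in (UF : Filter ℕ), S n ⊆ ⋃ k ∈ Finset.range K, T k n := by
  by_contra hc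
  push Not at hc
  obtain ⟨x, hx⟩ := saturation (fun K n => S n \ ⋃ k ∈ Finset.range K, T k n) (by
    intro n K L hKL
    apply sdiff_subset_sdiff_right
    apply biUnion_subset_biUnion_left
    intro k hk
    simp only [Finset.coe_range, mem_Iio, Finset.mem_range, Finset.mem_coe] at hk ⊢
    exact lt_of_lt_of_le hk hKL) (by
    intro K
    have := hc K
    have h2 : ¬ ∀ᶠ n in (UF : Filter ℕ), S n ⊆ ⋃ k ∈ Finset.range K, T k n := by
      intro h; exact absurd h (by simpa using this)
    rw [← Ultrafilter.eventually_not] at h2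
    filter_upwards [h2] with n hn
    rw [Set.nonempty_iff_ne_empty, ne_eq, sdiff_eq_empty]
    exact hn)
  have h1 : x ∈ intl S := by
    filter_upwards [hx 0] with n hn using hn.1
  obtain ⟨k, hk⟩ := mem_iUnion.1 (h h1)
  have : ∀ᶠ n in (UF : Filter ℕ), False := by
    filter_upwards [hx (k+1), hk] with n h1 h2
    exact h1.2 (mem_biUnion (x := k) (by simp) h2)
  simp [UF.neBot.ne] at this

variable [MeasurableSpace X]

/-- The algebra of internal sets. -/
def intlC (X : Type*) [MeasurableSpace X] : Set (Set (Om X)) :=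
  {A | ∃ S : ℕ → Set X, (∀ n, MeasurableSet (S n)) ∧ A = intl S}

lemma intlC_alg : IsSetAlgebra (intlC X) where
  empty_mem := ⟨fun _ => ∅, fun _ => MeasurableSet.empty, intl_empty.symm⟩
  compl_mem := by
    rintro _ ⟨S, hS, rfl⟩
    exact ⟨_, fun n => (hS n).compl, intl_compl S⟩
  union_mem := by
    rintro _ _ ⟨S, hS, rfl⟩ ⟨T, hT, rfl⟩
    exact ⟨_, fun n => (hS n).union (hT n), intl_union S T⟩

instance : MeasurableSpace (Om X) := MeasurableSpace.generateFrom (intlC X)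

lemma intl_meas {S : ℕ → Set X} (hS : ∀ n, MeasurableSet (S n)) : MeasurableSet (intl S) :=
  MeasurableSpace.measurableSet_generateFrom ⟨S, hS, rfl⟩

/-- Ultralimit. -/
def ulim (f : ℕ → ℝ≥0∞) : ℝ≥0∞ := (Ultrafilter.map f UF).lim

lemma tendsto_ulim (f : ℕ → ℝ≥0∞) : Tendsto f UF (𝓝 (ulim f)) :=
  Ultrafilter.le_nhds_lim (Ultrafilter.map f UF)

lemma ulim_eq {f : ℕ → ℝ≥0∞} {a} (h : Tendsto f UF (𝓝 a)) : ulim f = a :=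
  tendsto_nhds_unique (tendsto_ulim f) h

variable (μ : ℕ → Measure X)

open Classical in
/-- Loeb content as a function. -/
def loebFun (A : Set (Om X)) : ℝ≥0∞ :=
  if h : A ∈ intlC X then ulim (fun n => μ n (h.choose n)) else 0

variable [Nonempty X]

lemma loebFun_intl {S : ℕ → Set X} (hS : ∀ n, MeasurableSet (S n)) :
    loebFun μ (intl S) = ulim (fun n => μ n (S n)) := by
  have h : intl S ∈ intlC X := ⟨S, hS, rfl⟩
  rw [loebFun, dif_pos h]
  have h2 := h.choose_spec.2
  have h3 : ∀ᶠ n in (UF : Filter ℕ), S n = h.choose n := by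
    filter_upwards [intl_subset_iff.1 h2.le, intl_subset_iff.1 h2.ge] with n h1 h2
    exact h1.antisymm h2
  apply ulim_eq
  refine (tendsto_ulim _).congr' ?_
  filter_upwards [h3] with n hn
  rw [hn]

/-- Loeb content. -/
def loebContent : AddContent ℝ≥0∞ (intlC X) :=
  IsSetRing.addContent_of_union (loebFun μ) intlC_alg.isSetRing (by
    rw [← intl_empty, loebFun_intl μ (fun _ => MeasurableSet.empty)]
    apply ulim_eq
    simp) (by
    rintro _ _ ⟨S, hS, rfl⟩ ⟨T, hT, rfl⟩ hd
    rw [intl_union, loebFun_intl μ hS, loebFun_intl μ hT,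
      loebFun_intl μ (fun n => (hS n).union (hT n))]
    apply ulim_eq
    refine ((tendsto_ulim (fun n => μ n (S n))).add (tendsto_ulim (fun n => μ n (T n)))).congr' ?_
    rw [Set.disjoint_iff_inter_eq_empty, intl_inter, intl_eq_empty_iff] at hd
    filter_upwards [hd] with n hn
    rw [measure_union (Set.disjoint_iff_inter_eq_empty.2 hn) (hT n)])

lemma loebContent_intl {S : ℕ → Set X} (hS : ∀ n, MeasurableSet (S n)) :
    loebContent μ (intl S) = ulim (fun n => μ n (S n)) := loebFun_intl μ hS

lemma loebContent_sub : (loebContent μ).IsSigmaSubadditive := by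
  intro f hf hU
  choose T hT hfT using hf
  obtain ⟨S, hS, hSU⟩ := hU
  rw [hSU, loebContent_intl μ hS]
  have hfT' : f = fun k => intl (T k) := funext hfT
  subst hfT'
  obtain ⟨K, hK⟩ := finite_cover S T hSU.ge
  refine le_trans ?_ (ENNReal.sum_le_tsum (Finset.range K))
  simp_rw [loebContent_intl μ (hT _)]
  refine le_of_tendsto_of_tendsto (tendsto_ulim _)
    (tendsto_finsetSum (Finset.range K) fun k _ => tendsto_ulim (fun n => μ n (T k n))) ?_
  filter_upwards [hK] with n hn
  exact (measure_mono hn).trans (measure_biUnion_finset_le _ _)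

/-- Loeb measure. -/
def loeb : Measure (Om X) :=
  (loebContent μ).measure intlC_alg.isSetRing.isSetSemiring le_rfl (loebContent_sub μ)

lemma loeb_intl {S : ℕ → Set X} (hS : ∀ n, MeasurableSet (S n)) :
    Tendsto (fun n => μ n (S n)) UF (𝓝 (loeb μ (intl S))) := by
  have : loeb μ (intl S) = ulim (fun n => μ n (S n)) := by
    rw [← loebContent_intl μ hS]
    exact AddContent.measure_eq _ _ rfl _ ⟨S, hS, rfl⟩
  rw [this]
  exact tendsto_ulim _

instance loeb_prob [∀ n, IsProbabilityMeasure (μ n)] : IsProbabilityMeasure (loeb μ) := by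
  constructor
  have := loeb_intl μ (S := fun _ => univ) (fun _ => MeasurableSet.univ)
  rw [intl_univ] at this
  refine tendsto_nhds_unique this ?_
  simp

lemma loeb_intl_real [∀ n, IsProbabilityMeasure (μ n)] {S : ℕ → Set X} (hS : ∀ n, MeasurableSet (S n)) :
    Tendsto (fun n => (μ n).real (S n)) UF (𝓝 ((loeb μ).real (intl S))) :=
  (ENNReal.tendsto_toReal (measure_ne_top _ _)).comp (loeb_intl μ hS)

end Loeb

section Abstract
open MeasurableSpace

variable {Ω : Type*} {m mΩ : MeasurableSpace Ω} (P : Measure Ω) [IsProbabilityMeasure P]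

/-- conditional probability of a set -/
def cPr {mΩ : MeasurableSpace Ω} (P : Measure Ω) (m : MeasurableSpace Ω) (D : Set Ω) : Ω → ℝ := P[D.indicator (fun _ => (1:ℝ)) | m]

lemma cPr_meas (D : Set Ω) : Measurable[m] (cPr P m D) :=
  stronglyMeasurable_condExp.measurable

lemma cPr_int (D : Set Ω) : Integrable (cPr P m D) P := integrable_condExp

lemma cPr_nonneg (D : Set Ω) : 0 ≤ᵐ[P] cPr P m D := by
  apply condExp_nonneg
  filter_upwards with x
  exact indicator_nonneg (fun _ _ => zero_le_one) x

lemma cPr_pull (hm : m ≤ mΩ) {g : Ω → ℝ} (hg : Measurable[m] g)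
    (h0 : ∀ x, 0 ≤ g x) (h1 : ∀ x, g x ≤ 1) {D : Set Ω} (hD : MeasurableSet D) :
    ∫ x in D, g x ∂P = ∫ x, g x * cPr P m D x ∂P := by
  have hb : Integrable (g * D.indicator (fun _ => (1:ℝ))) P := by
    refine Integrable.of_bound (C := 1) ?_ ?_
    · exact ((hg.mono hm le_rfl).mul (measurable_const.indicator hD)).aestronglyMeasurable
    · filter_upwards with x
      simp only [Pi.mul_apply, indicator, norm_mul, Real.norm_eq_abs, abs_of_nonneg (h0 x)]
      split_ifs <;> simp [h1 x]
  have h := condExp_mul_of_stronglyMeasurable_left (m := m) (μ := P) hg.stronglyMeasurable hb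
    ((integrable_const (1:ℝ)).indicator hD)
  calc ∫ x in D, g x ∂P = ∫ x, (g * D.indicator (fun _ => (1:ℝ))) x ∂P := by
        rw [← integral_indicator hD]
        congr 1; ext x
        by_cases hx : x ∈ D <;> simp [hx]
    _ = ∫ x, (P[g * D.indicator (fun _ => (1:ℝ)) | m]) x ∂P := (integral_condExp hm).symm
    _ = _ := integral_congr_ae h

lemma cPr_pull_set (hm : m ≤ mΩ) {Z : Set Ω} (hZ : MeasurableSet[m] Z)
    {D : Set Ω} (hD : MeasurableSet D) :
    P.real (Z ∩ D) = ∫ x in Z, cPr P m D x ∂P := by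
  rw [cPr, setIntegral_condExp hm ((integrable_const (1:ℝ)).indicator hD) hZ,
    setIntegral_indicator hD]
  simp

variable {κ : Type*} [Fintype κ]

lemma sum_fibers (p : Ω → κ) (hp : ∀ b, MeasurableSet (p ⁻¹' {b})) {T : Set Ω}
    (hT : MeasurableSet T) : ∑ b, P.real (T ∩ p ⁻¹' {b}) = P.real T := by
  classical
  rw [← measureReal_biUnion_finset]
  · congr 1; ext x; simp
  · intro a _ b _ hab
    refine Set.disjoint_left.2 ?_
    rintro x ⟨_, hx⟩ ⟨_, hy⟩
    exact hab (by rw [← mem_singleton_iff.1 hx, ← mem_singleton_iff.1 hy])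
  · intro b _
    exact hT.inter (hp b)

/-- the good set of a cell -/
def Qset {mΩ : MeasurableSpace Ω} (P : Measure Ω) (m : MeasurableSpace Ω) (c : ℝ) (β E : Set Ω) : Set Ω :=
  {ω | cPr P m (β ∩ Eᶜ) ω ≤ c * cPr P m β ω}

lemma Qset_meas {mΩ : MeasurableSpace Ω} (P : Measure Ω) [IsProbabilityMeasure P] (m : MeasurableSpace Ω) (c : ℝ) (β E : Set Ω) :
    MeasurableSet[m] (Qset P m c β E) :=
  @measurableSet_le _ _ _ _ _ m _ _ _ _ _ (cPr_meas P _) ((cPr_meas P _).const_mul c)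

lemma fiber_meas (p : Ω → κ) (hp : ∀ b, MeasurableSet (p ⁻¹' {b})) (V : κ → Set Ω)
    (hV : ∀ b, MeasurableSet (V b)) : MeasurableSet {ω | ω ∈ V (p ω)} := by
  have : {ω | ω ∈ V (p ω)} = ⋃ b, V b ∩ p ⁻¹' {b} := by
    ext x; simp
  rw [this]
  exact MeasurableSet.iUnion fun b => (hV b).inter (hp b)

lemma step_K (hm : m ≤ mΩ) (p : Ω → κ)
    (hp : ∀ b, MeasurableSet (p ⁻¹' {b})) {E : Set Ω} (hE : MeasurableSet E)
    (V : κ → Set Ω) (hV : ∀ b, MeasurableSet[m] (V b)) {c : ℝ} :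
    c * P.real ({ω | ω ∈ V (p ω)} \ {ω | ω ∈ Qset P m c (p ⁻¹' {p ω}) E})
      ≤ P.real ({ω | ω ∈ V (p ω)} \ E) := by
  have hW := fiber_meas p hp V (fun b => hm _ (hV b))
  have hK := fiber_meas p hp (fun b => Qset P m c (p ⁻¹' {b}) E)
    (fun b => hm _ (Qset_meas P m c _ E))
  set W := {ω | ω ∈ V (p ω)} with hWdef
  set K := {ω | ω ∈ Qset P m c (p ⁻¹' {p ω}) E} with hKdef
  rw [← sum_fibers P p hp (hW.diff hK), ← sum_fibers P p hp (hW.diff hE), Finset.mul_sum]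
  refine Finset.sum_le_sum fun b _ => ?_
  set β := p ⁻¹' {b}
  set Z := V b ∩ (Qset P m c β E)ᶜ with hZ
  have hZm : MeasurableSet[m] Z :=
    @MeasurableSet.inter _ m _ _ (hV b) (@MeasurableSet.compl _ _ m (Qset_meas P m c _ E))
  have e1 : (W \ K) ∩ β = Z ∩ β := by
    ext x
    simp only [hWdef, hKdef, hZ, mem_inter_iff, mem_sdiff, mem_ofPred_eq, mem_compl_iff, β,
      mem_preimage, mem_singleton_iff]
    constructor
    · rintro ⟨h, rfl⟩; exact ⟨h, rfl⟩
    · rintro ⟨h, rfl⟩; exact ⟨h, rfl⟩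
  have e2 : Z ∩ (β ∩ Eᶜ) ⊆ (W \ E) ∩ β := by
    rintro x ⟨⟨hx1, -⟩, hx2, hx3⟩
    refine ⟨⟨?_, hx3⟩, hx2⟩
    have : p x = b := hx2
    simpa [hWdef, this] using hx1
  rw [e1]
  refine le_trans ?_ (measureReal_mono e2)
  rw [cPr_pull_set P hm hZm (hp b), cPr_pull_set P hm hZm ((hp b).inter hE.compl),
    ← integral_const_mul]
  refine setIntegral_mono_on ((cPr_int P _).const_mul c).integrableOn (cPr_int P _).integrableOn
    (hm _ hZm) ?_
  intro x hx
  exact le_of_lt (not_le.1 hx.2)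

variable {J : Type*} [Fintype J] [DecidableEq J]

/-- sigma-algebra generated by a family of faces -/
@[reducible] def Asig (I : Finset J → Set (Set Ω)) (S : Finset (Finset J)) : MeasurableSpace Ω :=
  ⨆ s ∈ S, generateFrom (I s)

/-- Relative independence. -/
def RelInd (I : Finset J → Set (Set Ω)) : Prop :=
  ∀ (e : Finset J) (S : Finset (Finset J)) (R : Set Ω), MeasurableSet[Asig I S] R →
    ∃ ρ : Ω → ℝ, Measurable[Asig I (S.image (e ∩ ·))] ρ ∧ (∀ x, 0 ≤ ρ x) ∧ (∀ x, ρ x ≤ 1) ∧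
      ∀ D, MeasurableSet[generateFrom (I e)] D → P.real (R ∩ D) = ∫ x in D, ρ x ∂P

lemma Asig_mono (I : Finset J → Set (Set Ω)) {S T : Finset (Finset J)}
    (h : ∀ s ∈ S, s ∈ T) : Asig I S ≤ Asig I T :=
  iSup₂_le fun s hs => le_iSup₂_of_le (f := fun s _ => generateFrom (I s)) s (h s hs) le_rfl

lemma Asig_le {I : Finset J → Set (Set Ω)} (hI : ∀ e, ∀ s ∈ I e, MeasurableSet s)
    (S : Finset (Finset J)) : Asig I S ≤ mΩ :=
  iSup₂_le fun s _ => generateFrom_le (hI s)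

lemma Asig_le_face {I : Finset J → Set (Set Ω)} (hmono : ∀ s t, s ⊆ t → I s ⊆ I t)
    {S : Finset (Finset J)} {e : Finset J} (hS : ∀ s ∈ S, s ⊆ e) :
    Asig I S ≤ generateFrom (I e) :=
  iSup₂_le fun s hs => generateFrom_mono (hmono _ _ (hS s hs))

/-- (i): few bad points -/
lemma step_i {I : Finset J → Set (Set Ω)} (hI : ∀ e, ∀ s ∈ I e, MeasurableSet s)
    (hmono : ∀ s t, s ⊆ t → I s ⊆ I t) (hU : RelInd P I)
    {S : Finset (Finset J)} (hdown : ∀ s ∈ S, ∀ t ⊆ s, t ∈ S) {e : Finset J} {R β E : Set Ω}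
    (hR : MeasurableSet[Asig I S] R) (hβ : MeasurableSet[generateFrom (I e)] β)
    (hE : MeasurableSet[generateFrom (I e)] E) {c : ℝ} :
    P.real (R ∩ (Qset P (Asig I (S.filter (· ⊆ e))) c β E ∩ (β ∩ Eᶜ))) ≤
      c * P.real (R ∩ (Qset P (Asig I (S.filter (· ⊆ e))) c β E ∩ β)) := by
  obtain ⟨ρ, hρ, h0, h1, hD⟩ := hU e S R hR
  set A := Asig I (S.filter (· ⊆ e)) with hA
  set Q := Qset P A c β E
  have hQ : MeasurableSet[A] Q := Qset_meas P A c β E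
  have hAe : A ≤ generateFrom (I e) := Asig_le_face hmono (by simp)
  have heΩ : generateFrom (I e) ≤ mΩ := generateFrom_le (hI e)
  have hAΩ := hAe.trans heΩ
  have hρA : Measurable[A] ρ := hρ.mono (Asig_mono I (by
    intro s hs
    obtain ⟨t, ht, rfl⟩ := Finset.mem_image.1 hs
    simp only [Finset.mem_filter]
    exact ⟨hdown t ht _ Finset.inter_subset_right, Finset.inter_subset_left⟩)) le_rfl
  have hEc := @MeasurableSet.compl _ _ (generateFrom (I e)) hE
  have hβE := @MeasurableSet.inter _ (generateFrom (I e)) _ _ hβ hEc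
  rw [hD _ (@MeasurableSet.inter _ (generateFrom (I e)) _ _ (hAe _ hQ) hβE),
    hD _ (@MeasurableSet.inter _ (generateFrom (I e)) _ _ (hAe _ hQ) hβ)]
  have key : ∀ D, MeasurableSet[mΩ] D → ∫ x in Q ∩ D, ρ x ∂P = ∫ x, Q.indicator ρ x * cPr P A D x ∂P := by
    intro D hD
    rw [← cPr_pull P hAΩ (hρA.indicator hQ) (fun x => indicator_nonneg (fun _ _ => h0 _) x)
      (fun x => indicator_le' (fun _ _ => h1 _) (fun _ _ => zero_le_one) x) hD,
      setIntegral_indicator (hAΩ _ hQ), inter_comm]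
  rw [key _ (heΩ _ hβE), key _ (heΩ _ hβ), ← integral_const_mul]
  have hint : ∀ D, Integrable (fun x => Q.indicator ρ x * cPr P A D x) P := by
    intro D
    refine (cPr_int P D).bdd_mul (c := 1)
      ((hρA.indicator hQ).mono hAΩ le_rfl).aestronglyMeasurable ?_
    filter_upwards with x
    rw [Real.norm_of_nonneg (indicator_nonneg (fun _ _ => h0 _) x)]
    exact indicator_le' (fun _ _ => h1 _) (fun _ _ => zero_le_one) x
  refine integral_mono (hint _) ((hint _).const_mul c) ?_
  intro x
  by_cases hx : x ∈ Q
  · simp only [indicator_of_mem hx]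
    have : cPr P A (β ∩ Eᶜ) x ≤ c * cPr P A β x := hx
    nlinarith [h0 x]
  · simp [hx]

/-- (ii): supports -/
lemma step_ii {I : Finset J → Set (Set Ω)} (hI : ∀ e, ∀ s ∈ I e, MeasurableSet s)
    (hmono : ∀ s t, s ⊆ t → I s ⊆ I t) (hU : RelInd P I)
    {S : Finset (Finset J)} (hdown : ∀ s ∈ S, ∀ t ⊆ s, t ∈ S) {e : Finset J} {R β : Set Ω}
    (hR : MeasurableSet[Asig I S] R) (hβ : MeasurableSet[generateFrom (I e)] β)
    (h : P.real (R ∩ β) = 0) :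
    ∃ T, MeasurableSet[Asig I (S.filter (· ⊆ e))] T ∧ P.real (R ∩ T) = 0 ∧ P.real (β \ T) = 0 := by
  obtain ⟨ρ, hρ, h0, h1, hD⟩ := hU e S R hR
  set A := Asig I (S.filter (· ⊆ e)) with hA
  have hAe : A ≤ generateFrom (I e) := Asig_le_face hmono (by simp)
  have heΩ : generateFrom (I e) ≤ mΩ := generateFrom_le (hI e)
  have hAΩ := hAe.trans heΩ
  have hρA : Measurable[A] ρ := hρ.mono (Asig_mono I (by
    intro s hs
    obtain ⟨t, ht, rfl⟩ := Finset.mem_image.1 hs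
    simp only [Finset.mem_filter]
    exact ⟨hdown t ht _ Finset.inter_subset_right, Finset.inter_subset_left⟩)) le_rfl
  have hT : MeasurableSet[A] {x | 0 < cPr P A β x} :=
    @measurableSet_lt _ _ _ _ _ A _ _ _ _ _ (@measurable_const _ _ _ A 0) (cPr_meas P _)
  refine ⟨{x | 0 < cPr P A β x}, hT, ?_, ?_⟩
  · rw [hD _ (hAe _ hT)]
    rw [hD _ hβ, cPr_pull P hAΩ hρA h0 h1 (heΩ _ hβ)] at h
    have hint : Integrable (fun x => ρ x * cPr P A β x) P := by
      refine (cPr_int P β).bdd_mul (c := 1) (hρA.mono hAΩ le_rfl).aestronglyMeasurable ?_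
      filter_upwards with x
      rw [Real.norm_of_nonneg (h0 x)]
      exact h1 x
    rw [integral_eq_zero_iff_of_nonneg_ae ?_ hint] at h
    · apply integral_eq_zero_of_ae
      refine (ae_restrict_iff' (hAΩ _ hT)).2 ?_
      filter_upwards [h] with x hx hx'
      rcases mul_eq_zero.1 hx with h | h
      · exact h
      · exact absurd h (ne_of_gt hx')
    · filter_upwards [cPr_nonneg P (m := A) β] with x hx
      exact mul_nonneg (h0 x) hx
  · have e : β \ {x | 0 < cPr P A β x} = {x | 0 < cPr P A β x}ᶜ ∩ β := by
      ext x; simp [and_comm]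
    rw [e, cPr_pull_set P hAΩ (@MeasurableSet.compl _ _ A hT) (heΩ _ hβ)]
    refine le_antisymm ?_ ?_
    · refine setIntegral_nonpos (hAΩ _ (@MeasurableSet.compl _ _ A hT)) ?_
      intro x hx
      exact not_lt.1 hx
    · exact integral_nonneg_of_ae (ae_restrict_of_ae (cPr_nonneg P β))

lemma approx_alg (hm : m ≤ mΩ) {𝒲 : Set (Set Ω)} (h : IsSetAlgebra 𝒲)
    (hg : m = generateFrom 𝒲) {E : Set Ω} (hE : MeasurableSet[m] E) {η : ℝ} (hη : 0 < η) :
    ∃ W ∈ 𝒲, P.real (symmDiff E W) < η := by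
  have := isFiniteMeasure_trim (μ := P) hm
  have hd := @Measure.MeasureDense.of_generateFrom_isSetAlgebra_finite Ω m
    (P.trim hm) 𝒲 this h hg
  obtain ⟨W, hW, h1⟩ := @Measure.MeasureDense.approx Ω m _ _ hd E hE
    (@measure_ne_top _ m _ this _) η hη
  refine ⟨W, hW, ?_⟩
  have hWm : MeasurableSet[m] W := by rw [hg]; exact measurableSet_generateFrom hW
  rw [trim_measurableSet_eq hm (@MeasurableSet.symmDiff _ m _ _ hE hWm)] at h1
  rw [measureReal_def]
  exact (ENNReal.lt_ofReal_iff_toReal_lt (measure_ne_top _ _)).1 h1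

/-- Approximation by a finite partition. -/
lemma approx_part (hm : m ≤ mΩ) {Is : Set (Set Ω)} (hIs : IsSetAlgebra Is)
    (hIm : ∀ s ∈ Is, MeasurableSet s) {E : Set Ω} (hE : MeasurableSet[m ⊔ generateFrom Is] E)
    {η : ℝ} (hη : 0 < η) :
    ∃ (κ : Type) (_ : Finite κ) (p : Ω → κ) (V : κ → Set Ω), (∀ b, p ⁻¹' {b} ∈ Is) ∧
      (∀ b, MeasurableSet[m] (V b)) ∧ P.real (symmDiff E {ω | ω ∈ V (p ω)}) < η := by
  let 𝒲 : Set (Set Ω) := {W | ∃ (κ : Type) (_ : Finite κ) (p : Ω → κ) (V : κ → Set Ω),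
    (∀ b, p ⁻¹' {b} ∈ Is) ∧ (∀ b, MeasurableSet[m] (V b)) ∧ W = {ω | ω ∈ V (p ω)}}
  have hm' : m ⊔ generateFrom Is ≤ mΩ := sup_le hm (generateFrom_le hIm)
  have hsing : ∀ V, MeasurableSet[m] V → V ∈ 𝒲 := by
    intro V hV
    refine ⟨Unit, inferInstance, fun _ => (), fun _ => V, ?_, fun _ => hV, by simp⟩
    intro b
    have : (fun _ : Ω => ()) ⁻¹' {b} = univ := by ext; simp
    rw [this]; exact hIs.univ_mem
  have hIsW : Is ⊆ 𝒲 := by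
    intro W hW
    refine ⟨Prop, inferInstance, fun ω => ω ∈ W, fun q => {_ω | q}, ?_, ?_, rfl⟩
    · intro q
      by_cases hq : q
      · have : (fun ω => ω ∈ W) ⁻¹' {q} = W := by ext; simp [hq]
        rw [this]; exact hW
      · have : (fun ω => ω ∈ W) ⁻¹' {q} = Wᶜ := by ext; simp [hq]
        rw [this]; exact hIs.compl_mem hW
    · intro q
      exact @MeasurableSet.const _ m q
  have hmeas : ∀ W ∈ 𝒲, MeasurableSet[m ⊔ generateFrom Is] W := by
    rintro W ⟨κ, hκ, p, V, hp, hV, rfl⟩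
    have := Fintype.ofFinite κ
    refine @fiber_meas Ω (m ⊔ generateFrom Is) κ _ p ?_ V ?_
    · intro b
      exact (le_sup_right : generateFrom Is ≤ _) _ (measurableSet_generateFrom (hp b))
    · intro b; exact (le_sup_left : m ≤ _) _ (hV b)
  have halg : IsSetAlgebra 𝒲 := by
    refine ⟨hsing _ (@MeasurableSet.empty _ m), ?_, ?_⟩
    · rintro W ⟨κ, hκ, p, V, hp, hV, rfl⟩
      exact ⟨κ, hκ, p, fun b => (V b)ᶜ, hp, fun b => @MeasurableSet.compl _ _ m (hV b), rfl⟩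
    · rintro W W' ⟨κ, hκ, p, V, hp, hV, rfl⟩ ⟨κ', hκ', p', V', hp', hV', rfl⟩
      refine ⟨κ × κ', inferInstance, fun ω => (p ω, p' ω), fun b => V b.1 ∪ V' b.2, ?_, ?_, rfl⟩
      · rintro ⟨b, b'⟩
        have : (fun ω => (p ω, p' ω)) ⁻¹' {(b, b')} = p ⁻¹' {b} ∩ p' ⁻¹' {b'} := by
          ext; simp
        rw [this]; exact hIs.inter_mem (hp b) (hp' b')
      · intro b; exact @MeasurableSet.union _ m _ _ (hV _) (hV' _)
  obtain ⟨W, ⟨κ, hκ, p, V, hp, hV, rfl⟩, h⟩ := approx_alg P hm' halg (le_antisymm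
    (sup_le (fun V hV => measurableSet_generateFrom (hsing V hV)) (generateFrom_mono hIsW))
    (generateFrom_le hmeas)) hE hη
  exact ⟨κ, hκ, p, V, hp, hV, h⟩

/-- **Infinitary removal lemma.** -/
theorem abstract_removal {I : Finset J → Set (Set Ω)} (hI : ∀ e, ∀ s ∈ I e, MeasurableSet s)
    (hmono : ∀ s t, s ⊆ t → I s ⊆ I t) (halg : ∀ e, IsSetAlgebra (I e)) (hU : RelInd P I) (n : ℕ) :
    ∀ (S : Finset (Finset J)), S.card = n → (∀ s ∈ S, ∀ t ⊆ s, t ∈ S) → (∀ s ∈ S, s ≠ Finset.univ) →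
    ∀ E : J → Set Ω, (∀ i, MeasurableSet[Asig I (S.filter (· ⊆ Finset.univ.erase i))] (E i)) →
      P.real (⋂ i, E i) = 0 → ∀ ε : ℝ, 0 < ε → ∃ F : J → Set Ω,
        (∀ i, F i ∈ I (Finset.univ.erase i)) ∧ (∀ i, P.real (E i \ F i) ≤ ε) ∧ ⋂ i, F i = ∅ := by
  induction n with
  | zero =>
    intro S hS _ _ E hE h0 ε hε
    rw [Finset.card_eq_zero] at hS
    subst hS
    have hE' : ∀ i, E i = ∅ ∨ E i = univ := by
      intro i
      have hb : Asig I ((∅ : Finset (Finset J)).filter (· ⊆ Finset.univ.erase i)) = ⊥ := by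
        simp [Asig]
      have := hE i
      rw [hb] at this
      exact MeasurableSpace.measurableSet_bot_iff.1 this
    refine ⟨E, fun i => ?_, fun i => by simp [hε.le], ?_⟩
    · rcases hE' i with h | h <;> rw [h]
      · exact (halg _).empty_mem
      · exact (halg _).univ_mem
    · by_contra hne
      have : ∀ i, E i = univ := by
        intro i
        refine (hE' i).resolve_left fun h => hne ?_
        exact subset_empty_iff.1 (h ▸ iInter_subset E i)
      simp [this] at h0
  | succ n ih =>
    intro S hS hdown hproper E hE h0 ε hε
    have hSne : S.Nonempty := Finset.card_pos.1 (by omega)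
    obtain ⟨s, hsS, hsmax⟩ : ∃ s ∈ S, ∀ t ∈ S, s ⊆ t → t = s := by
      obtain ⟨s, hs, h⟩ := Finset.exists_max_image S Finset.card hSne
      exact ⟨s, hs, fun t ht hst => (Finset.eq_of_subset_of_card_le hst (h t ht)).symm⟩
    set S' := S.erase s with hS'
    have hdown' : ∀ t ∈ S', ∀ u ⊆ t, u ∈ S' := by
      intro t ht u hu
      rw [hS', Finset.mem_erase] at ht ⊢
      refine ⟨?_, hdown t ht.2 u hu⟩
      rintro rfl
      exact ht.1 (hsmax t ht.2 hu)
    have hcard' : S'.card = n := by rw [hS', Finset.card_erase_of_mem hsS]; omega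
    let e : J → Finset J := fun i => Finset.univ.erase i
    have hse : ∀ i, i ∉ s → s ⊆ e i := by
      intro i hi j hj
      simp only [e, Finset.mem_erase, Finset.mem_univ, and_true]
      rintro rfl; exact hi hj
    obtain ⟨i₀, hi₀⟩ : ∃ i, i ∉ s := by
      by_contra hcon
      push Not at hcon
      exact hproper s hsS (Finset.eq_univ_iff_forall.2 hcon)
    have heE : ∀ i, MeasurableSet[generateFrom (I (e i))] (E i) :=
      fun i => Asig_le_face hmono (by simp [e]) _ (hE i)
    have hEΩ : ∀ i, MeasurableSet[mΩ] (E i) := fun i => generateFrom_le (hI _) _ (heE i)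
    -- constants
    set M : ℝ := (Fintype.card J : ℝ) with hM
    have hM0 : 0 ≤ M := by positivity
    set c : ℝ := 1 / (M + 1) with hc
    have hc0 : 0 < c := by positivity
    set η : ℝ := ε / 4 * c with hη
    have hη0 : 0 < η := by positivity
    have hc1 : c ≤ 1 := by rw [hc, div_le_one (by positivity)]; linarith
    -- partitions
    have hex : ∀ i, ∃ (κ : Type) (_ : Finite κ) (p : Ω → κ) (V : κ → Set Ω),
        (∀ b, p ⁻¹' {b} ∈ I s) ∧
        (i ∉ s → (∀ b, MeasurableSet[Asig I (S'.filter (· ⊆ e i))] (V b)) ∧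
          P.real (symmDiff (E i) {ω | ω ∈ V (p ω)}) < η) := by
      intro i
      by_cases hi : i ∈ s
      · refine ⟨Unit, inferInstance, fun _ => (), fun _ => ∅, ?_, fun h => absurd hi h⟩
        intro b
        have : (fun _ : Ω => ()) ⁻¹' {b} = univ := by ext; simp
        rw [this]; exact (halg _).univ_mem
      · have hle : Asig I (S.filter (· ⊆ e i)) ≤
            Asig I (S'.filter (· ⊆ e i)) ⊔ generateFrom (I s) := by
          refine iSup₂_le fun t ht => ?_
          by_cases hts : t = s
          · subst hts; exact le_sup_right
          · refine le_trans ?_ le_sup_left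
            refine le_iSup₂_of_le (f := fun s _ => generateFrom (I s)) t ?_ le_rfl
            simp only [hS', Finset.mem_filter, Finset.mem_erase] at ht ⊢
            exact ⟨⟨hts, ht.1⟩, ht.2⟩
        obtain ⟨κ, hκ, p, V, h1, h2, h3⟩ := approx_part P (Asig_le hI _) (halg s) (hI s)
          (hle _ (hE i)) hη0
        exact ⟨κ, hκ, p, V, h1, fun _ => ⟨h2, h3⟩⟩
    choose κ hκ p V hp hV using hex
    have := fun i => Fintype.ofFinite (κ i)
    let q : Ω → (∀ i, κ i) := fun ω i => p i ω
    have hq : ∀ b, q ⁻¹' {b} ∈ I s := by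
      intro b
      have : q ⁻¹' {b} = ⋂ i ∈ (Finset.univ : Finset J), p i ⁻¹' {b i} := by
        ext ω; simp [q, funext_iff]
      rw [this]
      exact (halg s).biInter_mem _ fun i _ => hp i _
    have hqΩ : ∀ b, MeasurableSet[mΩ] (q ⁻¹' {b}) := fun b => hI s _ (hq b)
    let A' : J → MeasurableSpace Ω := fun i => Asig I (S'.filter (· ⊆ e i))
    have hA'S : ∀ i, A' i ≤ Asig I S' := fun i => Asig_mono I (by simp +contextual)
    have hA'Ω : ∀ i, A' i ≤ mΩ := fun i => Asig_le hI _
    -- good sets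
    let Q : (∀ i, κ i) → J → Set Ω := fun b i =>
      if i ∈ s then E i else Qset P (A' i) c (q ⁻¹' {b}) (E i)
    have hQm : ∀ b i, MeasurableSet[A' i] (Q b i) := by
      intro b i
      by_cases hi : i ∈ s
      · simp only [Q, hi, if_true]
        refine Asig_mono I ?_ _ (hE i)
        intro t ht
        simp only [hS', Finset.mem_filter, Finset.mem_erase] at ht ⊢
        refine ⟨⟨?_, ht.1⟩, ht.2⟩
        rintro rfl
        exact absurd (ht.2 hi) (by simp)
      · simp only [Q, hi, if_false]
        exact Qset_meas P _ _ _ _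
    have hQnull : ∀ b, P.real ((⋂ i, Q b i) ∩ q ⁻¹' {b}) = 0 := by
      intro b
      set β := q ⁻¹' {b} with hβ
      set T := (⋂ i, Q b i) ∩ β with hT
      have hbad : ∀ i, P.real (T \ E i) ≤ c * P.real T := by
        intro i
        by_cases hi : i ∈ s
        · have : T \ E i = ∅ := by
            rw [sdiff_eq_empty]
            refine inter_subset_left.trans ((iInter_subset _ i).trans ?_)
            simp [Q, hi]
          rw [this]; simp; positivity
        · have hQi : Q b i = Qset P (A' i) c β (E i) := by simp [Q, hi, hβ]
          have hR : MeasurableSet[Asig I S'] (⋂ j, Q b j) :=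
            @MeasurableSet.iInter _ _ (Asig I S') _ _ fun j => hA'S j _ (hQm b j)
          have := step_i P hI hmono hU hdown' (e := e i) (R := ⋂ j, Q b j) (β := β) (E := E i)
            hR (generateFrom_mono (hmono _ _ (hse i hi)) _ (measurableSet_generateFrom (hq b)))
            (heE i) (c := c)
          rw [← hQi] at this
          have e1 : (⋂ j, Q b j) ∩ (Q b i ∩ (β ∩ (E i)ᶜ)) = T \ E i := by
            rw [hT]; ext ω
            have : ω ∈ (⋂ j, Q b j) → ω ∈ Q b i := fun h => mem_iInter.1 h i
            simp only [mem_inter_iff, mem_sdiff, mem_compl_iff]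
            tauto
          have e2 : (⋂ j, Q b j) ∩ (Q b i ∩ β) = T := by
            rw [hT]; ext ω
            have : ω ∈ (⋂ j, Q b j) → ω ∈ Q b i := fun h => mem_iInter.1 h i
            simp only [mem_inter_iff]
            tauto
          rwa [e1, e2] at this
      have hsub : T ⊆ (⋂ i, E i) ∪ ⋃ i, (T \ E i) := by
        intro ω hω
        by_cases h : ω ∈ ⋂ i, E i
        · exact Or.inl h
        · right
          simp only [mem_iInter, not_forall] at h
          obtain ⟨i, hi⟩ := h
          exact mem_iUnion.2 ⟨i, hω, hi⟩
      have h2 : P.real T ≤ M * (c * P.real T) := by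
        calc P.real T ≤ P.real ((⋂ i, E i) ∪ ⋃ i, (T \ E i)) := measureReal_mono hsub
          _ ≤ P.real (⋂ i, E i) + P.real (⋃ i, (T \ E i)) := measureReal_union_le _ _
          _ ≤ 0 + ∑ i, P.real (T \ E i) := add_le_add h0.le (measureReal_iUnion_fintype_le _)
          _ ≤ ∑ i : J, c * P.real T := by
            rw [zero_add]; exact Finset.sum_le_sum fun i _ => hbad i
          _ = M * (c * P.real T) := by simp [hM]
      have h3 : M * c < 1 := by
        rw [hc, mul_one_div, div_lt_one (by positivity)]; linarith
      have h4 : 0 ≤ P.real T := measureReal_nonneg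
      nlinarith
    -- supports
    have hsup : ∀ b, ∃ T, MeasurableSet[Asig I (S'.filter (· ⊆ s))] T ∧
        P.real ((⋂ i, Q b i) ∩ T) = 0 ∧ P.real (q ⁻¹' {b} \ T) = 0 := fun b =>
      step_ii P hI hmono hU hdown' (@MeasurableSet.iInter _ _ (Asig I S') _ _
        fun j => hA'S j _ (hQm b j)) (measurableSet_generateFrom (hq b)) (hQnull b)
    choose T hTm hT1 hT2 using hsup
    let Q' : (∀ i, κ i) → J → Set Ω := fun b i => if i ∈ s then E i else Q b i ∩ T b
    have hQ'm : ∀ b i, MeasurableSet[A' i] (Q' b i) := by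
      intro b i
      by_cases hi : i ∈ s
      · have := hQm b i
        simpa [Q, Q', hi] using this
      · simp only [Q', hi, if_false]
        refine @MeasurableSet.inter _ (A' i) _ _ (hQm b i) (Asig_mono I ?_ _ (hTm b))
        intro t ht
        simp only [Finset.mem_filter] at ht ⊢
        exact ⟨ht.1, ht.2.trans (hse i hi)⟩
    have hQ'null : ∀ b, P.real (⋂ i, Q' b i) = 0 := by
      intro b
      refine measureReal_mono_null ?_ (hT1 b)
      intro ω hω
      rw [mem_iInter] at hω
      refine ⟨mem_iInter.2 fun i => ?_, ?_⟩
      · have := hω i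
        by_cases hi : i ∈ s
        · simpa [Q, Q', hi] using this
        · simp only [Q', hi, if_false] at this
          exact this.1
      · have := hω i₀
        simp only [Q', hi₀, if_false] at this
        exact this.2
    set N : ℝ := (Fintype.card (∀ i, κ i) : ℝ) with hN
    have hN0 : 0 ≤ N := by positivity
    set ε' := ε / (4 * (N + 1)) with hε'
    have hε'0 : 0 < ε' := by positivity
    have hNε : N * ε' ≤ ε / 4 := by
      rw [hε', mul_div_assoc', div_le_div_iff₀ (by positivity) (by positivity)]
      nlinarith
    have hF := fun b => ih S' hcard' hdown'
      (fun t ht => hproper t (Finset.mem_of_mem_erase ht)) (Q' b) (hQ'm b) (hQ'null b) ε' hε'0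
    choose F hFI hFm hFe using hF
    refine ⟨fun i => if i ∈ s then ⋂ b ∈ (Finset.univ : Finset (∀ i, κ i)), F b i
      else ⋃ b ∈ (Finset.univ : Finset (∀ i, κ i)), F b i ∩ q ⁻¹' {b}, ?_, ?_, ?_⟩
    · intro i
      by_cases hi : i ∈ s
      · simp only [hi, if_true]
        exact (halg _).biInter_mem _ fun b _ => hFI b i
      · simp only [hi, if_false]
        exact (halg _).biUnion_mem _ fun b _ => (halg _).inter_mem (hFI b i)
          (hmono _ _ (hse i hi) (hq b))
    · intro i
      have hsumF : ∑ b, P.real (Q' b i \ F b i) ≤ ε / 4 := by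
        refine le_trans (Finset.sum_le_sum fun b _ => hFm b i) ?_
        simpa [hN] using hNε
      by_cases hi : i ∈ s
      · simp only [hi, if_true]
        have hsub : E i \ (⋂ b ∈ (Finset.univ : Finset (∀ i, κ i)), F b i) ⊆
            ⋃ b, Q' b i \ F b i := by
          rintro ω ⟨h1, h2⟩
          simp only [Finset.mem_univ, iInter_true, mem_iInter, not_forall] at h2
          obtain ⟨b, hb⟩ := h2
          refine mem_iUnion.2 ⟨b, ?_, hb⟩
          simpa [Q', hi] using h1
        calc _ ≤ P.real (⋃ b, Q' b i \ F b i) := measureReal_mono hsub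
          _ ≤ ∑ b, P.real (Q' b i \ F b i) := measureReal_iUnion_fintype_le _
          _ ≤ ε := by linarith
      · simp only [hi, if_false]
        obtain ⟨hV1, hV2⟩ := hV i hi
        let W : Set Ω := {ω | ω ∈ V i (q ω i)}
        let K : Set Ω := {ω | ω ∈ Qset P (A' i) c (q ⁻¹' {q ω}) (E i)}
        have hK : c * P.real (W \ K) ≤ P.real (W \ E i) :=
          step_K P (hA'Ω i) q hqΩ (hEΩ i) (fun b => V i (b i)) (fun b => hV1 _)
        have hWE : P.real (W \ E i) ≤ η :=
          (measureReal_mono (fun ω h => Or.inr h)).trans hV2.le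
        have hEW : P.real (E i \ W) ≤ η :=
          (measureReal_mono (fun ω h => Or.inl h)).trans hV2.le
        have hWK : P.real (W \ K) ≤ ε / 4 := by
          have : c * P.real (W \ K) ≤ c * (ε / 4) := by
            refine (hK.trans hWE).trans (le_of_eq ?_)
            rw [hη]; ring
          exact le_of_mul_le_mul_left this hc0
        have hηε : η ≤ ε / 4 := by rw [hη]; nlinarith
        have hsub : E i \ (⋃ b ∈ (Finset.univ : Finset (∀ i, κ i)), F b i ∩ q ⁻¹' {b}) ⊆
            ((E i \ W) ∪ (W \ K)) ∪ ((⋃ b, (q ⁻¹' {b} \ T b)) ∪ ⋃ b, Q' b i \ F b i) := by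
          rintro ω ⟨h1, h2⟩
          by_cases hW : ω ∈ W
          swap
          · exact Or.inl (Or.inl ⟨h1, hW⟩)
          by_cases hKω : ω ∈ K
          swap
          · exact Or.inl (Or.inr ⟨hW, hKω⟩)
          right
          by_cases hTω : ω ∈ T (q ω)
          swap
          · exact Or.inl (mem_iUnion.2 ⟨q ω, rfl, hTω⟩)
          right
          refine mem_iUnion.2 ⟨q ω, ?_, ?_⟩
          · simp only [Q', hi, if_false, Q]
            exact ⟨hKω, hTω⟩
          · intro hFω
            apply h2
            simp only [Finset.mem_univ, iUnion_true]
            exact mem_iUnion.2 ⟨q ω, hFω, rfl⟩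
        have hTsum : P.real (⋃ b, (q ⁻¹' {b} \ T b)) ≤ 0 := by
          refine (measureReal_iUnion_fintype_le _).trans ?_
          simp [hT2]
        calc _ ≤ _ := measureReal_mono hsub
          _ ≤ _ := measureReal_union_le _ _
          _ ≤ (P.real (E i \ W) + P.real (W \ K)) +
              (P.real (⋃ b, (q ⁻¹' {b} \ T b)) + P.real (⋃ b, Q' b i \ F b i)) :=
            add_le_add (measureReal_union_le _ _) (measureReal_union_le _ _)
          _ ≤ (ε / 4 + ε / 4) + (0 + ε / 4) := by
            refine add_le_add (add_le_add (hEW.trans hηε) hWK) (add_le_add hTsum ?_)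
            exact (measureReal_iUnion_fintype_le _).trans hsumF
          _ ≤ ε := by linarith
    · rw [eq_empty_iff_forall_notMem]
      intro ω hω
      rw [mem_iInter] at hω
      have : ω ∈ ⋂ i, F (q ω) i := by
        refine mem_iInter.2 fun i => ?_
        have := hω i
        by_cases hi : i ∈ s
        · simp only [hi, if_true, Finset.mem_univ, iInter_true, mem_iInter] at this
          exact this _
        · simp only [hi, if_false, Finset.mem_univ, iUnion_true, mem_iUnion] at this
          obtain ⟨b, h1, h2⟩ := this
          have h2 : q ω = b := h2
          rw [h2]; exact h1
      rw [hFe] at this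
      exact this

end Abstract

section Simplex
open Filter Topology

variable {J : Type*} [Fintype J] [DecidableEq J] {X : J → Type*} [∀ j, MeasurableSpace (X j)]

/-- A set depending only on the coordinates in `e`. -/
def Dep (e : Finset J) (S : Set (∀ j, X j)) : Prop :=
  ∀ x y, (∀ j ∈ e, x j = y j) → (x ∈ S ↔ y ∈ S)

/-- Internal sets depending only on the coordinates in `e`. -/
def IntE (X : J → Type*) [∀ j, MeasurableSpace (X j)] (e : Finset J) : Set (Set (Om (∀ j, X j))) :=
  {A | ∃ S : ℕ → Set (∀ j, X j), (∀ n, MeasurableSet (S n) ∧ Dep e (S n)) ∧ A = intl S}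

lemma IntE_meas (e : Finset J) : ∀ A ∈ IntE X e, MeasurableSet A := by
  rintro _ ⟨S, hS, rfl⟩
  exact intl_meas fun n => (hS n).1

lemma IntE_mono (s t : Finset J) (h : s ⊆ t) : IntE X s ⊆ IntE X t := by
  rintro _ ⟨S, hS, rfl⟩
  exact ⟨S, fun n => ⟨(hS n).1, fun x y hxy => (hS n).2 x y fun j hj => hxy j (h hj)⟩, rfl⟩

lemma IntE_alg (e : Finset J) : IsSetAlgebra (IntE X e) where
  empty_mem := ⟨fun _ => ∅, fun _ => ⟨MeasurableSet.empty, fun x y _ => by simp⟩, intl_empty.symm⟩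
  compl_mem := by
    rintro _ ⟨S, hS, rfl⟩
    exact ⟨_, fun n => ⟨(hS n).1.compl, fun x y h => not_congr ((hS n).2 x y h)⟩, intl_compl S⟩
  union_mem := by
    rintro _ _ ⟨S, hS, rfl⟩ ⟨T, hT, rfl⟩
    exact ⟨_, fun n => ⟨(hS n).1.union (hT n).1, fun x y h =>
      or_congr ((hS n).2 x y h) ((hT n).2 x y h)⟩, intl_union S T⟩

lemma intl_biInter {Y ι : Type*} (t : Finset ι) (G : ι → ℕ → Set Y) :
    ⋂ s ∈ t, intl (G s) = intl (fun n => ⋂ s ∈ t, G s n) := by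
  ext x
  simp only [mem_iInter, mem_intl]
  exact (eventually_all_finset t).symm

variable (ν : ∀ j, Measure (X j)) [∀ j, IsProbabilityMeasure (ν j)]

lemma piecewise_meas (e : Finset J) :
    Measurable (fun p : (∀ j, X j) × (∀ j, X j) => e.piecewise p.1 p.2) := by
  refine measurable_pi_lambda _ fun j => ?_
  by_cases hj : j ∈ e
  · simp only [Finset.piecewise, hj, if_true]; fun_prop
  · simp only [Finset.piecewise, hj, if_false]; fun_prop

lemma swap_map (e : Finset J) :
    Measure.map (fun p : (∀ j, X j) × (∀ j, X j) => e.piecewise p.1 p.2)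
      ((Measure.pi ν).prod (Measure.pi ν)) = Measure.pi ν := by
  symm
  apply Measure.pi_eq
  intro s hs
  rw [Measure.map_apply (piecewise_meas e) (MeasurableSet.univ_pi hs)]
  have : (fun p : (∀ j, X j) × (∀ j, X j) => e.piecewise p.1 p.2) ⁻¹' (univ.pi s) =
      (univ.pi fun j => if j ∈ e then s j else univ) ×ˢ
        (univ.pi fun j => if j ∈ e then univ else s j) := by
    ext p
    simp only [mem_preimage, Set.mem_pi, mem_univ, true_imp_iff, mem_prod, ← forall_and]
    refine forall_congr' fun j => ?_
    by_cases hj : j ∈ e <;> simp [hj]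
  rw [this, Measure.prod_prod, Measure.pi_pi, Measure.pi_pi, ← Finset.prod_mul_distrib]
  refine Finset.prod_congr rfl fun j _ => ?_
  by_cases hj : j ∈ e <;> simp [hj]

lemma fiber_ge (e : Finset J) {R : Set (∀ j, X j)} (hR : MeasurableSet R) {g : (∀ j, X j) → ℝ}
    (hg : Measurable g) {C : ℝ} (hC : ∀ x, |g x| ≤ C)
    (hd : ∀ x y, (∀ j ∈ e, x j = y j) → g x = g y) :
    ∃ y, ∫ x in R, g x ∂(Measure.pi ν) ≤
      ∫ x in {x | e.piecewise x y ∈ R}, g x ∂(Measure.pi ν) := by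
  set μ := Measure.pi ν with hμ
  set φ : (∀ j, X j) × (∀ j, X j) → ∀ j, X j := fun p => e.piecewise p.1 p.2 with hφ
  have hφm : Measurable φ := piecewise_meas e
  have hmR : Measurable (R.indicator g) := hg.indicator hR
  have hbd : ∀ x, ‖R.indicator g x‖ ≤ C := fun x =>
    (norm_indicator_le_norm_self _ _).trans (hC x)
  have hint : Integrable (fun p => R.indicator g (φ p)) (μ.prod μ) :=
    Integrable.of_bound (C := C) (hmR.comp hφm).aestronglyMeasurable (ae_of_all _ fun p => hbd _)
  have h1 : ∫ x in R, g x ∂μ = ∫ y, ∫ x, R.indicator g (φ (x, y)) ∂μ ∂μ := by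
    rw [← integral_prod_symm _ hint, ← integral_indicator hR]
    conv_lhs => rw [hμ, ← swap_map ν e]
    rw [integral_map hφm.aemeasurable hmR.aestronglyMeasurable]
  rw [h1]
  obtain ⟨y, hy⟩ := exists_integral_le hint.integral_prod_right
  refine ⟨y, hy.trans (le_of_eq ?_)⟩
  have hm : MeasurableSet {x | e.piecewise x y ∈ R} :=
    (hφm.comp (measurable_id.prodMk measurable_const)) hR
  rw [← integral_indicator hm]
  congr 1
  ext x
  have : g (e.piecewise x y) = g x := hd _ _ fun j hj => by simp [hj]
  simp only [indicator, hφ, mem_ofPred_eq, this]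

variable [∀ j, Nonempty (X j)]

/-- the Loeb measure of the product -/
abbrev PP : Measure (Om (∀ j, X j)) := loeb (fun _ => Measure.pi ν)

/-- internally representable function -/
def RepF (e : Finset J) (g : Om (∀ j, X j) → ℝ) : Prop :=
  Measurable[MeasurableSpace.generateFrom (IntE X e)] g ∧ Integrable g (PP ν) ∧
  ∃ gn : ℕ → (∀ j, X j) → ℝ, (∃ C, ∀ n x, |gn n x| ≤ C) ∧ (∀ n, Measurable (gn n)) ∧
    (∀ n x y, (∀ j ∈ e, x j = y j) → gn n x = gn n y) ∧
    ∀ S : ℕ → Set (∀ j, X j), (∀ n, MeasurableSet (S n)) →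
      Tendsto (fun n => ∫ x in S n, gn n x ∂(Measure.pi ν)) UF (𝓝 (∫ x in intl S, g x ∂(PP ν)))

lemma RepF_ind (e : Finset J) (c : ℝ) {A : Set (Om (∀ j, X j))} (hA : A ∈ IntE X e) :
    RepF ν e (A.indicator fun _ => c) := by
  have hAm := IntE_meas e A hA
  refine ⟨?_, (integrable_const c).indicator hAm, ?_⟩
  · exact Measurable.indicator (mβ := inferInstance) measurable_const
      (MeasurableSpace.measurableSet_generateFrom hA)
  obtain ⟨T, hT, rfl⟩ := hA
  refine ⟨fun n => (T n).indicator fun _ => c, ⟨|c|, fun n x => ?_⟩,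
    fun n => measurable_const.indicator (hT n).1, fun n x y hxy => ?_, fun S hS => ?_⟩
  · exact norm_indicator_le_norm_self (f := fun _ => c) x
  · have := (hT n).2 x y hxy
    by_cases hx : x ∈ T n
    · simp [hx, this.1 hx]
    · simp [hx, mt this.2 hx]
  · have h := loeb_intl_real (fun _ => Measure.pi ν) (fun n => (hS n).inter (hT n).1)
    rw [setIntegral_indicator hAm, setIntegral_const, intl_inter]
    simp_rw [setIntegral_indicator (hT _).1, setIntegral_const]
    exact h.smul_const c

lemma RepF_add (e : Finset J) {f g : Om (∀ j, X j) → ℝ} (hf : RepF ν e f) (hg : RepF ν e g) :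
    RepF ν e (f + g) := by
  obtain ⟨hf1, hf2, fn, ⟨C, hC⟩, hf3, hf4, hf5⟩ := hf
  obtain ⟨hg1, hg2, gn, ⟨C', hC'⟩, hg3, hg4, hg5⟩ := hg
  refine ⟨hf1.add hg1, hf2.add hg2, fun n => fn n + gn n, ⟨C + C', fun n x => ?_⟩,
    fun n => (hf3 n).add (hg3 n), fun n x y hxy => ?_, fun S hS => ?_⟩
  · exact (abs_add_le _ _).trans (add_le_add (hC n x) (hC' n x))
  · simp only [Pi.add_apply, hf4 n x y hxy, hg4 n x y hxy]
  · simp only [Pi.add_apply]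
    rw [integral_add hf2.integrableOn hg2.integrableOn]
    refine ((hf5 S hS).add (hg5 S hS)).congr fun n => ?_
    rw [integral_add]
    · exact (Integrable.of_bound (C := C) (hf3 n).aestronglyMeasurable (ae_of_all _ (hC n))).integrableOn
    · exact (Integrable.of_bound (C := C') (hg3 n).aestronglyMeasurable (ae_of_all _ (hC' n))).integrableOn

lemma genE_le (e : Finset J) :
    MeasurableSpace.generateFrom (IntE X e) ≤ (inferInstance : MeasurableSpace (Om (∀ j, X j))) :=
  MeasurableSpace.generateFrom_le (IntE_meas e)

lemma RepF_dense (e : Finset J) {h : Om (∀ j, X j) → ℝ}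
    (hm : Measurable[MeasurableSpace.generateFrom (IntE X e)] h) (hi : Integrable h (PP ν))
    {η : ℝ} (hη : 0 < η) : ∃ g, RepF ν e g ∧ ∫ x, |h x - g x| ∂(PP ν) ≤ η := by
  have hle := genE_le (X := X) e
  have hsm : StronglyMeasurable[MeasurableSpace.generateFrom (IntE X e)] h := hm.stronglyMeasurable
  have key := @MemLp.induction_dense _ ℝ (MeasurableSpace.generateFrom (IntE X e)) _ 1
    ((PP ν).trim hle) ENNReal.one_ne_top (RepF ν e) ?_ (fun f g => RepF_add ν e)
    (fun f hf => hf.1.aestronglyMeasurable) h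
    (by
      rw [memLp_one_iff_integrable]
      exact hi.trim hle hsm) (ENNReal.ofReal η) (by simpa using hη)
  · obtain ⟨g, hg1, hg2⟩ := key
    refine ⟨g, hg2, ?_⟩
    rw [eLpNorm_trim hle (hsm.sub hg2.1.stronglyMeasurable)] at hg1
    rw [eLpNorm_one_eq_lintegral_enorm, ← ofReal_integral_norm_eq_lintegral_enorm (hi.sub hg2.2.1),
      ENNReal.ofReal_le_ofReal_iff hη.le] at hg1
    exact hg1
  · intro c s hs _ ε hε
    obtain ⟨η', hη', hη''⟩ : ∃ η' : ℝ, 0 < η' ∧ ENNReal.ofReal (|c| * η') ≤ ε := by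
      by_cases hεt : ε = ⊤
      · exact ⟨1, one_pos, by simp [hεt]⟩
      · have h0 : 0 < ε.toReal := ENNReal.toReal_pos hε hεt
        refine ⟨ε.toReal / (|c| + 1), by positivity, ?_⟩
        rw [← ENNReal.ofReal_toReal hεt]
        apply ENNReal.ofReal_le_ofReal
        rw [ENNReal.toReal_ofReal h0.le, mul_div_assoc', div_le_iff₀ (by positivity)]
        nlinarith
    obtain ⟨W, hW, hW2⟩ := approx_alg (PP ν) hle (IntE_alg e) rfl hs hη'
    have hsm' := hle _ hs
    have hWm := IntE_meas e W hW
    refine ⟨W.indicator fun _ => c, ?_, RepF_ind ν e c hW⟩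
    have hWrep := (RepF_ind ν e c hW).1
    have hsrep : Measurable[MeasurableSpace.generateFrom (IntE X e)] (s.indicator fun _ => c) :=
      Measurable.indicator (mβ := inferInstance) measurable_const hs
    rw [eLpNorm_trim hle (hWrep.stronglyMeasurable.sub hsrep.stronglyMeasurable)]
    have hii : Integrable (W.indicator (fun _ => c) - s.indicator (fun _ => c)) (PP ν) :=
      ((integrable_const c).indicator hWm).sub ((integrable_const c).indicator hsm')
    rw [eLpNorm_one_eq_lintegral_enorm, ← ofReal_integral_norm_eq_lintegral_enorm hii]
    refine le_trans (ENNReal.ofReal_le_ofReal ?_) hη''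
    have heq : (fun x => ‖(W.indicator (fun _ => c) - s.indicator (fun _ => c)) x‖) =
        (symmDiff s W).indicator fun _ => |c| := by
      ext x
      by_cases h1 : x ∈ W <;> by_cases h2 : x ∈ s <;>
        simp [indicator, h1, h2, Set.mem_symmDiff]
    rw [heq, integral_indicator_const _ (hsm'.symmDiff hWm), smul_eq_mul, mul_comm]
    exact mul_le_mul_of_nonneg_left hW2.le (abs_nonneg c)

lemma basic_le (e : Finset J) (S : Finset (Finset J)) {h : Om (∀ j, X j) → ℝ}
    (hm : Measurable[MeasurableSpace.generateFrom (IntE X e)] h) (hi : Integrable h (PP ν))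
    (h0 : ∀ W, MeasurableSet[Asig (IntE X) (S.image (e ∩ ·))] W → ∫ x in W, h x ∂(PP ν) = 0)
    {R : Set (Om (∀ j, X j))} (hR : R ∈ piiUnionInter (IntE X) (S : Set (Finset J))) :
    ∫ x in R, h x ∂(PP ν) ≤ 0 := by
  obtain ⟨t, ht, f, hf, rfl⟩ := hR
  have hf' : ∀ s, ∃ G : ℕ → Set (∀ j, X j), s ∈ t →
      (∀ n, MeasurableSet (G n) ∧ Dep s (G n)) ∧ f s = intl G := by
    intro s
    by_cases hs : s ∈ t
    · obtain ⟨G, hG⟩ := hf s hs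
      exact ⟨G, fun _ => hG⟩
    · exact ⟨fun _ => ∅, fun h => absurd h hs⟩
  choose G hG using hf'
  have hRG : ⋂ x ∈ t, f x = intl (fun n => ⋂ s ∈ t, G s n) := by
    rw [← intl_biInter]
    exact iInter₂_congr fun s hs => (hG s hs).2
  have hRn : ∀ n, MeasurableSet (⋂ s ∈ t, G s n) := fun n =>
    Finset.measurableSet_biInter _ fun s hs => ((hG s hs).1 n).1
  rw [hRG]
  apply le_of_forall_pos_le_add
  intro η hη
  obtain ⟨g, ⟨hg1, hg2, gn, ⟨C, hC⟩, hg3, hg4, hg5⟩, hgη⟩ := RepF_dense ν e hm hi (half_pos hη)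
  have hcmp : ∀ A : Set (Om (∀ j, X j)), |∫ x in A, h x ∂(PP ν) - ∫ x in A, g x ∂(PP ν)| ≤ η / 2 := by
    intro A
    rw [← integral_sub hi.integrableOn hg2.integrableOn]
    refine (abs_integral_le_integral_abs).trans (le_trans ?_ hgη)
    exact setIntegral_le_integral (hi.sub hg2).abs (ae_of_all _ fun x => abs_nonneg _)
  have hy : ∀ n, ∃ y, ∫ x in ⋂ s ∈ t, G s n, gn n x ∂(Measure.pi ν) ≤
      ∫ x in {x | e.piecewise x y ∈ ⋂ s ∈ t, G s n}, gn n x ∂(Measure.pi ν) := fun n =>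
    fiber_ge ν e (hRn n) (hg3 n) (hC n) (hg4 n)
  choose y hy using hy
  have hpm : ∀ n, Measurable fun x : (∀ j, X j) => e.piecewise x (y n) := fun n =>
    (piecewise_meas e).comp (measurable_id.prodMk measurable_const)
  have hle := le_of_tendsto_of_tendsto' (hg5 _ hRn) (hg5 _ fun n => hpm n (hRn n)) hy
  have hW : MeasurableSet[Asig (IntE X) (S.image (e ∩ ·))]
      (intl fun n => (fun x => e.piecewise x (y n)) ⁻¹' ⋂ s ∈ t, G s n) := by
    have : (intl fun n => (fun x : (∀ j, X j) => e.piecewise x (y n)) ⁻¹' ⋂ s ∈ t, G s n) =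
        ⋂ s ∈ t, intl fun n => (fun x => e.piecewise x (y n)) ⁻¹' G s n := by
      rw [intl_biInter]
      simp only [preimage_iInter]
    rw [this]
    refine @Finset.measurableSet_biInter _ _ (Asig (IntE X) (S.image (e ∩ ·))) _ _ fun s hs => ?_
    have hsS : e ∩ s ∈ S.image (e ∩ ·) := Finset.mem_image_of_mem _ (ht hs)
    have hl : MeasurableSpace.generateFrom (IntE X (e ∩ s)) ≤ Asig (IntE X) (S.image (e ∩ ·)) :=
      le_iSup₂ (f := fun s (_ : s ∈ S.image (e ∩ ·)) => MeasurableSpace.generateFrom (IntE X s)) _ hsS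
    refine hl _ (MeasurableSpace.measurableSet_generateFrom
      ⟨_, fun n => ⟨hpm n ((hG s hs).1 n).1, fun a b hab => ?_⟩, rfl⟩)
    refine ((hG s hs).1 n).2 _ _ fun j hj => ?_
    by_cases hje : j ∈ e
    · simp [hje, hab j (Finset.mem_inter.2 ⟨hje, hj⟩)]
    · simp [hje]
  have h1 := hcmp (intl fun n => ⋂ s ∈ t, G s n)
  have h2 := hcmp (intl fun n => (fun x => e.piecewise x (y n)) ⁻¹' ⋂ s ∈ t, G s n)
  rw [h0 _ hW] at h2
  rw [abs_le] at h1 h2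
  have hle' : ∫ x in intl (fun n => ⋂ s ∈ t, G s n), g x ∂(PP ν) ≤
    ∫ x in (intl fun n => (fun x => e.piecewise x (y n)) ⁻¹' ⋂ s ∈ t, G s n), g x ∂(PP ν) := hle
  linarith [h1.2, h2.1]

lemma all_zero (e : Finset J) (S : Finset (Finset J)) {h : Om (∀ j, X j) → ℝ}
    (hm : Measurable[MeasurableSpace.generateFrom (IntE X e)] h) (hi : Integrable h (PP ν))
    (h0 : ∀ W, MeasurableSet[Asig (IntE X) (S.image (e ∩ ·))] W → ∫ x in W, h x ∂(PP ν) = 0)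
    (R : Set (Om (∀ j, X j))) (hR : MeasurableSet[Asig (IntE X) S] R) :
    ∫ x in R, h x ∂(PP ν) = 0 := by
  have hle : Asig (IntE X) S ≤ (inferInstance : MeasurableSpace (Om (∀ j, X j))) :=
    Asig_le IntE_meas S
  have heq : Asig (IntE X) S =
      MeasurableSpace.generateFrom (piiUnionInter (IntE X) (S : Set (Finset J))) := by
    apply le_antisymm
    · exact iSup₂_le fun s hs => le_generateFrom_piiUnionInter _ hs
    · apply MeasurableSpace.generateFrom_le
      rintro _ ⟨t, ht, f, hf, rfl⟩
      refine @Finset.measurableSet_biInter _ _ (Asig (IntE X) S) _ _ fun s hs => ?_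
      exact le_iSup₂ (f := fun s (_ : s ∈ S) => MeasurableSpace.generateFrom (IntE X s)) s (ht hs) _
        (MeasurableSpace.measurableSet_generateFrom (hf s hs))
  have huniv : ∫ x, h x ∂(PP ν) = 0 := by
    rw [← setIntegral_univ]
    exact h0 _ (@MeasurableSet.univ _ _)
  refine @MeasurableSpace.induction_on_inter _ (Asig (IntE X) S)
    (fun R _ => ∫ x in R, h x ∂(PP ν) = 0) _ heq ?_ (by simp) ?_ ?_ ?_ R hR
  · apply isPiSystem_piiUnionInter
    intro s A hA B hB _
    exact (IntE_alg s).inter_mem hA hB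
  · intro R hR
    apply le_antisymm (basic_le ν e S hm hi h0 hR)
    have := basic_le ν e S hm.neg hi.neg (fun W hW => by
      simp only [Pi.neg_apply]
      rw [integral_neg, h0 W hW, neg_zero]) hR
    simp only [Pi.neg_apply] at this
    rw [integral_neg] at this
    linarith
  · intro t ht h1
    have := integral_add_compl (hle _ ht) hi
    linarith
  · intro f hd hf h1
    have := hasSum_integral_iUnion (fun i => hle _ (hf i)) hd hi.integrableOn
    simp only [h1] at this
    exact this.unique hasSum_zero

lemma relInd_loeb : RelInd (PP ν) (IntE X) := by
  intro e S R hR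
  have hNle : Asig (IntE X) (S.image (e ∩ ·)) ≤ (inferInstance : MeasurableSpace (Om (∀ j, X j))) :=
    Asig_le IntE_meas (S.image (e ∩ ·))
  have hRm : MeasurableSet R := Asig_le IntE_meas S _ hR
  have hNe : (Asig (IntE X) (S.image (e ∩ ·))) ≤ MeasurableSpace.generateFrom (IntE X e) := by
    apply Asig_le_face IntE_mono
    intro s hs
    obtain ⟨t, _, rfl⟩ := Finset.mem_image.1 hs
    exact Finset.inter_subset_left
  -- clipped conditional probabilities
  have hclip : ∀ D : Set (Om (∀ j, X j)), MeasurableSet D → ∃ ρ : Om (∀ j, X j) → ℝ, Measurable[(Asig (IntE X) (S.image (e ∩ ·)))] ρ ∧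
      (∀ x, 0 ≤ ρ x) ∧ (∀ x, ρ x ≤ 1) ∧ ρ =ᵐ[PP ν] cPr (PP ν) (Asig (IntE X) (S.image (e ∩ ·))) D := by
    intro D hD
    refine ⟨fun x => max 0 (min 1 (cPr (PP ν) (Asig (IntE X) (S.image (e ∩ ·))) D x)), ?_, fun x => le_max_left _ _,
      fun x => max_le zero_le_one (min_le_left _ _), ?_⟩
    · exact measurable_const.max (measurable_const.min (cPr_meas (PP ν) D))
    · have h1 : cPr (PP ν) (Asig (IntE X) (S.image (e ∩ ·))) D ≤ᵐ[PP ν] fun _ => 1 := by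
        have := condExp_mono (m := (Asig (IntE X) (S.image (e ∩ ·)))) (μ := PP ν) (f := D.indicator fun _ => (1:ℝ)) (g := fun _ => 1)
          ((integrable_const (1:ℝ)).indicator hD) (integrable_const 1)
          (ae_of_all _ fun x => indicator_le_self' (fun _ _ => zero_le_one) x)
        rwa [condExp_const hNle] at this
      filter_upwards [cPr_nonneg (PP ν) (m := (Asig (IntE X) (S.image (e ∩ ·)))) D, h1] with x hx0 hx1
      have hx0' : 0 ≤ cPr (PP ν) (Asig (IntE X) (S.image (e ∩ ·))) D x := hx0
      rw [min_eq_right hx1, max_eq_right hx0']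
  obtain ⟨ρ, hρm, hρ0, hρ1, hρe⟩ := hclip R hRm
  refine ⟨ρ, hρm, hρ0, hρ1, fun D hD => ?_⟩
  have hDm : MeasurableSet D := genE_le e _ hD
  obtain ⟨d, hdm, hd0, hd1, hde⟩ := hclip D hDm
  have hDi : Integrable (D.indicator fun _ => (1:ℝ)) (PP ν) := (integrable_const (1:ℝ)).indicator hDm
  have key := all_zero ν e S (h := fun x => D.indicator (fun _ => (1:ℝ)) x - cPr (PP ν) (Asig (IntE X) (S.image (e ∩ ·))) D x)
    ((Measurable.indicator (mβ := inferInstance) measurable_const hD).sub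
      ((cPr_meas (PP ν) D).mono hNe le_rfl)) (hDi.sub (cPr_int (PP ν) D)) (by
      intro W hW
      rw [integral_sub hDi.integrableOn (cPr_int (PP ν) D).integrableOn,
        ← cPr_pull_set (PP ν) hNle hW hDm, setIntegral_indicator hDm]
      simp) R hR
  rw [integral_sub hDi.integrableOn (cPr_int (PP ν) D).integrableOn, setIntegral_indicator hDm] at key
  simp only [integral_const, smul_eq_mul, mul_one, measureReal_restrict_apply_univ] at key
  calc (PP ν).real (R ∩ D) = ∫ x in R, cPr (PP ν) (Asig (IntE X) (S.image (e ∩ ·))) D x ∂(PP ν) := by linarith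
    _ = ∫ x in R, d x ∂(PP ν) := integral_congr_ae (ae_restrict_of_ae hde.symm)
    _ = ∫ x, d x * cPr (PP ν) (Asig (IntE X) (S.image (e ∩ ·))) R x ∂(PP ν) := cPr_pull (PP ν) hNle hdm hd0 hd1 hRm
    _ = ∫ x, ρ x * cPr (PP ν) (Asig (IntE X) (S.image (e ∩ ·))) D x ∂(PP ν) := by
      apply integral_congr_ae
      filter_upwards [hρe, hde] with x h1 h2
      rw [h1, h2, mul_comm]
    _ = ∫ x in D, ρ x ∂(PP ν) := (cPr_pull (PP ν) hNle hρm hρ0 hρ1 hDm).symm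

/-- The simplex removal lemma on a product of probability spaces. -/
theorem simplex_removal {ε : ℝ} (hε : 0 < ε) : ∃ δ : ℝ, 0 < δ ∧
    ∀ H : J → Set (∀ j, X j), (∀ i, MeasurableSet (H i)) → (∀ i, Dep (Finset.univ.erase i) (H i)) →
      (Measure.pi ν).real (⋂ i, H i) ≤ δ →
      ∃ F : J → Set (∀ j, X j), (∀ i, MeasurableSet (F i)) ∧ (∀ i, Dep (Finset.univ.erase i) (F i)) ∧
        (∀ i, (Measure.pi ν).real (F i) ≤ ε) ∧ ⋂ i, (H i \ F i) = ∅ := by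
  by_contra hc
  push Not at hc
  have hc' := fun n : ℕ => hc (1 / ((n:ℝ) + 1)) (by positivity)
  choose H hHm hHd hHδ hF using hc'
  have hIE : ∀ i, intl (fun n => H n i) ∈ IntE X (Finset.univ.erase i) := fun i =>
    ⟨_, fun n => ⟨hHm n i, hHd n i⟩, rfl⟩
  have hinter : ∀ G : J → ℕ → Set (∀ j, X j), ⋂ i, intl (G i) = intl (fun n => ⋂ i, G i n) := by
    intro G
    have := intl_biInter Finset.univ G
    simpa using this
  obtain ⟨F, hF1, hF2, hF3⟩ := abstract_removal (PP ν) (I := IntE X) IntE_meas IntE_mono IntE_alg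
    (relInd_loeb ν) _ (Finset.univ.filter (· ≠ Finset.univ)) rfl (by
      intro s hs t hts
      simp only [Finset.mem_filter, Finset.mem_univ, true_and] at hs ⊢
      rintro rfl
      exact hs (Finset.univ_subset_iff.1 hts)) (by
      intro s hs
      simpa using hs) (fun i => intl (fun n => H n i)) (by
      intro i
      have hmem : Finset.univ.erase i ∈ (Finset.univ.filter (· ≠ (Finset.univ : Finset J))).filter
          (· ⊆ Finset.univ.erase i) := by
        simp only [Finset.mem_filter, Finset.mem_univ, true_and, subset_refl, and_true]
        intro h
        have := Finset.mem_univ i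
        rw [← h] at this
        simp at this
      exact le_iSup₂ (f := fun s (_ : s ∈ (Finset.univ.filter (· ≠ (Finset.univ : Finset J))).filter
        (· ⊆ Finset.univ.erase i)) => MeasurableSpace.generateFrom (IntE X s)) _ hmem _
        (MeasurableSpace.measurableSet_generateFrom (hIE i))) (by
      rw [hinter]
      refine tendsto_nhds_unique (loeb_intl_real (fun _ => Measure.pi ν)
        (fun n => MeasurableSet.iInter fun i => hHm n i)) ?_
      refine squeeze_zero (fun n => measureReal_nonneg) hHδ ?_
      exact tendsto_one_div_add_atTop_nhds_zero_nat.mono_left Nat.hyperfilter_le_atTop)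
      (ε / 2) (half_pos hε)
  choose G hG hFG using hF1
  have e1 : ∀ᶠ n in (UF : Filter ℕ), ⋂ i, G i n = ∅ := by
    rw [← intl_eq_empty_iff, ← hinter, ← hF3]
    exact iInter_congr fun i => (hFG i).symm
  have e2 : ∀ᶠ n in (UF : Filter ℕ), ∀ i, (Measure.pi ν).real (H n i \ G i n) ≤ ε := by
    rw [eventually_all]
    intro i
    have h1 := hF2 i
    rw [hFG i, intl_sdiff] at h1
    have h2 := loeb_intl_real (fun _ => Measure.pi ν) (fun n => (hHm n i).diff (hG i n).1)
    exact (h2.eventually (gt_mem_nhds (lt_of_le_of_lt h1 (half_lt_self hε)))).mono fun n hn => le_of_lt hn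
  obtain ⟨n, hn1, hn2⟩ := (e1.and e2).exists
  refine (hF n (fun i => H n i \ G i n) (fun i => (hHm n i).diff (hG i n).1) (fun i x y hxy => ?_)
    hn2).ne_empty ?_
  · exact and_congr (hHd n i x y hxy) (not_congr ((hG i n).2 x y hxy))
  · rw [← subset_empty_iff, ← hn1]
    refine iInter_mono fun i => ?_
    intro x hx
    by_contra hxG
    exact hx.2 ⟨hx.1, hxG⟩

end Simplex


section GroupRemoval
open TopologicalSpace

lemma circle_prob : IsProbabilityMeasure (volume : Measure 𝕋) := ⟨by simp [AddCircle.measure_univ]⟩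

/-- normalized Haar measure on a compact group -/
def haarP (G : Type*) [AddCommGroup G] [TopologicalSpace G] [IsTopologicalAddGroup G]
    [CompactSpace G] [MeasurableSpace G] [BorelSpace G] : Measure G :=
  Measure.addHaarMeasure (⊤ : PositiveCompacts G)

section
variable (G : Type*) [AddCommGroup G] [TopologicalSpace G] [IsTopologicalAddGroup G]
    [CompactSpace G] [MeasurableSpace G] [BorelSpace G]

instance : (haarP G).IsAddHaarMeasure := by unfold haarP; infer_instance

instance : IsProbabilityMeasure (haarP G) :=
  ⟨by
    have := Measure.addHaarMeasure_self (K₀ := (⊤ : PositiveCompacts G))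
    simpa [haarP] using this⟩
end

variable {J : Type*} [Fintype J] [DecidableEq J] {X : J → Type*} [∀ j, AddCommGroup (X j)]
  [∀ j, TopologicalSpace (X j)] [∀ j, IsTopologicalAddGroup (X j)] [∀ j, CompactSpace (X j)]
  [∀ j, PolishSpace (X j)] [∀ j, MeasurableSpace (X j)] [∀ j, BorelSpace (X j)]
  {G : Type*} [AddCommGroup G] [TopologicalSpace G] [IsTopologicalAddGroup G]
    [CompactSpace G] [T2Space G] [MeasurableSpace G] [BorelSpace G]

lemma avg_set {Y : Type*} [AddCommGroup Y] [TopologicalSpace Y] [IsTopologicalAddGroup Y]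
    [CompactSpace Y] [PolishSpace Y] [MeasurableSpace Y] [BorelSpace Y]
    (μ : Measure Y) [μ.IsAddHaarMeasure] [IsProbabilityMeasure μ] (K : AddSubgroup Y) (ν : Measure K)
    [ν.IsAddLeftInvariant] [IsProbabilityMeasure ν]
    (φ : Y →+ 𝕋) (hφ : Continuous φ) (hs : Function.Surjective φ)
    {F : Set Y} (hF : MeasurableSet F) (V : AddSubgroup Y) (hV : ∀ v ∈ V, ∀ x, x ∈ F ↔ x + v ∈ F)
    (hdec : ∀ x, φ x = 0 → ∃ k ∈ K, ∃ v ∈ V, x = k + v) {c : ENNReal} (hc : c ≠ 0) (hc' : c ≠ ⊤) :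
    ∃ E : Set 𝕋, MeasurableSet E ∧ c * volume E ≤ μ F ∧
      ∀ x, φ x ∉ E → ν {k | x + k ∈ F} < c := by
  set g : Y → ENNReal := fun x => ν {k : K | x + k ∈ F} with hg
  have hprod : MeasurableSet {p : Y × K | p.1 + p.2 ∈ F} := by
    have : Measurable (fun p : Y × K => p.1 + (p.2 : Y)) :=
      measurable_fst.add (measurable_subtype_coe.comp measurable_snd)
    exact this hF
  have hgm : Measurable g := measurable_measure_prodMk_left hprod
  have hgi : ∫⁻ x, g x ∂μ = μ F := by
    have h1 : ∫⁻ x, g x ∂μ = (μ.prod ν) {p : Y × K | p.1 + p.2 ∈ F} :=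
      (Measure.prod_apply hprod).symm
    rw [h1, Measure.prod_apply_symm hprod]
    have : ∀ k : K, μ ((fun x => (x, k)) ⁻¹' {p : Y × K | p.1 + p.2 ∈ F}) = μ F := fun k =>
      measure_preimage_add_right μ (k : Y) F
    rw [lintegral_congr this]
    simp
  have hgK : ∀ x, ∀ k ∈ K, g (x + k) = g x := by
    intro x k hk
    have := measure_preimage_add ν (⟨k, hk⟩ : K) {k' : K | x + k' ∈ F}
    rw [hg]
    simp only
    rw [← this]
    congr 1
    ext k'
    simp [add_assoc]
  have hgV : ∀ x, ∀ v ∈ V, g (x + v) = g x := by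
    intro x v hv
    simp only [hg]
    congr 1
    ext k'
    simp only [mem_ofPred_eq]
    rw [hV v hv (x + k'), add_right_comm]
  have hginv : ∀ x y, φ x = φ y → g x = g y := by
    intro x y hxy
    obtain ⟨k, hk, v, hv, h⟩ := hdec (x - y) (by rw [map_sub, hxy, sub_self])
    have : x = y + k + v := by rw [add_assoc, ← h]; abel
    rw [this, hgV _ v hv, hgK _ k hk]
  refine ⟨{a | ∃ x, φ x = a ∧ c ≤ g x}, ?_⟩
  have hpre : φ ⁻¹' {a | ∃ x, φ x = a ∧ c ≤ g x} = {x | c ≤ g x} := by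
    ext x
    constructor
    · rintro ⟨y, hy, hy'⟩
      rw [mem_ofPred_eq, ← hginv _ _ hy]; exact hy'
    · intro hx
      exact ⟨x, rfl, hx⟩
  have hEm : MeasurableSet {a | ∃ x, φ x = a ∧ c ≤ g x} := by
    rw [← hφ.measurable.measurableSet_preimage_iff_of_surjective hs, hpre]
    exact measurableSet_le measurable_const hgm
  refine ⟨hEm, ?_, ?_⟩
  · have := circle_prob
    have := Measure.isAddHaarMeasure_map_of_isFiniteMeasure μ φ hφ hs
    have : IsProbabilityMeasure (μ.map φ) := Measure.isProbabilityMeasure_map hφ.aemeasurable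
    have hmap : μ.map φ = volume := Measure.isAddHaarMeasure_eq_of_isProbabilityMeasure _ _
    rw [← hmap, Measure.map_apply hφ.measurable hEm, hpre, ← hgi]
    exact mul_meas_ge_le_lintegral₀ hgm.aemeasurable c
  · intro x hx
    by_contra hcon
    exact hx ⟨x, rfl, not_lt.1 hcon⟩

theorem core_removal (ψ : J → G →+ 𝕋) (hψ : ∀ j, Continuous (ψ j))
    (hψs : ∀ j, Function.Surjective (ψ j)) (Θ : (∀ j, X j) →+ G) (hΘ : Continuous Θ)
    (hΘs : Function.Surjective Θ) (h0 : ∀ i u, ψ i (Θ (Pi.single i u)) = 0)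
    (hdec : ∀ i x, ψ i (Θ x) = 0 → ∃ u, Θ (x - Pi.single i u) = 0) {ε : ℝ} (hε : 0 < ε) :
    ∃ δ : ℝ, 0 < δ ∧ ∀ μ : Measure G, μ.IsAddHaarMeasure → IsProbabilityMeasure μ →
      ∀ A : J → Set 𝕋, (∀ i, MeasurableSet (A i)) → μ.real {g | ∀ i, ψ i g ∈ A i} ≤ δ →
        ∃ E : J → Set 𝕋, (∀ i, MeasurableSet (E i)) ∧ (∀ i, (volume : Measure 𝕋).real (E i) ≤ ε) ∧
          ∀ g, ¬ ∀ i, ψ i g ∈ A i \ E i := by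
  set c : ENNReal := ((Fintype.card J : ENNReal) + 1)⁻¹ with hc
  have hc0 : c ≠ 0 := by simp [hc]
  have hct : c ≠ ⊤ := by simp [hc]
  have hcr : 0 < c.toReal := ENNReal.toReal_pos hc0 hct
  obtain ⟨δ, hδ, hmain⟩ := simplex_removal (fun j => haarP (X j)) (mul_pos hε hcr)
  refine ⟨δ, hδ, fun μ hμ hμP A hA hAδ => ?_⟩
  set π := Measure.pi (fun j => haarP (X j)) with hπ
  have := Measure.isAddHaarMeasure_map_of_isFiniteMeasure π Θ hΘ hΘs
  have : IsProbabilityMeasure (π.map Θ) := Measure.isProbabilityMeasure_map hΘ.aemeasurable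
  have hmap : π.map Θ = μ := Measure.isAddHaarMeasure_eq_of_isProbabilityMeasure _ _
  have hAm : MeasurableSet {g | ∀ i, ψ i g ∈ A i} := by
    rw [ofPred_forall]
    exact MeasurableSet.iInter fun i => (hψ i).measurable (hA i)
  have hsingle : ∀ i (x y : ∀ j, X j), (∀ j ∈ Finset.univ.erase i, x j = y j) →
      x = y + Pi.single i (x i - y i) := by
    intro i x y hxy
    ext j
    by_cases hj : j = i
    · subst hj; simp
    · simp [hj, hxy j (by simp [hj])]
  obtain ⟨F, hFm, hFd, hFε, hF⟩ := hmain (fun i => {x | ψ i (Θ x) ∈ A i})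
    (fun i => ((hψ i).comp hΘ).measurable (hA i)) (by
      intro i x y hxy
      have : ψ i (Θ x) = ψ i (Θ y) := by
        rw [hsingle i x y hxy, map_add, map_add, h0, add_zero]
      simp only [mem_ofPred_eq, this]) (by
      refine le_trans (le_of_eq ?_) hAδ
      rw [← hmap, map_measureReal_apply hΘ.measurable hAm]
      congr 1
      ext x
      simp)
  have hKc : IsClosed (Θ.ker : Set (∀ j, X j)) := by
    have : (Θ.ker : Set (∀ j, X j)) = Θ ⁻¹' {0} := by ext; simp
    rw [this]
    exact isClosed_singleton.preimage hΘ
  have : CompactSpace Θ.ker := isCompact_iff_compactSpace.1 hKc.isCompact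
  have hE := fun i => avg_set π Θ.ker (haarP Θ.ker) ((ψ i).comp Θ) ((hψ i).comp hΘ)
    ((hψs i).comp hΘs) (hFm i) (AddMonoidHom.single X i).range (by
      rintro _ ⟨u, rfl⟩ x
      refine hFd i _ _ fun j hj => ?_
      simp [(Finset.mem_erase.1 hj).1]) (by
      intro x hx
      obtain ⟨u, hu⟩ := hdec i x hx
      exact ⟨_, hu, _, ⟨u, rfl⟩, by simp⟩) hc0 hct
  choose E hEm hEv hE using hE
  refine ⟨E, hEm, fun i => ?_, fun g hg => ?_⟩
  · have := circle_prob
    have h1 := ENNReal.toReal_mono (measure_ne_top _ _) (hEv i)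
    rw [ENNReal.toReal_mul] at h1
    have h2 : c.toReal * (volume : Measure 𝕋).real (E i) ≤ ε * c.toReal := h1.trans (hFε i)
    nlinarith
  · obtain ⟨x, rfl⟩ := hΘs g
    have hlt : ∀ i, haarP Θ.ker {k | x + k ∈ F i} < c := fun i => hE i x (hg i).2
    have hsum : haarP Θ.ker (⋃ i, {k | x + k ∈ F i}) < 1 := by
      refine lt_of_le_of_lt (measure_iUnion_fintype_le _ _) ?_
      refine lt_of_le_of_lt (Finset.sum_le_sum fun i _ => (hlt i).le) ?_
      rw [Finset.sum_const, nsmul_eq_mul, Finset.card_univ, hc, ← div_eq_mul_inv]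
      refine ENNReal.div_lt_of_lt_mul ?_
      rw [one_mul]
      exact ENNReal.lt_add_right (by simp) one_ne_zero
    have hne : (⋃ i, {k : Θ.ker | x + k ∈ F i}) ≠ univ := by
      intro h
      rw [h, measure_univ] at hsum
      exact lt_irrefl _ hsum
    obtain ⟨k, hk⟩ := (ne_univ_iff_exists_notMem _).1 hne
    simp only [mem_iUnion, mem_ofPred_eq, not_exists] at hk
    have : (x + k : ∀ j, X j) ∈ ⋂ i, ({x | ψ i (Θ x) ∈ A i} \ F i) := by
      refine mem_iInter.2 fun i => ⟨?_, hk i⟩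
      have hk0 : Θ (k : ∀ j, X j) = 0 := k.2
      simp only [mem_ofPred_eq, map_add, hk0, add_zero]
      exact (hg i).1
    rw [hF] at this
    exact this

theorem group_removal [PolishSpace G] (ψ : J → G →+ 𝕋) (hψ : ∀ j, Continuous (ψ j))
    (hψs : ∀ j, Function.Surjective (ψ j))
    (hΘs : ∀ g, ∃ x : ∀ j, (ψ j).ker, ∑ j, (x j : G) = g) {ε : ℝ} (hε : 0 < ε) :
    ∃ δ : ℝ, 0 < δ ∧ ∀ μ : Measure G, μ.IsAddHaarMeasure → IsProbabilityMeasure μ →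
      ∀ A : J → Set 𝕋, (∀ i, MeasurableSet (A i)) → μ.real {g | ∀ i, ψ i g ∈ A i} ≤ δ →
        ∃ E : J → Set 𝕋, (∀ i, MeasurableSet (E i)) ∧ (∀ i, (volume : Measure 𝕋).real (E i) ≤ ε) ∧
          ∀ g, ¬ ∀ i, ψ i g ∈ A i \ E i := by
  have hcl : ∀ j, IsClosed ((ψ j).ker : Set G) := by
    intro j
    have : ((ψ j).ker : Set G) = ψ j ⁻¹' {0} := by ext; simp
    rw [this]
    exact isClosed_singleton.preimage (hψ j)
  have : ∀ j, CompactSpace (ψ j).ker := fun j => isCompact_iff_compactSpace.1 (hcl j).isCompact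
  have : ∀ j, PolishSpace (ψ j).ker := fun j => (hcl j).polishSpace
  let Θ : (∀ j, (ψ j).ker) →+ G :=
    { toFun := fun x => ∑ j, (x j : G)
      map_zero' := by simp
      map_add' := fun x y => by simp [Finset.sum_add_distrib] }
  have hΘ' : ∀ x, Θ x = ∑ j, (x j : G) := fun _ => rfl
  have hsing : ∀ i u, Θ (Pi.single i u) = u := by
    intro i u
    rw [hΘ', Finset.sum_eq_single i]
    · simp
    · intro j _ hj; simp [hj]
    · simp
  refine core_removal (X := fun j => (ψ j).ker) ψ hψ hψs Θ ?_ hΘs ?_ ?_ hε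
  · change Continuous fun x : (∀ j, (ψ j).ker) => ∑ j, (x j : G)
    fun_prop
  · intro i u
    rw [hsing]
    exact u.2
  · intro i x hx
    refine ⟨⟨Θ x, hx⟩, ?_⟩
    rw [map_sub, hsing, sub_self]

end GroupRemoval

lemma kerT_closed {r m : ℕ} (L : Matrix (Fin r) (Fin m) ℤ) :
    IsClosed (kerT L : Set (Fin m → 𝕋)) := by
  have h : (kerT L : Set (Fin m → 𝕋)) = (Lhom L 𝕋) ⁻¹' {0} := by ext; simp [kerT]
  rw [h]
  refine isClosed_singleton.preimage ?_
  change Continuous fun (x : Fin m → 𝕋) => fun i => ∑ j, L i j • x j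
  fun_prop

open Pointwise in
/-- A closed proper subgroup of the circle is null. -/
lemma closed_subgroup_null (H : AddSubgroup 𝕋) (hH : IsClosed (H : Set 𝕋)) (hne : H ≠ ⊤) :
    volume (H : Set 𝕋) = 0 := by
  by_contra h0
  apply hne
  have h1 : (H : Set 𝕋) - (H : Set 𝕋) ∈ nhds (0 : 𝕋) :=
    Measure.sub_mem_nhds_zero_of_addHaar_pos volume (H : Set 𝕋) hH.measurableSet (pos_iff_ne_zero.2 h0)
  have h2 : (H : Set 𝕋) ∈ nhds (0 : 𝕋) := by
    refine Filter.mem_of_superset h1 ?_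
    rintro _ ⟨a, ha, b, hb, rfl⟩
    exact H.sub_mem ha hb
  have h3 : IsOpen (H : Set 𝕋) := H.isOpen_of_mem_nhds h2
  have h4 : (H : Set 𝕋) = univ := IsClopen.eq_univ ⟨hH, h3⟩ ⟨0, H.zero_mem⟩
  exact SetLike.coe_injective (by simpa using h4)

/-- The coordinate maps on the solution group, together with an additional free coordinate. -/
def coordO {r m : ℕ} (L : Matrix (Fin r) (Fin m) ℤ) : Option (Fin m) → (kerT L × 𝕋) →+ 𝕋
  | none => AddMonoidHom.snd _ _
  | some i => ((Pi.evalAddMonoidHom (fun _ : Fin m => 𝕋) i).comp (kerT L).subtype).comp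
      (AddMonoidHom.fst _ _)

theorem removal_surj {r m : ℕ} (hm : 0 < m) (L : Matrix (Fin r) (Fin m) ℤ)
    (hs : ∀ i, Function.Surjective fun x : kerT L => (x : Fin m → 𝕋) i) {ε : ℝ} (hε : 0 < ε) :
    ∃ δ : ℝ, 0 < δ ∧
      ∀ (μL : Measure (kerT L)), μL.IsAddHaarMeasure → IsProbabilityMeasure μL →
        ∀ A : Fin m → Set 𝕋, (∀ i, MeasurableSet (A i)) →
          (μL {x : kerT L | ∀ i, (x : Fin m → 𝕋) i ∈ A i}).toReal ≤ δ →
          ∃ E : Fin m → Set 𝕋,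
            (∀ i, MeasurableSet (E i)) ∧
            (∀ i, (volume (E i)).toReal ≤ ε) ∧
            ∀ x : kerT L, ¬ (∀ i, (x : Fin m → 𝕋) i ∈ A i \ E i) := by
  have hcl := kerT_closed L
  have : CompactSpace (kerT L) := isCompact_iff_compactSpace.1 hcl.isCompact
  have : PolishSpace (kerT L) := hcl.polishSpace
  have := circle_prob
  have hsome : ∀ i p, coordO L (some i) p = (p.1 : Fin m → 𝕋) i := fun _ _ => rfl
  have hnone : ∀ p, coordO L none p = p.2 := fun _ => rfl
  have hsome0 : ∀ (i : Fin m) (t : 𝕋), ((0 : kerT L), t) ∈ (coordO L (some i)).ker := by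
    intro i t
    rw [AddMonoidHom.mem_ker, hsome]
    rfl
  have hnone0 : ∀ (x : kerT L), (x, (0 : 𝕋)) ∈ (coordO L none).ker := by
    intro x
    rw [AddMonoidHom.mem_ker, hnone]
  obtain ⟨δ, hδ, hmain⟩ := group_removal (G := kerT L × 𝕋) (coordO L) (by
      rintro (_ | i)
      · exact continuous_snd
      · change Continuous fun p : kerT L × 𝕋 => (p.1 : Fin m → 𝕋) i
        exact (continuous_apply i).comp (continuous_subtype_val.comp continuous_fst)) (by
      rintro (_ | i) a
      · exact ⟨(0, a), rfl⟩
      · obtain ⟨x, hx⟩ := hs i a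
        exact ⟨(x, 0), hx⟩) (by
      rintro ⟨x, t⟩
      let i0 : Fin m := ⟨0, hm⟩
      refine ⟨fun j => match j with
        | none => ⟨(x, 0), hnone0 x⟩
        | some i => ⟨(0, if i = i0 then t else 0), hsome0 i _⟩, ?_⟩
      rw [Fintype.sum_option]
      ext1
      · simp [Prod.fst_sum]
      · simp [Prod.snd_sum]) (ε := min ε (1 / 2)) (lt_min hε (by norm_num))
  refine ⟨δ, hδ, fun μL hμ hμP A hA hAδ => ?_⟩
  obtain ⟨E, hEm, hEε, hE⟩ := hmain (μL.prod volume) (Measure.prod.instIsAddHaarMeasure μL volume) inferInstance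
    (fun j => match j with
      | none => univ
      | some i => A i) (by
      rintro (_ | i)
      · exact MeasurableSet.univ
      · exact hA i) (by
      refine le_trans (le_of_eq ?_) hAδ
      have heq : {g : kerT L × 𝕋 | ∀ j : Option (Fin m), coordO L j g ∈ (match j with
          | none => univ
          | some i => A i : Set 𝕋)} = {x : kerT L | ∀ i, (x : Fin m → 𝕋) i ∈ A i} ×ˢ univ := by
        ext p
        simp only [mem_ofPred_eq, Option.forall, mem_univ, true_and, mem_prod, and_true]
        rfl
      rw [heq, measureReal_def, Measure.prod_prod, measure_univ, mul_one])
  refine ⟨fun i => E (some i), fun i => hEm _, fun i => (hEε _).trans (min_le_left _ _), ?_⟩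
  intro x hx
  have hne : E none ≠ univ := by
    intro h
    have h1 := (hEε none).trans (min_le_right _ _)
    rw [h, measureReal_def, measure_univ] at h1
    norm_num at h1
  obtain ⟨t, ht⟩ := (ne_univ_iff_exists_notMem _).1 hne
  refine hE (x, t) ?_
  rintro (_ | i)
  · exact ⟨mem_univ _, ht⟩
  · exact hx i

/-- **Removal lemma for linear configurations in subsets of the circle.**
Let `r ≤ m` be positive integers and `L` an `r × m` integer matrix of full rank `r`.
For every `ε > 0` there is `δ > 0` such that: if `μL` is the normalized (probability) Haar
measure on `ker_𝕋 L` and `A₁, …, A_m` are Borel measurable subsets of `𝕋` with solution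
measure `S_L(A₁, …, A_m) = μL((A₁ × ⋯ × A_m) ∩ ker_𝕋 L) ≤ δ`, then there are Borel
measurable sets `E₁, …, E_m ⊆ 𝕋` of measure at most `ε` such that
`((A₁ \ E₁) × ⋯ × (A_m \ E_m)) ∩ ker_𝕋 L = ∅`. -/
theorem removal_lemma_circle {r m : ℕ} (hr : 0 < r) (hrm : r ≤ m)
    (L : Matrix (Fin r) (Fin m) ℤ)
    (hrank : (L.map (Int.cast : ℤ → ℚ)).rank = r)
    {ε : ℝ} (hε : 0 < ε) :
    ∃ δ : ℝ, 0 < δ ∧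
      ∀ (μL : Measure (kerT L)), μL.IsAddHaarMeasure → IsProbabilityMeasure μL →
        ∀ A : Fin m → Set 𝕋, (∀ i, MeasurableSet (A i)) →
          (μL {x : kerT L | ∀ i, (x : Fin m → 𝕋) i ∈ A i}).toReal ≤ δ →
          ∃ E : Fin m → Set 𝕋,
            (∀ i, MeasurableSet (E i)) ∧
            (∀ i, (volume (E i)).toReal ≤ ε) ∧
            ∀ x : kerT L, ¬ (∀ i, (x : Fin m → 𝕋) i ∈ A i \ E i) := by
  by_cases hs : ∀ i, Function.Surjective fun x : kerT L => (x : Fin m → 𝕋) i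
  · exact removal_surj (lt_of_lt_of_le hr hrm) L hs hε
  · push Not at hs
    obtain ⟨i, hi⟩ := hs
    have hcl := kerT_closed L
    have : CompactSpace (kerT L) := isCompact_iff_compactSpace.1 hcl.isCompact
    let f : kerT L →+ 𝕋 := (Pi.evalAddMonoidHom (fun _ : Fin m => 𝕋) i).comp (kerT L).subtype
    have hf : ∀ x, f x = (x : Fin m → 𝕋) i := fun _ => rfl
    have hfc : Continuous f := by
      change Continuous fun x : kerT L => (x : Fin m → 𝕋) i
      exact (continuous_apply i).comp continuous_subtype_val
    have hrc : IsClosed (f.range : Set 𝕋) := by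
      rw [AddMonoidHom.coe_range]
      exact (isCompact_range hfc).isClosed
    have hnull : volume (f.range : Set 𝕋) = 0 := by
      refine closed_subgroup_null _ hrc fun h => hi ?_
      exact AddMonoidHom.range_eq_top.1 h
    classical
    refine ⟨1, one_pos, fun μL _ _ A _ _ =>
      ⟨fun j => if j = i then (f.range : Set 𝕋) else ∅, fun j => ?_, fun j => ?_, fun x hx => ?_⟩⟩
    · by_cases hj : j = i
      · simp only [hj, if_true]; exact hrc.measurableSet
      · simp [hj]
    · by_cases hj : j = i
      · simp only [hj, if_true, hnull]; simpa using hε.le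
      · simp only [hj, if_false]; simpa using hε.le
    · refine (hx i).2 ?_
      simp only [if_true]
      exact ⟨x, rfl⟩
end
end

section
/- Let L be an r×m integer matrix of full rank r that is invariant, i.e. L𝟙 = 0 where 𝟙 = (1, 1, …, 1). Then for every α > 0 there exists c = c(α, L) > 0 such that every Borel measurable set A ⊆ T = ℝ/ℤ with μ_T(A) ≥ α satisfies S_L(A) ≥ c. -/
open MeasureTheory Set

noncomputable section

namespace DHJ

/-- Average of a real function on a finite type. -/
def av {X : Type} [Finite X] (f : X → ℝ) : ℝ :=
  letI := Fintype.ofFinite X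
  (∑ x, f x) / (Fintype.card X : ℝ)

theorem av_eq {X : Type} [Fintype X] (f : X → ℝ) : av f = (∑ x, f x) / (Fintype.card X : ℝ) := by
  unfold av
  have : Fintype.ofFinite X = ‹Fintype X› := Subsingleton.elim _ _
  rw [this]

section avlemmas
variable {X Y : Type} [Finite X] [Finite Y]

theorem av_mono {f g : X → ℝ} (h : ∀ x, f x ≤ g x) : av f ≤ av g := by
  have := Fintype.ofFinite X
  rw [av_eq, av_eq]
  gcongr with x
  exact h x

theorem av_add (f g : X → ℝ) : av (fun x => f x + g x) = av f + av g := by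
  have := Fintype.ofFinite X
  rw [av_eq, av_eq, av_eq, Finset.sum_add_distrib, add_div]

theorem av_sub (f g : X → ℝ) : av (fun x => f x - g x) = av f - av g := by
  have := Fintype.ofFinite X
  rw [av_eq, av_eq, av_eq, Finset.sum_sub_distrib, sub_div]

theorem av_mul (c : ℝ) (f : X → ℝ) : av (fun x => c * f x) = c * av f := by
  have := Fintype.ofFinite X
  rw [av_eq, av_eq, ← Finset.mul_sum, mul_div_assoc]

theorem av_const [Nonempty X] (c : ℝ) : av (fun _ : X => c) = c := by
  have := Fintype.ofFinite X
  rw [av_eq]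
  have : (Fintype.card X : ℝ) ≠ 0 := by exact_mod_cast Fintype.card_ne_zero
  simp

theorem av_zero : av (fun _ : X => (0 : ℝ)) = 0 := by
  have := Fintype.ofFinite X
  rw [av_eq]; simp

theorem av_nonneg {f : X → ℝ} (h : ∀ x, 0 ≤ f x) : 0 ≤ av f := by
  rw [← av_zero (X := X)]; exact av_mono h

theorem av_le_const [Nonempty X] {f : X → ℝ} {c : ℝ} (h : ∀ x, f x ≤ c) : av f ≤ c := by
  rw [← av_const (X := X) c]; exact av_mono h

theorem const_le_av [Nonempty X] {f : X → ℝ} {c : ℝ} (h : ∀ x, c ≤ f x) : c ≤ av f := by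
  rw [← av_const (X := X) c]; exact av_mono h

theorem av_equiv (e : X ≃ Y) (f : Y → ℝ) : av (fun x => f (e x)) = av f := by
  have := Fintype.ofFinite X
  have := Fintype.ofFinite Y
  rw [av_eq, av_eq, Fintype.card_congr e, Equiv.sum_comp e f]

theorem av_prod (f : X → Y → ℝ) : av (fun p : X × Y => f p.1 p.2) = av fun x => av fun y => f x y := by
  have := Fintype.ofFinite X
  have := Fintype.ofFinite Y
  simp only [av_eq]
  rw [Fintype.sum_prod_type, ← Finset.sum_div, div_div, Fintype.card_prod]
  push_cast
  rw [mul_comm]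

theorem av_comm (f : X → Y → ℝ) : (av fun x => av fun y => f x y) = av fun y => av fun x => f x y := by
  have := Fintype.ofFinite X
  have := Fintype.ofFinite Y
  simp only [av_eq]
  rw [← Finset.sum_div, ← Finset.sum_div, div_div, div_div, Finset.sum_comm, mul_comm]

theorem av_sum {P : Type} (s : Finset P) (f : P → X → ℝ) :
    av (fun x => ∑ p ∈ s, f p x) = ∑ p ∈ s, av (f p) := by
  have := Fintype.ofFinite X
  simp only [av_eq]
  rw [Finset.sum_comm, Finset.sum_div]

/-- single-point bound for nonnegative functions -/
theorem le_card_mul_av {f : X → ℝ} (h : ∀ x, 0 ≤ f x) (x : X) : f x ≤ Nat.card X * av f := by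
  have := Fintype.ofFinite X
  have : Nonempty X := ⟨x⟩
  rw [av_eq, Nat.card_eq_fintype_card]
  have : (Fintype.card X : ℝ) ≠ 0 := by exact_mod_cast Fintype.card_ne_zero
  rw [mul_div_cancel₀ _ this]
  exact Finset.single_le_sum (f := f) (fun i _ => h i) (Finset.mem_univ x)

end avlemmas

open Classical in
/-- indicator of a proposition -/
def ind (p : Prop) : ℝ := if p then 1 else 0

theorem ind_nonneg (p : Prop) : 0 ≤ ind p := by unfold ind; split_ifs <;> norm_num
theorem ind_le_one (p : Prop) : ind p ≤ 1 := by unfold ind; split_ifs <;> norm_num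
theorem ind_pos {p : Prop} (h : p) : ind p = 1 := by unfold ind; simp [h]
theorem ind_neg {p : Prop} (h : ¬ p) : ind p = 0 := by unfold ind; simp [h]
theorem ind_mono {p q : Prop} (h : p → q) : ind p ≤ ind q := by
  by_cases hp : p
  · rw [ind_pos hp, ind_pos (h hp)]
  · rw [ind_neg hp]; exact ind_nonneg _

/-- density -/
def dn {X : Type} [Finite X] (P : X → Prop) : ℝ := av fun x => ind (P x)

theorem dn_nonneg {X : Type} [Finite X] (P : X → Prop) : 0 ≤ dn P := av_nonneg fun _ => ind_nonneg _
theorem dn_le_one {X : Type} [Finite X] (P : X → Prop) : dn P ≤ 1 := by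
  rcases isEmpty_or_nonempty X with h | h
  · have := Fintype.ofFinite X
    unfold dn; rw [av_eq]; simp
  · exact av_le_const fun _ => ind_le_one _
theorem dn_mono {X : Type} [Finite X] {P Q : X → Prop} (h : ∀ x, P x → Q x) : dn P ≤ dn Q :=
  av_mono fun x => ind_mono (h x)
theorem exists_of_dn_pos {X : Type} [Finite X] {P : X → Prop} (h : 0 < dn P) : ∃ x, P x := by
  by_contra! hc
  have : dn P = 0 := by
    unfold dn
    rw [← av_zero (X := X)]
    congr 1; ext x; exact ind_neg (hc x)
  linarith

/-! ### words, gluing, subspaces -/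

/-- evaluation of a subspace -/
def ev {ι Q η : Type} (σ : ι → Q ⊕ η) (x : η → Q) : ι → Q := fun i => Sum.elim id x (σ i)

/-- every variable is used -/
def Proper {ι Q η : Type} (σ : ι → Q ⊕ η) : Prop := ∀ j, ∃ i, σ i = Sum.inr j

/-- gluing two words -/
def glue {ι κ ι' Q : Type} (e : ι ≃ κ ⊕ ι') (x : κ → Q) (y : ι' → Q) : ι → Q :=
  fun i => Sum.elim x y (e i)

theorem av_glue {ι κ ι' Q : Type} [Finite ι] [Finite κ] [Finite ι'] [Finite Q] (e : ι ≃ κ ⊕ ι')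
    (f : (ι → Q) → ℝ) : av f = av fun x => av fun y => f (glue e x y) := by
  rw [← av_prod (fun x y => f (glue e x y))]
  let E : ((κ → Q) × (ι' → Q)) ≃ (ι → Q) :=
    (Equiv.sumArrowEquivProdArrow κ ι' Q).symm.trans (Equiv.arrowCongr e.symm (Equiv.refl Q))
  rw [← av_equiv E f]
  rfl

theorem exists_split (ι : Type) [Finite ι] (N : ℕ) (h : N ≤ Nat.card ι) :
    ∃ (ι' : Type) (_ : Finite ι'), Nat.card ι' = Nat.card ι - N ∧ Nonempty (ι ≃ Fin N ⊕ ι') := by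
  refine ⟨Fin (Nat.card ι - N), inferInstance, by simp, ⟨?_⟩⟩
  exact (Finite.equivFin ι).trans ((finCongr (by omega)).trans finSumFinEquiv.symm)

theorem av_cons {B : ℕ} {Q : Type} [Finite Q] (f : (Fin (B+1) → Q) → ℝ) :
    av f = av fun q => av fun u => f (Fin.cons q u) := by
  rw [← av_prod (fun (q : Q) (u : Fin B → Q) => f (Fin.cons q u))]
  rw [← av_equiv (Fin.consEquiv (fun _ => Q)) f]
  rfl

/-! ### Cell decomposition -/

theorem cells_fin {Q Λ : Type} [Finite Q] [Finite Λ] [Nonempty Λ] (e : Λ → Q)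
    (he : Function.Injective e) (c : ℝ) (hc : c = Nat.card Λ / Nat.card Q) (B : ℕ) :
    ∀ (M : ℕ) (F : (Fin B → Q) → ℝ), (∀ u, F u ≤ 1) → ∀ s : ℝ, 0 ≤ s →
    (∀ σ : Fin B → Q ⊕ Fin M, Proper σ →
      av (fun x : Fin M → Λ => F (ev σ (e ∘ x))) ≤ s) →
    av F ≤ s + 2 ^ M * (1 - c / 2) ^ B := by
  classical
  have := Fintype.ofFinite Q
  have := Fintype.ofFinite Λ
  have hQ : Nonempty Q := ‹Nonempty Λ›.map e
  have hQpos : (0:ℝ) < Fintype.card Q := by exact_mod_cast Fintype.card_pos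
  have hcle : c ≤ 1 := by
    rw [hc, div_le_one (by simpa using hQpos)]
    simp only [Nat.card_eq_fintype_card]
    exact_mod_cast Fintype.card_le_of_injective e he
  have hcΛ : c * Fintype.card Q = Fintype.card Λ := by
    rw [hc]; simp only [Nat.card_eq_fintype_card]; field_simp
  have hc0 : 0 ≤ c := by rw [hc]; positivity
  have hρ : 0 ≤ 1 - c / 2 := by linarith
  have h0 : ∀ (B : ℕ) (F : (Fin B → Q) → ℝ) (s : ℝ), 
    (∀ σ : Fin B → Q ⊕ Fin 0, Proper σ →
      av (fun x : Fin 0 → Λ => F (ev σ (e ∘ x))) ≤ s) → av F ≤ s := by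
    intro B F s h
    refine av_le_const fun u => ?_
    have := h (fun i => Sum.inl (u i)) (fun j => j.elim0)
    have h2 : (fun x : Fin 0 → Λ => F (ev (fun i => Sum.inl (u i)) (e ∘ x))) = fun _ => F u := rfl
    rwa [h2, av_const] at this
  induction B with
  | zero =>
    intro M F hF s hs h
    have h1 : av F ≤ 1 := av_le_const hF
    have h2 : (1:ℝ) ≤ 2 ^ M := one_le_pow₀ (by norm_num)
    simp; linarith
  | succ B ih =>
    intro M F hF s hs h
    rcases M with _ | M
    · have := h0 _ F s h
      have h3 : (0:ℝ) ≤ 2 ^ 0 * (1 - c / 2) ^ (B+1) := by positivity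
      linarith
    rw [av_cons]
    set G : Q → ℝ := fun q => av fun u => F (Fin.cons q u) with hG
    have hG2 : ∀ q, G q ≤ s + 2 ^ (M+1) * (1 - c/2) ^ B := by
      intro q
      refine ih (M+1) (fun u => F (Fin.cons q u)) (fun u => hF _) s hs ?_
      intro σ hσ
      refine le_trans (le_of_eq ?_) (h (Fin.cons (Sum.inl q) σ) ?_)
      · congr 1; ext x; congr 1; ext i
        refine Fin.cases ?_ (fun i => ?_) i <;> simp [ev]
      · intro j
        obtain ⟨i, hi⟩ := hσ j
        exact ⟨i.succ, by simpa using hi⟩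
    have hG1 : av (fun l => G (e l)) ≤ s + 2 ^ M * (1 - c/2) ^ B := by
      rw [hG]; simp only
      rw [av_comm]
      refine ih M (fun u => av fun l => F (Fin.cons (e l) u)) (fun u => av_le_const fun _ => hF _) s hs ?_
      intro σ hσ
      refine le_trans (le_of_eq ?_) (h (Fin.cons (Sum.inr 0) (fun i => Sum.map id Fin.succ (σ i))) ?_)
      · rw [av_comm]
        rw [av_cons]
        congr 1; ext l; congr 1; ext x; congr 1; ext i
        refine Fin.cases ?_ (fun i => ?_) i
        · simp [ev]
        · simp only [ev, Fin.cons_succ]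
          rcases σ i with q | j <;> simp
      · intro j
        refine Fin.cases ⟨0, by simp⟩ (fun j => ?_) j
        obtain ⟨i, hi⟩ := hσ j
        exact ⟨i.succ, by simp [hi]⟩
    have hsum : ∑ q, G q = ∑ l, G (e l) + ∑ q ∈ (Finset.univ.image e)ᶜ, G q := by
      rw [← Finset.sum_add_sum_compl (Finset.univ.image e), Finset.sum_image (fun a _ b _ h => he h)]
    have hsum2 : ∑ q ∈ (Finset.univ.image e)ᶜ, G q ≤
        (Fintype.card Q - Fintype.card Λ) * (s + 2 ^ (M+1) * (1 - c/2) ^ B) := by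
      refine (Finset.sum_le_card_nsmul _ _ _ (fun q _ => hG2 q)).trans (le_of_eq ?_)
      rw [nsmul_eq_mul, Finset.card_compl, Finset.card_image_of_injective _ he,
        Nat.cast_sub (by simpa using Fintype.card_le_of_injective e he)]
      simp
    rw [av_eq] at hG1 ⊢
    have hΛpos : (0:ℝ) < Fintype.card Λ := by exact_mod_cast Fintype.card_pos
    rw [div_le_iff₀ hΛpos] at hG1
    rw [div_le_iff₀ hQpos, hsum]
    refine (add_le_add hG1 hsum2).trans (le_of_eq ?_)
    rw [← hcΛ]
    ring

theorem cells (Q Λ : Type) [Finite Q] [Finite Λ] [Nonempty Λ] [Nonempty Q]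
    (M : ℕ) (ε : ℝ) (hε : 0 < ε) : ∃ N : ℕ, ∀ (e : Λ → Q), Function.Injective e → ∀ (ι : Type) [Finite ι],
    N ≤ Nat.card ι → ∀ F : (ι → Q) → ℝ, (∀ u, F u ≤ 1) → ∀ s : ℝ, 0 ≤ s → s + ε ≤ av F →
    ∃ σ : ι → Q ⊕ Fin M, Proper σ ∧ s ≤ av (fun x : Fin M → Λ => F (ev σ (e ∘ x))) := by
  set c : ℝ := Nat.card Λ / Nat.card Q with hc
  have hQpos : (0:ℝ) < Nat.card Q := by exact_mod_cast Nat.card_pos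
  have hΛpos : (0:ℝ) < Nat.card Λ := by exact_mod_cast Nat.card_pos
  have hcpos : 0 < c := by positivity
  obtain ⟨N, hN⟩ := exists_pow_lt_of_lt_one (show 0 < ε / 2 ^ M by positivity)
    (show 1 - c / 2 < 1 by linarith)
  refine ⟨N, fun e he ι _ hι F hF s hs hav => ?_⟩
  have hcle : c ≤ 1 := by
    rw [hc, div_le_one hQpos]
    exact_mod_cast Nat.card_le_card_of_injective e he
  by_contra! hcon
  set E := Finite.equivFin ι
  let T : (Fin (Nat.card ι) → Q) ≃ (ι → Q) := Equiv.arrowCongr E.symm (Equiv.refl Q)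
  have key := cells_fin e he c hc (Nat.card ι) M (fun u => F (T u)) (fun u => hF _) s hs ?_
  · rw [av_equiv T F] at key
    have h1 : (1 - c/2) ^ (Nat.card ι) ≤ (1 - c/2) ^ N :=
      pow_le_pow_of_le_one (by linarith) (by linarith) hι
    have h2 := h1.trans_lt hN
    rw [lt_div_iff₀ (by positivity)] at h2
    linarith
  · intro σ hσ
    refine le_trans (le_of_eq ?_) (hcon (fun i => σ (E i)) ?_).le
    · rfl
    · intro j
      obtain ⟨i, hi⟩ := hσ j
      exact ⟨E.symm i, by simpa using hi⟩

end DHJ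

namespace DHJ

theorem pigeon {Y P : Type} [Finite Y] [Finite P] (f : Y → ℝ) (hf : ∀ y, f y ≤ 1)
    (R : P → Y → Prop) (δ : ℝ) (hδ : 0 < δ) (h : δ ≤ av f) (hR : ∀ y, δ / 2 ≤ f y → ∃ p, R p y) :
    δ / 2 ≤ ∑ᶠ p, dn (R p) := by
  have := Fintype.ofFinite P
  rw [finsum_eq_sum_of_fintype]
  have hY : Nonempty Y := by
    by_contra hY
    rw [not_nonempty_iff] at hY
    have := Fintype.ofFinite Y
    rw [av_eq] at h
    simp at h; linarith
  have h1 : ∀ y, f y ≤ δ / 2 + ∑ p, ind (R p y) := by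
    intro y
    by_cases hy : δ / 2 ≤ f y
    · obtain ⟨p, hp⟩ := hR y hy
      have := Finset.single_le_sum (f := fun p => ind (R p y)) (fun i _ => ind_nonneg _) (Finset.mem_univ p)
      simp only [ind_pos hp] at this
      linarith [hf y]
    · have := Finset.sum_nonneg (s := Finset.univ) (f := fun p => ind (R p y)) (fun i _ => ind_nonneg _)
      push Not at hy
      linarith
  have h2 := av_mono h1
  rw [av_add, av_const, av_sum] at h2
  unfold dn
  linarith

theorem exists_of_sum {P : Type} [Finite P] (f : P → ℝ) (c : ℝ) (hc : 0 < c) (h : c ≤ ∑ᶠ p, f p) :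
    ∃ p, c / (Nat.card P + 1) ≤ f p := by
  have := Fintype.ofFinite P
  rw [finsum_eq_sum_of_fintype] at h
  by_contra! hcon
  have h1 : ∑ p, f p ≤ ∑ p : P, c / (Nat.card P + 1) := Finset.sum_le_sum fun p _ => (hcon p).le
  simp at h1
  have h2 : (Fintype.card P : ℝ) * (c / (Fintype.card P + 1)) < c := by
    rw [← mul_div_assoc, div_lt_iff₀ (by positivity)]
    nlinarith
  linarith

theorem pigeon' {Y P : Type} [Finite Y] [Finite P] (f : Y → ℝ) (hf : ∀ y, f y ≤ 1)
    (R : P → Y → Prop) (δ : ℝ) (hδ : 0 < δ) (h : δ ≤ av f) (hR : ∀ y, δ / 2 ≤ f y → ∃ p, R p y) :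
    ∃ p, δ / 2 / (Nat.card P + 1) ≤ dn (R p) :=
  exists_of_sum _ _ (by linarith) (pigeon f hf R δ hδ h hR)

/-- The density Hales-Jewett property for the alphabet `α`. -/
def HasDHJ (α : Type) [Finite α] : Prop := ∀ δ : ℝ, 0 < δ → ∃ N : ℕ, ∀ (ι : Type) [Finite ι],
  N ≤ Nat.card ι → ∀ A : (ι → α) → Prop, δ ≤ dn A →
  ∃ w : ι → Option α, (∃ i, w i = none) ∧ ∀ a, A (fun i => (w i).getD a)

/-- composition of subspaces -/
def comp {ι Q η θ : Type} (σ : ι → Q ⊕ η) (τ : η → Q ⊕ θ) : ι → Q ⊕ θ :=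
  fun i => Sum.elim Sum.inl τ (σ i)

theorem ev_comp {ι Q η θ : Type} (σ : ι → Q ⊕ η) (τ : η → Q ⊕ θ) (x : θ → Q) :
    ev (comp σ τ) x = ev σ (ev τ x) := by
  ext i
  simp only [ev, comp]
  rcases σ i with q | j <;> simp [ev]

theorem Proper.comp {ι Q η θ : Type} {σ : ι → Q ⊕ η} {τ : η → Q ⊕ θ} (hσ : Proper σ)
    (hτ : Proper τ) : Proper (comp σ τ) := by
  intro j
  obtain ⟨k, hk⟩ := hτ j
  obtain ⟨i, hi⟩ := hσ k
  exact ⟨i, by simp [DHJ.comp, hi, hk]⟩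

theorem ev_injective {ι Q η : Type} {σ : ι → Q ⊕ η} (hσ : Proper σ) :
    Function.Injective (ev σ) := by
  intro x y h
  ext j
  obtain ⟨i, hi⟩ := hσ j
  have := congrFun h i
  simpa [ev, hi] using this

theorem mdhj {α : Type} [Finite α] (h : HasDHJ α) (d : ℕ) : ∀ δ : ℝ, 0 < δ → ∃ N : ℕ,
    ∀ (ι : Type) [Finite ι], N ≤ Nat.card ι → ∀ A : (ι → α) → Prop, δ ≤ dn A →
    ∃ σ : ι → α ⊕ Fin d, Proper σ ∧ ∀ x, A (ev σ x) := by
  induction d with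
  | zero =>
    intro δ hδ
    refine ⟨0, fun ι _ _ A hA => ?_⟩
    obtain ⟨u, hu⟩ := exists_of_dn_pos (hδ.trans_le hA)
    exact ⟨fun i => Sum.inl (u i), fun j => j.elim0, fun x => hu⟩
  | succ d ih =>
    intro δ hδ
    obtain ⟨N0, hN0⟩ := ih (δ / 2) (by linarith)
    obtain ⟨N1, hN1⟩ := h (δ / 2 / (Nat.card (Fin N0 → α ⊕ Fin d) + 1)) (by positivity)
    refine ⟨N0 + N1, fun ι _ hι A hA => ?_⟩
    obtain ⟨ι', _, hc, ⟨e⟩⟩ := exists_split ι N0 (by omega)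
    have h1 : δ ≤ av fun y => dn fun x => A (glue e x y) := by
      refine hA.trans (le_of_eq ?_)
      unfold dn
      rw [av_glue e, av_comm]
    obtain ⟨σ, hσ⟩ := pigeon' (fun y => dn fun x => A (glue e x y)) (fun y => dn_le_one _)
      (fun (σ : Fin N0 → α ⊕ Fin d) y => Proper σ ∧ ∀ x, A (glue e (ev σ x) y)) δ hδ h1
      (fun y hy => hN0 (Fin N0) (by simp) _ hy)
    have hp : Proper σ := by
      obtain ⟨y, hy⟩ := exists_of_dn_pos (lt_of_lt_of_le (by positivity) hσ)
      exact hy.1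
    obtain ⟨w, ⟨i0, hi0⟩, hw⟩ := hN1 ι' (by omega) _ hσ
    refine ⟨fun i => Sum.elim (fun i => Sum.map id Fin.succ (σ i))
      (fun i => (w i).elim (Sum.inr 0) Sum.inl) (e i), ?_, ?_⟩
    · intro j
      refine Fin.cases ?_ (fun j => ?_) j
      · exact ⟨e.symm (Sum.inr i0), by simp [hi0]⟩
      · obtain ⟨i, hi⟩ := hp j
        exact ⟨e.symm (Sum.inl i), by simp [hi]⟩
    · intro x
      have := (hw (x 0)).2 (Fin.tail x)
      convert this using 1
      ext i
      simp only [ev, glue]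
      rcases e i with k | k
      · simp only [Sum.elim_inl]
        rcases hk : σ k with q | j <;> simp [Fin.tail, ev, hk]
      · simp only [Sum.elim_inr]
        rcases w k with _ | a <;> simp

/-- insensitivity under exchange of `none` and `some r` -/
def Insens {α ι : Type} (r : α) (D : (ι → Option α) → Prop) : Prop :=
  ∀ x y : ι → Option α, (∀ i, (x i).getD r = (y i).getD r) → D x → D y

theorem Insens.not {α ι : Type} {r : α} {D : (ι → Option α) → Prop} (h : Insens r D) :
    Insens r (fun x => ¬ D x) := fun x y hxy hx hy => hx (h y x (fun i => (hxy i).symm) hy)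

theorem Insens.and {α ι : Type} {r : α} {D E : (ι → Option α) → Prop} (h : Insens r D)
    (h' : Insens r E) : Insens r (fun x => D x ∧ E x) :=
  fun x y hxy hx => ⟨h x y hxy hx.1, h' x y hxy hx.2⟩

theorem Insens.ev {α ι η : Type} {r : α} {D : (ι → Option α) → Prop} (h : Insens r D)
    (σ : ι → Option α ⊕ η) : Insens r (fun x => D (ev σ x)) := by
  intro x y hxy hx
  refine h _ _ (fun i => ?_) hx
  simp only [DHJ.ev]
  rcases σ i with q | j
  · rfl
  · exact hxy j

theorem insens_subspace {α : Type} [Finite α] [Nonempty α] (h : HasDHJ α) (d : ℕ) (δ : ℝ)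
    (hδ : 0 < δ) : ∃ N : ℕ, ∀ (ι : Type) [Finite ι], N ≤ Nat.card ι → ∀ (r : α)
    (D : (ι → Option α) → Prop), Insens r D → δ ≤ dn D →
    ∃ σ : ι → Option α ⊕ Fin d, Proper σ ∧ ∀ x, D (ev σ x) := by
  obtain ⟨N0, hN0⟩ := mdhj h d (δ / 2) (by linarith)
  obtain ⟨N, hN⟩ := cells (Option α) α N0 (δ / 2) (by linarith)
  refine ⟨N, fun ι _ hι r D hD hd => ?_⟩
  obtain ⟨σ, hσ, hav⟩ := hN some (Option.some_injective α) ι hι (fun u => ind (D u)) (fun u => ind_le_one _) (δ / 2) (by linarith)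
    (by rw [add_halves]; exact hd)
  obtain ⟨τ, hτ, hx⟩ := hN0 (Fin N0) (by simp) (fun x => D (ev σ (some ∘ x))) hav
  refine ⟨comp σ (fun j => Sum.map some id (τ j)), hσ.comp ?_, fun x => ?_⟩
  · intro j
    obtain ⟨i, hi⟩ := hτ j
    exact ⟨i, by simp [hi]⟩
  · refine hD _ _ (fun i => ?_) (hx (fun j => (x j).getD r))
    rw [ev_comp]
    simp only [ev]
    rcases σ i with q | j
    · rfl
    · simp only [Sum.elim_inr, Function.comp]
      rcases hk : τ j with q | k <;> simp [ev, hk]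

theorem av_range {X Z : Type} [Finite X] [Finite Z] [Nonempty X] [Nonempty Z] (φ : Z → X)
    (hφ : Function.Injective φ) (g : X → ℝ) :
    av (fun x => ind (x ∈ Set.range φ) * g x) = (Nat.card Z / Nat.card X : ℝ) * av (fun z => g (φ z)) := by
  classical
  have := Fintype.ofFinite X
  have := Fintype.ofFinite Z
  rw [av_eq, av_eq]
  have h1 : ∑ x, ind (x ∈ Set.range φ) * g x = ∑ z, g (φ z) := by
    rw [← Finset.sum_image (s := Finset.univ) (g := φ) (f := g) (fun a _ b _ h => hφ h)]
    rw [← Finset.sum_subset (Finset.subset_univ (Finset.univ.image φ))]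
    · refine Finset.sum_congr rfl fun x hx => ?_
      rw [ind_pos (by simpa using hx), one_mul]
    · intro x _ hx
      rw [ind_neg (by simpa using hx), zero_mul]
  rw [h1]
  have : (Fintype.card Z : ℝ) ≠ 0 := by exact_mod_cast Fintype.card_ne_zero
  simp only [Nat.card_eq_fintype_card]
  field_simp

theorem insens_avg_aux {α : Type} [Finite α] [Nonempty α] (h : HasDHJ α) (d : ℕ) (r : α) (κ β : ℝ)
    (hκ : 0 ≤ κ) (hβ : 0 < β) : ∃ η : ℝ, 0 < η ∧ η ≤ 1 ∧ ∀ J : ℕ, ∃ N : ℕ, ∀ (ι : Type) [Finite ι],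
    N ≤ Nat.card ι → ∀ f : (ι → Option α) → ℝ, (∀ x, f x ≤ 1) →
    (∀ σ : ι → Option α ⊕ Fin d, Proper σ → av (fun x => f (ev σ x)) ≤ κ) →
    ∀ D, Insens r D → av (fun x => f x * ind (D x)) ≤ (κ + (1 - η) ^ J) * dn D + β := by
  obtain ⟨m, hm⟩ := insens_subspace h d (β / 2) (by linarith)
  set η0 : ℝ := β / 2 / (Nat.card (Fin m → Option α ⊕ Fin d) + 1) with hη0
  set K : ℝ := (Nat.card (Fin m → Option α) : ℝ) with hK
  have hKpos : 0 < K := by rw [hK]; exact_mod_cast Nat.card_pos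
  have hη0pos : 0 < η0 := by positivity
  refine ⟨min 1 (η0 / K), by positivity, min_le_left _ _, ?_⟩
  set η := min 1 (η0 / K) with hη
  have hη1 : η ≤ 1 := min_le_left _ _
  have hηpos : 0 < η := by positivity
  have triv : ∀ (ι : Type) [Finite ι] (f : (ι → Option α) → ℝ), (∀ x, f x ≤ 1) → ∀ D : (ι → Option α) → Prop,
      av (fun x => f x * ind (D x)) ≤ dn D := by
    intro ι _ f hf D
    refine av_mono fun x => ?_
    have := mul_le_mul_of_nonneg_right (hf x) (ind_nonneg (D x))
    linarith
  intro J
  induction J with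
  | zero =>
    refine ⟨0, fun ι _ _ f hf _ D _ => (triv ι f hf D).trans ?_⟩
    have := mul_nonneg hκ (dn_nonneg D)
    simp only [pow_zero]
    nlinarith
  | succ J ih =>
    obtain ⟨N, hN⟩ := ih
    refine ⟨m + N, fun ι _ hι f hf hW D hD => ?_⟩
    have hpJ : 0 ≤ (1 - η) ^ J := pow_nonneg (by linarith) _
    have hpJ1 : 0 ≤ (1 - η) ^ (J+1) := pow_nonneg (by linarith) _
    by_cases hsmall : dn D < β
    · have := triv ι f hf D
      have h2 : 0 ≤ (κ + (1 - η) ^ (J+1)) * dn D := mul_nonneg (by linarith) (dn_nonneg _)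
      linarith
    push Not at hsmall
    obtain ⟨ι', _, hc, ⟨e⟩⟩ := exists_split ι m (by omega)
    have hglue : ∀ x : Fin m → Option α, ∀ y y' : ι' → Option α, 
        (∀ i, (y i).getD r = (y' i).getD r) → 
        ∀ i, (glue e x y i).getD r = (glue e x y' i).getD r := by
      intro x y y' hyy i
      simp only [glue]
      rcases e i with k | k
      · rfl
      · exact hyy k
    have hdD : dn D = av fun y => dn fun x => D (glue e x y) := by
      unfold dn
      rw [av_glue e, av_comm]
    obtain ⟨σ, hσ⟩ := pigeon' (fun y => dn fun x => D (glue e x y)) (fun y => dn_le_one _)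
      (fun (σ : Fin m → Option α ⊕ Fin d) y => Proper σ ∧ ∀ x, D (glue e (ev σ x) y)) β hβ
      (hsmall.trans hdD.le)
      (fun y hy => hm (Fin m) (by simp) r _ (by
        intro x x' hxx hx
        refine hD _ _ (fun i => ?_) hx
        simp only [glue]
        rcases e i with k | k
        · exact hxx k
        · rfl) hy)
    rw [← hη0] at hσ
    have hp : Proper σ := by
      obtain ⟨y, hy⟩ := exists_of_dn_pos (lt_of_lt_of_le hη0pos hσ)
      exact hy.1
    set YU : (ι' → Option α) → Prop := fun y => ∀ x, D (glue e (ev σ x) y) with hYU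
    have hYUd : η0 ≤ dn YU := hσ.trans (dn_mono fun y hy => hy.2)
    have hYUi : Insens r YU := fun y y' hyy hy x => hD _ _ (hglue _ _ _ hyy) (hy x)
    set R : (Fin m → Option α) → (ι' → Option α) → Prop :=
      fun x y => D (glue e x y) ∧ ¬ (x ∈ Set.range (ev σ) ∧ YU y) with hR
    have hRi : ∀ x, Insens r (R x) := by
      intro x
      refine Insens.and (fun y y' hyy hy => hD _ _ (hglue _ _ _ hyy) hy) (Insens.not ?_)
      exact fun y y' hyy hy => ⟨hy.1, hYUi _ _ hyy hy.2⟩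
    have hind : ∀ x y, ind (D (glue e x y)) = ind (R x y) + ind (x ∈ Set.range (ev σ)) * ind (YU y) := by
      intro x y
      by_cases h1 : x ∈ Set.range (ev σ) ∧ YU y
      · have h2 : D (glue e x y) := by
          obtain ⟨⟨z, rfl⟩, hy⟩ := h1
          exact hy z
        rw [ind_pos h2, ind_neg (fun hh => hh.2 h1), ind_pos h1.1, ind_pos h1.2]; norm_num
      · have h3 : ind (x ∈ Set.range (ev σ)) * ind (YU y) = 0 := by
          rw [not_and_or] at h1
          rcases h1 with h1 | h1
          · rw [ind_neg h1, zero_mul]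
          · rw [ind_neg h1, mul_zero]
        rw [h3, add_zero]
        by_cases h2 : D (glue e x y)
        · rw [ind_pos h2, ind_pos ⟨h2, h1⟩]
        · rw [ind_neg h2, ind_neg (fun hh => h2 hh.1)]
    set Kd : ℝ := (Nat.card (Fin d → Option α) : ℝ) with hKd
    have hKd1 : 1 ≤ Kd := by
      rw [hKd]; exact_mod_cast Nat.card_pos
    set C : ℝ := Kd / K * dn YU with hC
    set dR : ℝ := av fun x => dn (R x) with hdR
    have hYC : dn D = dR + C := by
      rw [hdR, hC]
      unfold dn
      rw [av_glue e]
      simp only [hind, av_add]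
      congr 1
      rw [av_comm]
      simp only [av_range _ (ev_injective hp), av_const, av_mul]
      rfl
    have hcap : av (fun y => av fun x => f (glue e x y) * (ind (x ∈ Set.range (ev σ)) * ind (YU y))) ≤ κ * C := by
      have h1 : ∀ y, (av fun x => f (glue e x y) * (ind (x ∈ Set.range (ev σ)) * ind (YU y))) ≤ 
          (κ * (Kd / K)) * ind (YU y) := by
        intro y
        have h2 : (fun x => f (glue e x y) * (ind (x ∈ Set.range (ev σ)) * ind (YU y))) = 
          fun x => ind (YU y) * (ind (x ∈ Set.range (ev σ)) * f (glue e x y)) := by ext x; ring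
        rw [h2, av_mul, av_range _ (ev_injective hp)]
        have h3 : av (fun z => f (glue e (ev σ z) y)) ≤ κ := by
          refine le_trans (le_of_eq ?_) (hW (fun i => Sum.elim σ (fun k => Sum.inl (y k)) (e i)) ?_)
          · congr 1; ext z; congr 1; ext i
            simp only [glue, ev]
            rcases e i with k | k <;> rfl
          · intro j
            obtain ⟨i, hi⟩ := hp j
            exact ⟨e.symm (Sum.inl i), by simp [hi]⟩
        have h4 : Kd / K * av (fun z => f (glue e (ev σ z) y)) ≤ Kd / K * κ := by gcongr
        have := mul_le_mul_of_nonneg_left h4 (ind_nonneg (YU y))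
        linarith
      refine (av_mono h1).trans (le_of_eq ?_)
      rw [av_mul, hC]; unfold dn; ring
    have hrest : ∀ x, av (fun y => f (glue e x y) * ind (R x y)) ≤ (κ + (1 - η)^J) * dn (R x) + β := by
      intro x
      refine hN ι' (by omega) (fun y => f (glue e x y)) (fun y => hf _) ?_ (R x) (hRi x)
      intro τ hτ
      refine le_trans (le_of_eq ?_) (hW (fun i => Sum.elim (fun k => Sum.inl (x k)) τ (e i)) ?_)
      · congr 1; ext z; congr 1; ext i
        simp only [glue, ev]
        rcases e i with k | k <;> rfl
      · intro j
        obtain ⟨i, hi⟩ := hτ j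
        exact ⟨e.symm (Sum.inr i), by simp [hi]⟩
    have hrest2 := av_mono hrest
    rw [av_add, av_const, av_mul, ← hdR] at hrest2
    have htot : av (fun x => f x * ind (D x)) ≤ (κ + (1 - η)^J) * dR + β + κ * C := by
      rw [av_glue e]
      simp only [hind, mul_add, av_add]
      rw [av_comm (fun x y => f (glue e x y) * (ind (x ∈ Set.range (ev σ)) * ind (YU y)))]
      linarith
    have hCη : η ≤ C := by
      have h1 : η ≤ η0 / K := min_le_right _ _
      have h2 : η0 / K ≤ C := by
        rw [hC, div_mul_eq_mul_div]
        gcongr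
        nlinarith
      linarith
    have hd1 := dn_le_one D
    have hdRle : dR ≤ (1 - η) * dn D := by nlinarith
    have := mul_le_mul_of_nonneg_left hdRle hpJ
    rw [pow_succ]
    rw [hYC] at this ⊢
    nlinarith

theorem insens_avg {α : Type} [Finite α] [Nonempty α] (h : HasDHJ α) (d : ℕ) (r : α) (κ β : ℝ)
    (hκ : 0 ≤ κ) (hβ : 0 < β) : ∃ N : ℕ, ∀ (ι : Type) [Finite ι],
    N ≤ Nat.card ι → ∀ f : (ι → Option α) → ℝ, (∀ x, f x ≤ 1) →
    (∀ σ : ι → Option α ⊕ Fin d, Proper σ → av (fun x => f (ev σ x)) ≤ κ) →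
    ∀ D, Insens r D → av (fun x => f x * ind (D x)) ≤ κ + β := by
  obtain ⟨η, h0, h1, hJ⟩ := insens_avg_aux h d r κ (β / 2) hκ (by linarith)
  obtain ⟨J, hJ'⟩ := exists_pow_lt_of_lt_one (show 0 < β / 2 by linarith) (show 1 - η < 1 by linarith)
  obtain ⟨N, hN⟩ := hJ J
  refine ⟨N, fun ι _ hι f hf hW D hD => (hN ι hι f hf hW D hD).trans ?_⟩
  have hp : 0 ≤ (1 - η) ^ J := pow_nonneg (by linarith) _
  have := mul_le_mul_of_nonneg_left (dn_le_one D) (show 0 ≤ κ + (1 - η) ^ J by linarith)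
  linarith

theorem insens_compl {α : Type} [Finite α] [Nonempty α] (h : HasDHJ α) (d : ℕ) (l : List α) :
    ∀ β : ℝ, 0 < β → ∃ N : ℕ, ∀ (ι : Type) [Finite ι],
    N ≤ Nat.card ι → ∀ f : (ι → Option α) → ℝ, (∀ x, f x ≤ 1) →
    (∀ σ : ι → Option α ⊕ Fin d, Proper σ → av (fun x => f (ev σ x)) ≤ 0) →
    ∀ D : α → (ι → Option α) → Prop, (∀ a, Insens a (D a)) →
      av (fun x => f x * ind (¬ ∀ a ∈ l, D a x)) ≤ β := by
  induction l with
  | nil =>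
    intro β hβ
    refine ⟨0, fun ι _ _ f hf _ D _ => ?_⟩
    simp [ind, av_zero, hβ.le]
  | cons a l ih =>
    intro β hβ
    obtain ⟨d1, hd1⟩ := ih (β / 3) (by linarith)
    obtain ⟨N1, hN1⟩ := insens_avg h d a 0 (β / 3) le_rfl (by linarith)
    obtain ⟨N2, hN2⟩ := insens_avg h d1 a (β / 3) (β / 3) (by linarith) (by linarith)
    refine ⟨max N1 N2, fun ι _ hι f hf hW D hD => ?_⟩
    have e1 := hN1 ι (le_trans (le_max_left _ _) hι) f hf hW (fun x => ¬ D a x) (hD a).not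
    have e2 := hN2 ι (le_trans (le_max_right _ _) hι) (fun x => f x * ind (¬ ∀ b ∈ l, D b x))
      (fun x => by
        have := mul_le_mul_of_nonneg_right (hf x) (ind_nonneg (¬ ∀ b ∈ l, D b x))
        have := ind_le_one (¬ ∀ b ∈ l, D b x)
        linarith) ?_ (D a) (hD a)
    · have e3 : (fun x => f x * ind (¬ ∀ b ∈ a :: l, D b x)) = fun x => 
          f x * ind (¬ D a x) + f x * ind (¬ ∀ b ∈ l, D b x) * ind (D a x) := by
        ext x
        by_cases ha : D a x
        · have : (∀ b ∈ a :: l, D b x) ↔ ∀ b ∈ l, D b x := by simp [ha]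
          rw [this]; simp [ha, ind]
        · have : ¬ ∀ b ∈ a :: l, D b x := by simp [ha]
          rw [ind_pos this]; simp [ha, ind]
      rw [e3, av_add]
      linarith
    · intro σ hσ
      refine hd1 (Fin d1) (by simp) (fun x => f (ev σ x)) (fun x => hf _) ?_ (fun b x => D b (ev σ x))
        (fun b => (hD b).ev σ)
      intro τ hτ
      simp only [← ev_comp]
      exact hW _ (hσ.comp hτ)

end DHJ

namespace DHJ

/-- no combinatorial line -/
def LineFree {Λ ι : Type} (A : (ι → Λ) → Prop) : Prop :=
  ∀ w : ι → Option Λ, (∃ i, w i = none) → ¬ ∀ a, A (fun i => (w i).getD a)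

theorem LineFree.ev {Λ ι η : Type} {A : (ι → Λ) → Prop} (h : LineFree A) {σ : ι → Λ ⊕ η}
    (hσ : Proper σ) : LineFree (fun x => A (ev σ x)) := by
  rintro w ⟨j, hj⟩ hw
  obtain ⟨i, hi⟩ := hσ j
  refine h (fun i => Sum.elim some w (σ i)) ⟨i, by simp [hi, hj]⟩ fun a => ?_
  convert hw a using 1
  ext i
  simp only [DHJ.ev]
  rcases σ i with q | k <;> rfl

theorem LineFree.left {Λ ι κ ι' : Type} {A : (ι → Λ) → Prop} (h : LineFree A) (e : ι ≃ κ ⊕ ι')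
    (x : κ → Λ) : LineFree (fun y => A (glue e x y)) := by
  rintro w ⟨j, hj⟩ hw
  refine h (fun i => Sum.elim (fun k => some (x k)) w (e i)) ⟨e.symm (Sum.inr j), by simp [hj]⟩ fun a => ?_
  convert hw a using 1
  ext i
  simp only [glue]
  rcases e i with q | k <;> rfl

theorem LineFree.right {Λ ι κ ι' : Type} {A : (ι → Λ) → Prop} (h : LineFree A) (e : ι ≃ κ ⊕ ι')
    (y : ι' → Λ) : LineFree (fun x => A (glue e x y)) := by
  rintro w ⟨j, hj⟩ hw
  refine h (fun i => Sum.elim w (fun k => some (y k)) (e i)) ⟨e.symm (Sum.inl j), by simp [hj]⟩ fun a => ?_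
  convert hw a using 1
  ext i
  simp only [glue]
  rcases e i with q | k <;> rfl

theorem nonefree_small (α : Type) [Finite α] [Nonempty α] (γ : ℝ) (hγ : 0 < γ) : ∃ N : ℕ, ∀ M, N ≤ M →
    dn (fun x : Fin M → Option α => ∀ i, x i ≠ none) ≤ γ := by
  have := Fintype.ofFinite α
  have hlt : (Fintype.card α : ℝ) / (Fintype.card α + 1) < 1 := by
    rw [div_lt_one (by positivity)]; linarith
  obtain ⟨N, hN⟩ := exists_pow_lt_of_lt_one hγ hlt
  refine ⟨N, fun M hM => ?_⟩
  have h1 : dn (fun x : Fin M → Option α => ∀ i, x i ≠ none) = 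
      av (fun x : Fin M → Option α => ind (x ∈ Set.range (fun (z : Fin M → α) i => some (z i))) * 1) := by
    unfold dn
    congr 1; ext x; rw [mul_one]; congr 1
    rw [eq_iff_iff]
    constructor
    · intro hx
      choose z hz using fun i => Option.ne_none_iff_exists'.1 (hx i)
      exact ⟨z, by ext1 i; simp [hz]⟩
    · rintro ⟨z, rfl⟩ i
      simp
  rw [h1, av_range (fun (z : Fin M → α) i => some (z i)) ?_, av_const]
  · have h2 : (Nat.card (Fin M → α) / Nat.card (Fin M → Option α) : ℝ) * 1 = 
        ((Fintype.card α : ℝ) / (Fintype.card α + 1)) ^ M := by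
      rw [div_pow]; simp
    rw [h2]
    exact (pow_le_pow_of_le_one (by positivity) hlt.le hM).trans hN.le
  · intro x y hxy
    ext1 i
    simpa using congrFun hxy i

theorem core {α : Type} [Finite α] [Nonempty α] (h : HasDHJ α) (δ : ℝ) (hδ : 0 < δ)
    (hup : ∀ ε : ℝ, 0 < ε → ∃ N : ℕ, ∀ (ι : Type) [Finite ι], N ≤ Nat.card ι →
      ∀ A : (ι → Option α) → Prop, LineFree A → dn A ≤ δ + ε)
    (hlow : ∀ ε : ℝ, 0 < ε → ∀ N : ℕ, ∃ (ι : Type) (_ : Finite ι), N ≤ Nat.card ι ∧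
      ∃ A : (ι → Option α) → Prop, LineFree A ∧ δ - ε ≤ dn A) : False := by
  have := Fintype.ofFinite α
  obtain ⟨M0, hM0⟩ := h (δ / 2 / 2) (by linarith)
  set θ : ℝ := δ / 2 / 2 / (Nat.card (Fin M0 → Option α) + 1) with hθ
  have hθpos : 0 < θ := by positivity
  set γ : ℝ := δ * θ / 16 with hγ
  have hγpos : 0 < γ := by positivity
  obtain ⟨d, hd⟩ := hup γ hγpos
  obtain ⟨M1, hM1⟩ := insens_compl h d (Finset.univ : Finset α).toList γ hγpos
  obtain ⟨M2, hM2⟩ := nonefree_small α γ hγpos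
  set M := max M1 M2
  obtain ⟨n0, hn0⟩ := cells (α ⊕ Fin M0) (Option α) M (θ / 2) (by linarith)
  set K : ℝ := (Nat.card (Fin n0 → Option α) : ℝ) with hK
  have hKpos : 0 < K := by rw [hK]; exact_mod_cast Nat.card_pos
  set ε : ℝ := min γ (δ / 2) / (2 * K) with hε
  have hεpos : 0 < ε := by positivity
  obtain ⟨N, hN⟩ := hup ε hεpos
  obtain ⟨ι, _, hι, A, hA, hdA⟩ := hlow ε hεpos (n0 + N)
  obtain ⟨ι', _, hc, ⟨e⟩⟩ := exists_split ι n0 (by omega)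
  -- all fibres have density close to `δ`
  have hfib : ∀ x, δ - min γ (δ / 2) ≤ dn (fun y => A (glue e x y)) := by
    intro x
    have h1 := le_card_mul_av (f := fun x => δ + ε - dn (fun y => A (glue e x y)))
      (fun x => by have := hN ι' (by omega) _ (hA.left e x); linarith) x
    rw [av_sub, av_const] at h1
    have h2 : av (fun x => dn (fun y => A (glue e x y))) = dn A := by
      unfold dn; exact (av_glue e (fun u => ind (A u))).symm
    rw [h2, ← hK] at h1
    have h3 : K * (δ + ε - dn A) ≤ K * (2 * ε) := by gcongr; linarith
    have h4 : K * (2 * ε) = min γ (δ / 2) := by rw [hε]; field_simp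
    linarith
  have hfib1 : ∀ x, δ - γ ≤ dn (fun y => A (glue e x y)) := fun x => by
    have := hfib x; have := min_le_left γ (δ / 2); linarith
  have hfib2 : ∀ x, δ / 2 ≤ dn (fun y => A (glue e x y)) := fun x => by
    have := hfib x; have := min_le_right γ (δ / 2); linarith
  -- many lines over `α`
  let Q := α ⊕ Fin M0
  obtain ⟨z, hz⟩ := pigeon' (Y := (Fin n0 → Q) × (ι' → Option α))
    (fun p => dn fun t : Fin M0 → α => A (glue e (fun i => some (Sum.elim id t (p.1 i))) p.2))
    (fun p => dn_le_one _)
    (fun (z : Fin M0 → Option α) p => (∃ j, z j = none) ∧ ∀ a,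
      A (glue e (fun i => some (Sum.elim id (fun j => (z j).getD a) (p.1 i))) p.2)) (δ / 2) (by linarith)
    (by
      rw [av_prod (fun (u : Fin n0 → Q) (y : ι' → Option α) =>
        dn fun t : Fin M0 → α => A (glue e (fun i => some (Sum.elim id t (u i))) y))]
      refine const_le_av fun u => ?_
      unfold dn
      rw [av_comm]
      exact const_le_av fun t => hfib2 _)
    (fun p hp => hM0 (Fin M0) (by simp) _ hp)
  rw [← hθ] at hz
  obtain ⟨j0, hj0⟩ : ∃ j, z j = none := by
    obtain ⟨y, hy⟩ := exists_of_dn_pos (hθpos.trans_le hz)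
    exact hy.1
  let e0 : Option α → Q := fun o => o.elim (Sum.inr j0) Sum.inl
  have he0 : Function.Injective e0 := by
    intro a b hab
    rcases a with _ | a <;> rcases b with _ | b <;> simp [e0] at hab ⊢
    exact Sum.inl_injective hab
  let φ : Q → Option α := Sum.elim some z
  have hφe : ∀ o, φ (e0 o) = o := by
    intro o
    rcases o with _ | a <;> simp [φ, e0, hj0]
  have hz2 : θ ≤ av fun u : Fin n0 → Q => dn fun y => ∀ a, A (glue e (fun i => some ((φ (u i)).getD a)) y) := by
    refine hz.trans ?_
    unfold dn
    rw [← av_prod (fun (u : Fin n0 → Q) (y : ι' → Option α) => 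
      ind (∀ a, A (glue e (fun i => some ((φ (u i)).getD a)) y)))]
    refine av_mono fun p => ind_mono fun hp a => ?_
    convert hp.2 a using 3 with i
    rcases p.1 i with q | k <;> rfl
  obtain ⟨σ, hσ, hσav⟩ := hn0 e0 he0 (Fin n0) (by simp) 
    (fun u : Fin n0 → Q => dn fun y => ∀ a, A (glue e (fun i => some ((φ (u i)).getD a)) y))
    (fun u => dn_le_one _) (θ / 2) (by linarith) (by rw [add_halves]; exact hz2)
  let V : Fin n0 → Option α ⊕ Fin M := fun i => Sum.map φ id (σ i)
  have hV : Proper V := by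
    intro j
    obtain ⟨i, hi⟩ := hσ j
    exact ⟨i, by simp [V, hi]⟩
  have hVev : ∀ x : Fin M → Option α, ∀ i, φ (ev σ (e0 ∘ x) i) = ev V x i := by
    intro x i
    simp only [ev, V]
    rcases σ i with q | k
    · rfl
    · simp [hφe]
  let D : (ι' → Option α) → α → (Fin M → Option α) → Prop := fun y a x =>
    A (glue e (fun i => some ((ev V x i).getD a)) y)
  have hDav : θ / 2 ≤ av fun y => av fun x => ind (∀ a, D y a x) := by
    rw [av_comm]
    simp only [hVev] at hσav
    exact hσav
  have hDi : ∀ y a, Insens a (D y a) := by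
    intro y a x x' hxx hx
    have h1 : (fun i => some ((ev V x i).getD a)) = fun i => some ((ev V x' i).getD a) := by
      ext1 i
      congr 1
      simp only [ev]
      rcases V i with q | k
      · rfl
      · exact hxx k
    simp only [D] at hx ⊢
    rwa [← h1]
  let f : (ι' → Option α) → (Fin M → Option α) → ℝ := fun y x => ind (A (glue e (ev V x) y)) - (δ + γ)
  have hmain : ∀ y, av (f y) ≤ 2 * γ - δ * av (fun x => ind (∀ a, D y a x)) := by
    intro y
    have h1 := hM1 (Fin M) (by simp [M]) (f y) (fun x => by
      have := ind_le_one (A (glue e (ev V x) y)); simp only [f]; linarith) (by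
      intro τ hτ
      simp only [f]
      rw [av_sub, av_const]
      simp only [← ev_comp]
      have := hd (Fin d) (by simp) _ ((hA.right e y).ev (hV.comp hτ))
      unfold dn at this
      linarith) (D y) (hDi y)
    simp only [Finset.mem_toList, Finset.mem_univ, true_imp_iff] at h1
    have h2 : ∀ x, f y x * ind (∀ a, D y a x) ≤ ind (∀ i, x i ≠ none) - δ * ind (∀ a, D y a x) := by
      intro x
      by_cases hD : ∀ a, D y a x
      · rw [ind_pos hD]
        have h3 : ind (A (glue e (ev V x) y)) ≤ ind (∀ i, x i ≠ none) := by
          refine ind_mono fun hAx j hj => ?_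
          obtain ⟨i, hi⟩ := hV j
          refine hA (fun i => Sum.elim (fun k => (ev V x k).map some) (fun k => some (y k)) (e i))
            ⟨e.symm (Sum.inl i), by simp [ev, hi, hj]⟩ fun a => ?_
          rcases a with _ | a
          · convert hAx using 1
            ext1 i
            simp only [glue]
            rcases e i with k | k
            · simp only [Sum.elim_inl]
              rcases ev V x k with _ | b <;> rfl
            · rfl
          · convert hD a using 1
            ext1 i
            simp only [glue]
            rcases e i with k | k
            · simp only [Sum.elim_inl]
              rcases ev V x k with _ | b <;> rfl
            · rfl
        simp only [f]
        linarith
      · rw [ind_neg hD]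
        have := ind_nonneg (∀ i, x i ≠ none)
        linarith
    have h4 := av_mono h2
    rw [av_sub, av_mul] at h4
    have h5 := hM2 M (le_max_right _ _)
    unfold dn at h5
    have h6 : av (f y) = av (fun x => f y x * ind (∀ a, D y a x)) + av (fun x => f y x * ind (¬ ∀ a, D y a x)) := by
      rw [← av_add]
      congr 1; ext x
      by_cases hD : ∀ a, D y a x
      · rw [ind_pos hD, ind_neg (not_not.2 hD)]; ring
      · rw [ind_neg hD, ind_pos hD]; ring
    linarith
  have h7 := av_mono hmain
  rw [av_sub, av_const, av_mul] at h7
  have h8 : -(2 * γ) ≤ av fun y => av (f y) := by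
    rw [av_comm]
    refine const_le_av fun x => ?_
    show -(2 * γ) ≤ av fun y => (ind (A (glue e (ev V x) y)) - (δ + γ))
    rw [av_sub, av_const]
    have := hfib1 (ev V x)
    unfold dn at this
    linarith
  have h9 := mul_le_mul_of_nonneg_left hDav hδ.le
  have h10 : δ * (θ / 2) = 8 * γ := by rw [hγ]; ring
  linarith

theorem step {α : Type} [Finite α] [Nonempty α] (h : HasDHJ α) : HasDHJ (Option α) := by
  let S : Set ℝ := {δ | 0 ≤ δ ∧ ∃ N : ℕ, ∀ (ι : Type) [Finite ι], N ≤ Nat.card ι →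
      ∀ A : (ι → Option α) → Prop, LineFree A → dn A ≤ δ}
  have hne : S.Nonempty := ⟨1, zero_le_one, 0, fun ι _ _ A _ => dn_le_one A⟩
  have hbd : BddBelow S := ⟨0, fun x hx => hx.1⟩
  by_cases hpos : 0 < sInf S
  · exfalso
    refine core h (sInf S) hpos ?_ ?_
    · intro ε hε
      obtain ⟨s, ⟨_, N, hN⟩, hs⟩ := exists_lt_of_csInf_lt hne (show sInf S < sInf S + ε by linarith)
      exact ⟨N, fun ι _ hι A hA => (hN ι hι A hA).trans hs.le⟩
    · intro ε hε N
      by_contra! hcon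
      have hmem : max 0 (sInf S - ε) ∈ S := 
        ⟨le_max_left _ _, N, fun ι _ hι A hA => (hcon ι inferInstance hι A hA).le.trans (le_max_right _ _)⟩
      have := csInf_le hbd hmem
      rcases le_max_iff.1 this with h1 | h1 <;> linarith
  · intro δ hδ
    obtain ⟨s, ⟨_, N, hN⟩, hs⟩ := exists_lt_of_csInf_lt hne (show sInf S < δ by linarith)
    refine ⟨N, fun ι _ hι A hA => ?_⟩
    by_contra! hcon
    have := hN ι hι A (fun w hw hw2 => by
      obtain ⟨a, ha⟩ := hcon w hw
      exact ha (hw2 a))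
    linarith

theorem HasDHJ.of_equiv {α β : Type} [Finite α] [Finite β] (e : α ≃ β) (h : HasDHJ α) : HasDHJ β := by
  intro δ hδ
  obtain ⟨N, hN⟩ := h δ hδ
  refine ⟨N, fun ι _ hι A hA => ?_⟩
  obtain ⟨w, ⟨i, hi⟩, hw⟩ := hN ι hι (fun x => A (fun i => e (x i))) (by
    refine hA.trans (le_of_eq ?_)
    unfold dn
    rw [← av_equiv (Equiv.arrowCongr (Equiv.refl ι) e)]
    rfl)
  refine ⟨fun i => (w i).map e, ⟨i, by simp [hi]⟩, fun b => ?_⟩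
  convert hw (e.symm b) using 1
  ext1 k
  rcases hk : w k with _ | a <;> simp [hk]

theorem HasDHJ.of_unique {α : Type} [Finite α] [Subsingleton α] : HasDHJ α := by
  intro δ hδ
  refine ⟨1, fun ι _ hι A hA => ?_⟩
  obtain ⟨x, hx⟩ := exists_of_dn_pos (hδ.trans_le hA)
  have : Nonempty ι := (Nat.card_pos_iff.1 (by omega)).1
  refine ⟨fun _ => none, ⟨Classical.arbitrary ι, rfl⟩, fun a => ?_⟩
  convert hx

theorem dhj_fin : ∀ n : ℕ, HasDHJ (Fin n)
  | 0 => HasDHJ.of_unique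
  | 1 => HasDHJ.of_unique
  | n + 2 => HasDHJ.of_equiv (finSuccEquiv (n + 1)).symm (step (dhj_fin (n + 1)))

/-- The density Hales-Jewett theorem. -/
theorem density_hales_jewett (α : Type) [Finite α] : HasDHJ α :=
  HasDHJ.of_equiv (Finite.equivFin α).symm (dhj_fin _)

end DHJ

namespace DHJ

theorem exists_rinv {r m : ℕ} (L : Matrix (Fin r) (Fin m) ℤ)
    (hrank : (L.map (Int.cast : ℤ → ℚ)).rank = r) :
    ∃ (R : Matrix (Fin m) (Fin r) ℤ) (D : ℕ), D ≠ 0 ∧ L * R = (D : ℤ) • (1 : Matrix (Fin r) (Fin r) ℤ) := by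
  have hsurj : Function.Surjective (L.map (Int.cast : ℤ → ℚ)).mulVec := by
    have h1 : LinearMap.range (L.map (Int.cast : ℤ → ℚ)).mulVecLin = ⊤ := by
      apply Submodule.eq_top_of_finrank_eq
      rw [Matrix.rank] at hrank
      rw [hrank]; simp
    exact LinearMap.range_eq_top.1 h1
  obtain ⟨B, hB⟩ := Matrix.mulVec_surjective_iff_exists_right_inverse.1 hsurj
  let D : ℕ := ∏ i, ∏ j, (B i j).den
  have hD : D ≠ 0 := by
    simp [D, Finset.prod_ne_zero_iff]
  have hNum : ∀ i j, ∃ z : ℤ, (z : ℚ) = D * B i j := by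
    intro i j
    have h1 : (B i j).den ∣ D :=
      (Finset.dvd_prod_of_mem _ (Finset.mem_univ j)).trans
        (Finset.dvd_prod_of_mem (fun i => ∏ j, (B i j).den) (Finset.mem_univ i))
    obtain ⟨k, hk⟩ := h1
    refine ⟨k * (B i j).num, ?_⟩
    rw [hk]
    push_cast
    have := Rat.mul_den_eq_num (B i j)
    rw [← this]; ring
  choose R hR using hNum
  refine ⟨Matrix.of R, D, hD, ?_⟩
  ext i j
  have h2 := congrFun (congrFun hB i) j
  have h3 : ((L * Matrix.of R) i j : ℚ) = D * (1 : Matrix (Fin r) (Fin r) ℚ) i j := by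
    rw [← h2]
    simp only [Matrix.mul_apply, Matrix.of_apply, Matrix.map_apply, Finset.mul_sum]
    push_cast
    refine Finset.sum_congr rfl fun k _ => ?_
    rw [hR]; ring
  simp only [Matrix.smul_apply, Matrix.one_apply] at h3 ⊢
  split_ifs at h3 ⊢ <;> · simp at h3 ⊢; exact_mod_cast h3

theorem Lhom_comp {r m k : ℕ} (L : Matrix (Fin r) (Fin m) ℤ) (R : Matrix (Fin m) (Fin k) ℤ)
    (G : Type*) [AddCommGroup G] (v : Fin k → G) :
    Lhom L G (Lhom R G v) = Lhom (L * R) G v := by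
  ext i
  simp only [Lhom, AddMonoidHom.coe_mk, ZeroHom.coe_mk, Matrix.mul_apply, Finset.smul_sum,
    Finset.sum_smul, smul_smul]
  rw [Finset.sum_comm]

theorem Lhom_scalar {r : ℕ} (D : ℕ) (G : Type*) [AddCommGroup G] (v : Fin r → G) :
    Lhom ((D : ℤ) • (1 : Matrix (Fin r) (Fin r) ℤ)) G v = D • v := by
  ext i
  simp [Lhom, Matrix.one_apply]

theorem exists_div (n : ℕ) (hn : n ≠ 0) (y : 𝕋) : ∃ w : 𝕋, n • w = y := by
  obtain ⟨t, rfl⟩ := QuotientAddGroup.mk_surjective y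
  refine ⟨((t / n : ℝ) : 𝕋), ?_⟩
  rw [← AddCircle.coe_nsmul]
  have : (n : ℝ) ≠ 0 := by exact_mod_cast hn
  congr 1
  rw [nsmul_eq_mul]; field_simp

theorem finite_index {r m : ℕ} (L : Matrix (Fin r) (Fin m) ℤ)
    (hrank : (L.map (Int.cast : ℤ → ℚ)).rank = r) (s : ℕ) (hs : s ≠ 0) :
    ∃ F : Finset (kerT L), ∀ y : kerT L, ∃ f ∈ F, ∃ z : kerT L, y = f + s • z := by
  obtain ⟨R, D, hD, hR⟩ := exists_rinv L hrank
  have hsD : s * D ≠ 0 := mul_ne_zero hs hD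
  let T : Set (Fin r → 𝕋) := {v | ∀ i, v i ∈ {u : 𝕋 | (s * D) • u = 0}}
  have hT : T.Finite := by
    have := Set.Finite.pi' (fun _ : Fin r => AddCircle.finite_torsion (p := (1 : ℝ)) (n := s * D) (Nat.pos_of_ne_zero hsD))
    exact this
  have hT2 : (Set.image (fun v => s • Lhom R 𝕋 v) T).Finite := hT.image _
  have hT3 := hT2.preimage (f := (Subtype.val : kerT L → (Fin m → 𝕋))) Subtype.val_injective.injOn
  refine ⟨hT3.toFinset, fun y => ?_⟩
  choose w hw using fun i => exists_div (s * D) hsD ((y : Fin m → 𝕋) i)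
  have hw' : (s * D) • w = (y : Fin m → 𝕋) := by ext1 i; exact hw i
  let z0 : Fin m → 𝕋 := D • w - Lhom R 𝕋 (Lhom L 𝕋 w)
  have hz0 : z0 ∈ kerT L := by
    simp only [kerT, AddMonoidHom.mem_ker, z0, map_sub, map_nsmul]
    rw [Lhom_comp L R, hR, Lhom_scalar, sub_self]
  have hy : s • Lhom R 𝕋 (Lhom L 𝕋 w) = (y : Fin m → 𝕋) - s • z0 := by
    rw [← hw']; simp only [z0, smul_sub, mul_smul]; abel
  have hmem : s • Lhom R 𝕋 (Lhom L 𝕋 w) ∈ kerT L := by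
    rw [hy]; exact sub_mem y.2 (AddSubgroup.nsmul_mem _ hz0 s)
  refine ⟨⟨_, hmem⟩, ?_, ⟨z0, hz0⟩, ?_⟩
  · rw [Set.Finite.mem_toFinset]
    refine ⟨Lhom L 𝕋 w, fun i => ?_, rfl⟩
    have h1 : (s * D) • Lhom L 𝕋 w = 0 := by
      rw [← map_nsmul, hw']; exact y.2
    exact congrFun h1 i
  · ext1
    simp [hy]

theorem isClosed_kerT {r m : ℕ} (L : Matrix (Fin r) (Fin m) ℤ) :
    IsClosed (kerT L : Set (Fin m → 𝕋)) := by
  have hc : Continuous (Lhom L 𝕋) := by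
    simp only [Lhom, AddMonoidHom.coe_mk, ZeroHom.coe_mk]
    fun_prop
  have : (kerT L : Set (Fin m → 𝕋)) = (Lhom L 𝕋) ⁻¹' {0} := by
    ext x; simp [kerT, AddMonoidHom.mem_ker]
  rw [this]
  exact isClosed_singleton.preimage hc

instance compact_kerT {r m : ℕ} (L : Matrix (Fin r) (Fin m) ℤ) : CompactSpace (kerT L) :=
  isCompact_iff_compactSpace.1 (isClosed_kerT L).isCompact

theorem push_le {r m : ℕ} (L : Matrix (Fin r) (Fin m) ℤ)
    (hrank : (L.map (Int.cast : ℤ → ℚ)).rank = r) (s : ℕ) (hs : s ≠ 0) :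
    ∃ C : ℝ, 0 ≤ C ∧ ∀ (μ : Measure (kerT L)), μ.IsAddHaarMeasure → IsProbabilityMeasure μ →
      ∀ E : Set (kerT L), MeasurableSet E → μ.real {x | s • x ∈ E} ≤ C * μ.real E := by
  obtain ⟨F, hF⟩ := finite_index L hrank s hs
  refine ⟨F.card, by positivity, fun μ _ _ E hE => ?_⟩
  let H : Set (kerT L) := Set.range fun z => s • z
  have hcont : Continuous fun z : kerT L => s • z := by fun_prop
  have hH : MeasurableSet H := (isCompact_range hcont).isClosed.measurableSet
  have h1 : 1 ≤ F.card * μ H := by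
    have hcov : (Set.univ : Set (kerT L)) ⊆ ⋃ f ∈ F, (fun x => -f + x) ⁻¹' H := by
      intro y _
      obtain ⟨f, hf, z, hz⟩ := hF y
      simp only [Set.mem_iUnion]
      exact ⟨f, hf, z, by rw [hz]; simp⟩
    calc (1 : ENNReal) = μ Set.univ := measure_univ.symm
      _ ≤ μ (⋃ f ∈ F, (fun x => -f + x) ⁻¹' H) := measure_mono hcov
      _ ≤ ∑ f ∈ F, μ ((fun x => -f + x) ⁻¹' H) := measure_biUnion_finset_le _ _
      _ = F.card * μ H := by simp [measure_preimage_add]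
  have h2 : μ H * μ {x | s • x ∈ E} ≤ μ E := by
    have hmS : MeasurableSet {p : kerT L × kerT L | p.1 + s • p.2 ∈ E} := by
      have : Continuous fun p : kerT L × kerT L => p.1 + s • p.2 := by fun_prop
      exact this.measurable hE
    calc μ H * μ {x | s • x ∈ E} = ∫⁻ h in H, μ {x | s • x ∈ E} ∂μ := by
          rw [setLIntegral_const, mul_comm]
      _ = ∫⁻ h in H, μ {x | h + s • x ∈ E} ∂μ := by
          refine setLIntegral_congr_fun hH ?_
          rintro _ ⟨z, rfl⟩
          have := measure_preimage_add μ z {x | s • x ∈ E}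
          simp only [Set.preimage_ofPred_eq, smul_add] at this
          exact this.symm
      _ ≤ ∫⁻ h, μ {x | h + s • x ∈ E} ∂μ := setLIntegral_le_lintegral _ _
      _ = (μ.prod μ) {p : kerT L × kerT L | p.1 + s • p.2 ∈ E} := by
          rw [Measure.prod_apply hmS]; rfl
      _ = ∫⁻ x, μ {h | h + s • x ∈ E} ∂μ := by
          rw [Measure.prod_apply_symm hmS]; rfl
      _ = ∫⁻ x, μ E ∂μ := by
          refine lintegral_congr fun x => ?_
          exact measure_preimage_add_right μ (s • x) E
      _ = μ E := by simp
  have h3 : μ {x | s • x ∈ E} ≤ F.card * μ E := by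
    calc μ {x | s • x ∈ E} = 1 * μ {x | s • x ∈ E} := (one_mul _).symm
      _ ≤ (F.card * μ H) * μ {x | s • x ∈ E} := by gcongr
      _ = F.card * (μ H * μ {x | s • x ∈ E}) := mul_assoc _ _ _
      _ ≤ F.card * μ E := by gcongr
  have h4 := ENNReal.toReal_mono (ENNReal.mul_ne_top (by simp) (measure_ne_top μ E)) h3
  simpa [Measure.real] using h4

theorem integral_ind {Ω : Type} [MeasurableSpace Ω] (ν : Measure Ω) [IsProbabilityMeasure ν]
    (S : Set Ω) (hS : MeasurableSet S) :
    Integrable (fun ω => ind (ω ∈ S)) ν ∧ ∫ ω, ind (ω ∈ S) ∂ν = ν.real S := by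
  have h : (fun ω => ind (ω ∈ S)) = S.indicator 1 := by
    ext ω
    by_cases hω : ω ∈ S
    · rw [ind_pos hω, Set.indicator_of_mem hω]; rfl
    · rw [ind_neg hω, Set.indicator_of_notMem hω]
  rw [h]
  exact ⟨(integrable_const (1 : ℝ)).indicator hS, integral_indicator_one hS⟩

theorem prob_pigeon {Ω : Type} [MeasurableSpace Ω] (ν : Measure Ω) [IsProbabilityMeasure ν]
    {X P : Type} [Fintype X] [Nonempty X] [Fintype P] (E : X → Set Ω) (hE : ∀ x, MeasurableSet (E x))
    (B : P → Set Ω) (hB : ∀ p, MeasurableSet (B p)) (δ : ℝ) (hδ : 0 < δ)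
    (h : ∀ x, δ ≤ ν.real (E x)) (hR : ∀ ω, δ / 2 ≤ dn (fun x => ω ∈ E x) → ∃ p, ω ∈ B p) :
    δ / 2 ≤ ∑ p, ν.real (B p) := by
  have hpt : ∀ ω, dn (fun x => ω ∈ E x) ≤ δ / 2 + ∑ p, ind (ω ∈ B p) := by
    intro ω
    have hnn : 0 ≤ ∑ p, ind (ω ∈ B p) := Finset.sum_nonneg fun _ _ => ind_nonneg _
    by_cases hω : δ / 2 ≤ dn (fun x => ω ∈ E x)
    · obtain ⟨p, hp⟩ := hR ω hω
      have h1 := Finset.single_le_sum (f := fun p => ind (ω ∈ B p)) (fun _ _ => ind_nonneg _)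
        (Finset.mem_univ p)
      simp only [ind_pos hp] at h1
      have := dn_le_one (fun x => ω ∈ E x)
      linarith
    · push Not at hω
      linarith
  have hi1 : Integrable (fun ω => dn (fun x => ω ∈ E x)) ν := by
    simp only [dn, av_eq]
    exact (integrable_finsetSum _ fun x _ => (integral_ind ν _ (hE x)).1).div_const _
  have hi2 : Integrable (fun ω => ∑ p, ind (ω ∈ B p)) ν :=
    integrable_finsetSum _ fun p _ => (integral_ind ν _ (hB p)).1
  have h1 := integral_mono hi1 ((integrable_const (δ / 2)).add hi2) hpt
  have h2 : ∫ ω, dn (fun x => ω ∈ E x) ∂ν = av fun x => ν.real (E x) := by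
    simp only [dn, av_eq]
    rw [integral_div, integral_finsetSum _ fun x _ => (integral_ind ν _ (hE x)).1]
    congr 1
    exact Finset.sum_congr rfl fun x _ => (integral_ind ν _ (hE x)).2
  have h3 : ∫ ω, (δ / 2 + ∑ p, ind (ω ∈ B p)) ∂ν = δ / 2 + ∑ p, ν.real (B p) := by
    rw [integral_add (integrable_const _) hi2, integral_finsetSum _ fun p _ => (integral_ind ν _ (hB p)).1]
    simp [fun p => (integral_ind ν _ (hB p)).2]
  have h4 : δ ≤ av fun x => ν.real (E x) := const_le_av h
  have h5 : ∫ ω, dn (fun x => ω ∈ E x) ∂ν ≤ ∫ ω, (δ / 2 + ∑ p, ind (ω ∈ B p)) ∂ν := h1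
  rw [h2, h3] at h5
  linarith

/-- The number of wildcards of a variable word. -/
def wild {m n : ℕ} (w : Fin n → Option (Fin m)) : ℕ :=
  (Finset.univ.filter fun l => w l = none).card

theorem line_sum {m n : ℕ} (w : Fin n → Option (Fin m)) (x : Fin m → 𝕋) (i : Fin m) :
    ∑ l, x ((w l).getD i) = (∑ l, (w l).elim 0 x) + wild w • x i := by
  have h : ∀ l, x ((w l).getD i) = (w l).elim 0 x + if w l = none then x i else 0 := by
    intro l
    rcases w l with _ | a <;> simp
  rw [Finset.sum_congr rfl fun l _ => h l, Finset.sum_add_distrib, wild, ← Finset.sum_filter,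
    Finset.sum_const]

theorem elim_meas {m n : ℕ} (w : Fin n → Option (Fin m)) :
    Continuous fun x : Fin m → 𝕋 => ∑ l, (w l).elim 0 x := by
  refine continuous_finsetSum _ fun l _ => ?_
  rcases w l with _ | a
  · exact continuous_const
  · exact continuous_apply a

end DHJ

open DHJ

/-- **Szemerédi-type theorem for invariant systems on the circle.**
Let `L` be an invariant (`L𝟙 = 0`) `r × m` integer matrix of full rank `r`. For every
`α > 0` there is `c > 0` such that, with `μL` the normalized Haar probability measure on
`ker_𝕋 L`, every Borel set `A ⊆ 𝕋` of measure at least `α` has solution measure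
`S_L(A) = μL(A^m ∩ ker_𝕋 L) ≥ c`. -/
theorem szemeredi_circle {r m : ℕ} (L : Matrix (Fin r) (Fin m) ℤ)
    (hrank : (L.map (Int.cast : ℤ → ℚ)).rank = r)
    (hinv : ∀ i, ∑ j, L i j = 0)
    {α : ℝ} (hα : 0 < α) :
    ∃ c : ℝ, 0 < c ∧
      ∀ (μL : Measure (kerT L)), μL.IsAddHaarMeasure → IsProbabilityMeasure μL →
        ∀ A : Set 𝕋, MeasurableSet A → α ≤ (volume A).toReal →
          c ≤ (μL {x : kerT L | ∀ i, (x : Fin m → 𝕋) i ∈ A}).toReal := by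
  rcases Nat.eq_zero_or_pos m with hm | hm
  · subst hm
    refine ⟨1, one_pos, fun μ _ _ A _ _ => ?_⟩
    have : {x : kerT L | ∀ i, (x : Fin 0 → 𝕋) i ∈ A} = Set.univ := by ext; simp
    rw [this]; simp
  have : Nonempty (Fin m) := ⟨⟨0, hm⟩⟩
  obtain ⟨n, hn⟩ := density_hales_jewett (Fin m) (α / 2) (by linarith)
  choose C hC0 hC using fun s : {s : ℕ // s ≠ 0} => push_le L hrank s.1 s.2
  let P := {w : Fin n → Option (Fin m) // ∃ i, w i = none}
  have hP : ∀ w : P, wild w.1 ≠ 0 := by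
    rintro ⟨w, i, hi⟩ h0
    rw [wild, Finset.card_eq_zero] at h0
    have : i ∈ (Finset.univ.filter fun l => w l = none) := by simp [hi]
    rw [h0] at this; simp at this
  let Ct : ℝ := ∑ w : P, C ⟨wild w.1, hP w⟩
  have hCt : 0 ≤ Ct := Finset.sum_nonneg fun w _ => hC0 _
  refine ⟨α / 2 / (Ct + 1), by positivity, fun μ hμ hμ' A hA hαA => ?_⟩
  set E : Set (kerT L) := {x : kerT L | ∀ i, (x : Fin m → 𝕋) i ∈ A} with hEdef
  have hE : MeasurableSet E := by
    rw [hEdef, Set.ofPred_forall]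
    exact MeasurableSet.iInter fun i =>
      ((continuous_apply i).comp continuous_subtype_val).measurable hA
  let one : 𝕋 → kerT L := fun t => ⟨fun _ => t, by
    simp only [kerT, AddMonoidHom.mem_ker]
    ext i
    simp only [Lhom, AddMonoidHom.coe_mk, ZeroHom.coe_mk, ← Finset.sum_smul, hinv i]
    simp⟩
  let ν : Measure (𝕋 × kerT L) := (volume : Measure 𝕋).prod μ
  have hvol : IsProbabilityMeasure (volume : Measure 𝕋) := ⟨by simp [AddCircle.measure_univ]⟩
  have hν : IsProbabilityMeasure ν := by infer_instance
  have hco : ∀ i : Fin m, Continuous fun p : 𝕋 × kerT L => (p.2 : Fin m → 𝕋) i := fun i =>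
    (continuous_apply i).comp (continuous_subtype_val.comp continuous_snd)
  have key := prob_pigeon ν
    (fun (w : Fin n → Fin m) => {p : 𝕋 × kerT L | p.1 + ∑ l, (p.2 : Fin m → 𝕋) (w l) ∈ A})
    (fun w => by
      have : Continuous fun p : 𝕋 × kerT L => p.1 + ∑ l, (p.2 : Fin m → 𝕋) (w l) :=
          continuous_fst.add (continuous_finsetSum _ fun l _ => hco (w l))
      exact this.measurable hA)
    (fun w : P => {p : 𝕋 × kerT L | ∀ i, p.1 + ((∑ l, (w.1 l).elim 0 (p.2 : Fin m → 𝕋)) +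
      wild w.1 • (p.2 : Fin m → 𝕋) i) ∈ A})
    (fun w => by
      rw [Set.ofPred_forall]
      refine MeasurableSet.iInter fun i => ?_
      have h0 := (elim_meas w.1).comp (continuous_subtype_val (p := (· ∈ kerT L)))
      have : Continuous fun p : 𝕋 × kerT L => p.1 + ((∑ l, (w.1 l).elim 0 (p.2 : Fin m → 𝕋)) +
          wild w.1 • (p.2 : Fin m → 𝕋) i) := by
        refine continuous_fst.add ((h0.comp continuous_snd).add ((continuous_nsmul _).comp (hco i)))
      exact this.measurable hA)
    α hα
    (fun w => by
      have hms : MeasurableSet {p : 𝕋 × kerT L | p.1 + ∑ l, (p.2 : Fin m → 𝕋) (w l) ∈ A} := by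
        have : Continuous fun p : 𝕋 × kerT L => p.1 + ∑ l, (p.2 : Fin m → 𝕋) (w l) :=
          continuous_fst.add (continuous_finsetSum _ fun l _ => hco (w l))
        exact this.measurable hA
      refine hαA.trans (le_of_eq ?_)
      simp only [Measure.real, ν]
      congr 1
      rw [Measure.prod_apply_symm hms]
      have : ∀ x : kerT L, volume ((fun t : 𝕋 => (t, x)) ⁻¹'
          {p : 𝕋 × kerT L | p.1 + ∑ l, (p.2 : Fin m → 𝕋) (w l) ∈ A}) = volume A := fun x =>
        measure_preimage_add_right volume (∑ l, (x : Fin m → 𝕋) (w l)) A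
      rw [lintegral_congr this]
      simp)
    (fun p hp => by
      obtain ⟨w, hw, hw2⟩ := hn (Fin n) (by simp) _ hp
      refine ⟨⟨w, hw⟩, fun i => ?_⟩
      rw [← line_sum]
      exact hw2 i)
  have hB : ∀ w : P, ν.real {p : 𝕋 × kerT L | ∀ i, p.1 + ((∑ l, (w.1 l).elim 0 (p.2 : Fin m → 𝕋)) +
      wild w.1 • (p.2 : Fin m → 𝕋) i) ∈ A} ≤ C ⟨wild w.1, hP w⟩ * μ.real E := by
    intro w
    set s := wild w.1 with hs
    have hcs : ∀ i, Continuous fun p : 𝕋 × kerT L => p.1 + s • (p.2 : Fin m → 𝕋) i := by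
      exact fun i => continuous_fst.add ((continuous_nsmul _).comp (hco i))
    have hms : MeasurableSet {p : 𝕋 × kerT L | ∀ i, p.1 + ((∑ l, (w.1 l).elim 0 (p.2 : Fin m → 𝕋)) +
        s • (p.2 : Fin m → 𝕋) i) ∈ A} := by
      rw [Set.ofPred_forall]
      refine MeasurableSet.iInter fun i => ?_
      have h0 := (elim_meas w.1).comp (continuous_subtype_val (p := (· ∈ kerT L)))
      have : Continuous fun p : 𝕋 × kerT L => p.1 + ((∑ l, (w.1 l).elim 0 (p.2 : Fin m → 𝕋)) +
          s • (p.2 : Fin m → 𝕋) i) := by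
        refine continuous_fst.add ((h0.comp continuous_snd).add ((continuous_nsmul _).comp (hco i)))
      exact this.measurable hA
    have hms2 : MeasurableSet {p : 𝕋 × kerT L | ∀ i, p.1 + s • (p.2 : Fin m → 𝕋) i ∈ A} := by
      rw [Set.ofPred_forall]
      exact MeasurableSet.iInter fun i => (hcs i).measurable hA
    have h1 : ν {p : 𝕋 × kerT L | ∀ i, p.1 + ((∑ l, (w.1 l).elim 0 (p.2 : Fin m → 𝕋)) +
        s • (p.2 : Fin m → 𝕋) i) ∈ A} = ν {p : 𝕋 × kerT L | ∀ i, p.1 + s • (p.2 : Fin m → 𝕋) i ∈ A} := by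
      simp only [ν]
      rw [Measure.prod_apply_symm hms, Measure.prod_apply_symm hms2]
      refine lintegral_congr fun x => ?_
      have := measure_preimage_add_right volume (∑ l, (w.1 l).elim 0 (x : Fin m → 𝕋))
        {t : 𝕋 | ∀ i, t + s • (x : Fin m → 𝕋) i ∈ A}
      simp only [Set.preimage_ofPred_eq, add_assoc] at this
      exact this
    have h2 : ν {p : 𝕋 × kerT L | ∀ i, p.1 + s • (p.2 : Fin m → 𝕋) i ∈ A} ≤
        ENNReal.ofReal (C ⟨s, hP w⟩ * μ.real E) := by
      simp only [ν]
      rw [Measure.prod_apply hms2]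
      have h3 : ∀ t : 𝕋, μ (Prod.mk t ⁻¹' {p : 𝕋 × kerT L | ∀ i, p.1 + s • (p.2 : Fin m → 𝕋) i ∈ A}) ≤
          ENNReal.ofReal (C ⟨s, hP w⟩ * μ.real E) := by
        intro t
        have hE' : MeasurableSet ((fun x => one t + x) ⁻¹' E) := measurable_const_add _ hE
        have h4 := hC ⟨s, hP w⟩ μ hμ hμ' _ hE'
        have h5 : μ.real ((fun x => one t + x) ⁻¹' E) = μ.real E := by
          simp only [Measure.real, measure_preimage_add]
        rw [h5] at h4
        rw [ENNReal.le_ofReal_iff_toReal_le (measure_ne_top _ _)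
          (mul_nonneg (hC0 _) measureReal_nonneg)]
        exact h4
      calc _ ≤ ∫⁻ _ : 𝕋, ENNReal.ofReal (C ⟨s, hP w⟩ * μ.real E) := lintegral_mono h3
        _ = _ := by simp
    rw [← h1] at h2
    exact (ENNReal.le_ofReal_iff_toReal_le (measure_ne_top _ _)
          (mul_nonneg (hC0 _) measureReal_nonneg)).1 h2
  have hsum := key.trans (Finset.sum_le_sum fun w _ => hB w)
  rw [← Finset.sum_mul] at hsum
  rw [div_le_iff₀ (by positivity)]
  have hnn : 0 ≤ μ.real E := measureReal_nonneg
  change α / 2 ≤ μ.real E * (Ct + 1)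
  have : Ct * μ.real E = (∑ w : P, C ⟨wild w.1, hP w⟩) * μ.real E := rfl
  nlinarith
end
end

section
/- Let L be an r×m integer matrix of full rank r. There exists K_L > 0 depending only on L such that for every positive integer p there exist elements j_1/p, j_2/p, …, j_K/p ∈ J(L,p) with K ≤ K_L such that J(L,p) is the disjoint union over k ∈ {1, …, K} of the cosets j_k/p + (Λ(p) ∩ ker_T L). -/
open MeasureTheory Set

noncomputable section

/-- The point `j/p = (j(1)/p, …, j(m)/p)` of `𝕋^m`. -/
def discPt (m p : ℕ) (j : Fin m → ℤ) : Fin m → 𝕋 :=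
  fun i => (((j i : ℝ) / p : ℝ) : 𝕋)

/-- The discrete torus `Λ(p) = ℤ_p^m / p ≤ 𝕋^m`, as a set. -/
def ΛSet (m p : ℕ) : Set (Fin m → 𝕋) :=
  {y | ∃ j : Fin m → ℤ, y = discPt m p j}

/-- The cube `[0, 1/p)^m ⊆ 𝕋^m`. -/
def cube0 (m p : ℕ) : Set (Fin m → 𝕋) :=
  Set.pi Set.univ fun _ : Fin m => (fun t : ℝ => (t : 𝕋)) '' Set.Ico (0 : ℝ) (1 / p)

/-- `J(L,p)`: the set of points `j/p ∈ Λ(p)` such that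
`μ_L((j/p + [0,1/p)^m) ∩ ker_𝕋 L) > 0`, where `μL` is the Haar probability measure on
`ker_𝕋 L`. -/
def Jset {r m : ℕ} (L : Matrix (Fin r) (Fin m) ℤ) (p : ℕ) (μL : Measure (kerT L)) :
    Set (Fin m → 𝕋) :=
  {y ∈ ΛSet m p | 0 < μL {x : kerT L | (x : Fin m → 𝕋) - y ∈ cube0 m p}}

lemma ΛSet_add {m p : ℕ} {y z : Fin m → 𝕋} (hy : y ∈ ΛSet m p) (hz : z ∈ ΛSet m p) :
    y + z ∈ ΛSet m p := by
  obtain ⟨j, rfl⟩ := hy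
  obtain ⟨k, rfl⟩ := hz
  refine ⟨j + k, ?_⟩
  ext i
  simp only [discPt, Pi.add_apply, Int.cast_add, add_div, AddCircle.coe_add]

lemma ΛSet_sub {m p : ℕ} {y z : Fin m → 𝕋} (hy : y ∈ ΛSet m p) (hz : z ∈ ΛSet m p) :
    y - z ∈ ΛSet m p := by
  obtain ⟨j, rfl⟩ := hy
  obtain ⟨k, rfl⟩ := hz
  refine ⟨j - k, ?_⟩
  ext i
  simp only [discPt, Pi.sub_apply, Int.cast_sub, sub_div, AddCircle.coe_sub]

lemma Jset_add {r m : ℕ} (L : Matrix (Fin r) (Fin m) ℤ) (p : ℕ) (μL : Measure (kerT L))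
    (hHaar : μL.IsAddHaarMeasure) {y z : Fin m → 𝕋} (hy : y ∈ Jset L p μL)
    (hz : z ∈ ΛSet m p) (hz' : z ∈ kerT L) : y + z ∈ Jset L p μL := by
  refine ⟨ΛSet_add hy.1 hz, ?_⟩
  have h := measure_preimage_add μL (-(⟨z, hz'⟩ : kerT L))
    {x : kerT L | (x : Fin m → 𝕋) - y ∈ cube0 m p}
  have e : {x : kerT L | (x : Fin m → 𝕋) - (y + z) ∈ cube0 m p} =
      (fun h => -(⟨z, hz'⟩ : kerT L) + h) ⁻¹' {x : kerT L | (x : Fin m → 𝕋) - y ∈ cube0 m p} := by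
    ext x
    simp only [mem_setOf_eq, mem_preimage, AddSubgroup.coe_add, AddSubgroup.coe_neg]
    rw [show (x : Fin m → 𝕋) - (y + z) = -z + x - y by abel]
  rw [e, h]
  exact hy.2

/-- The bound for the coordinates of `p L y`. -/
def bnd {r m : ℕ} (L : Matrix (Fin r) (Fin m) ℤ) : ℤ := ∑ i, ∑ j, |L i j|

lemma image_sub {r m : ℕ} (L : Matrix (Fin r) (Fin m) ℤ) (p : ℕ) (hp : 0 < p)
    (μL : Measure (kerT L)) :
    Lhom L 𝕋 '' Jset L p μL ⊆
      discPt r p '' ((Fintype.piFinset fun _ : Fin r => Finset.Icc (-bnd L) (bnd L) :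
        Finset (Fin r → ℤ)) : Set (Fin r → ℤ)) := by
  rintro _ ⟨y, ⟨⟨j, hj⟩, hy⟩, rfl⟩
  obtain ⟨x, hx⟩ := nonempty_of_measure_ne_zero hy.ne'
  have hp' : (0 : ℝ) < p := by exact_mod_cast hp
  have hx' : ∀ i, ∃ t : ℝ, t ∈ Set.Ico (0 : ℝ) (1 / p) ∧ (t : 𝕋) = (x : Fin m → 𝕋) i - y i := by
    intro i
    exact hx i (mem_univ i)
  choose t ht hxt using hx'
  have hker : Lhom L 𝕋 (x : Fin m → 𝕋) = 0 := x.2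
  have key : ∀ i, Lhom L 𝕋 y i = ((-∑ k, (L i k : ℝ) * t k : ℝ) : 𝕋) := by
    intro i
    have h0 : Lhom L 𝕋 ((x : Fin m → 𝕋) - y) i = -(Lhom L 𝕋 y i) := by
      rw [map_sub, hker]; simp
    have h1 : Lhom L 𝕋 ((x : Fin m → 𝕋) - y) i = ((∑ k, (L i k : ℝ) * t k : ℝ) : 𝕋) := by
      change ∑ k, L i k • ((x : Fin m → 𝕋) - y) k = _
      rw [← QuotientAddGroup.mk'_apply, map_sum]
      refine Finset.sum_congr rfl fun k _ => ?_
      rw [Pi.sub_apply, ← hxt k, ← zsmul_eq_mul, map_zsmul]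
      rfl
    rw [AddCircle.coe_neg, ← h1, h0, neg_neg]
  have key2 : ∀ i, Lhom L 𝕋 y i = (((∑ k, L i k * j k : ℤ) / p : ℝ) : 𝕋) := by
    intro i
    change ∑ k, L i k • y k = _
    push_cast
    rw [Finset.sum_div, ← QuotientAddGroup.mk'_apply, map_sum]
    refine Finset.sum_congr rfl fun k _ => ?_
    rw [hj, mul_div_assoc, ← zsmul_eq_mul, map_zsmul]
    rfl
  have hn : ∀ i, ∃ n : ℤ, (n : ℝ) = -(∑ k, (L i k : ℝ) * t k) * p := by
    intro i
    have h := (key i).symm.trans (key2 i)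
    rw [← sub_eq_zero, ← AddCircle.coe_sub, AddCircle.coe_eq_zero_iff] at h
    obtain ⟨q, hq⟩ := h
    refine ⟨q * p + ∑ k, L i k * j k, ?_⟩
    rw [zsmul_eq_mul, mul_one, eq_sub_iff_add_eq] at hq
    rw [← hq, add_mul, div_mul_cancel₀ _ hp'.ne', Int.cast_add, Int.cast_mul, Int.cast_natCast]
  choose n hn using hn
  refine ⟨n, ?_, ?_⟩
  · simp only [Finset.mem_coe, Fintype.mem_piFinset, Finset.mem_Icc]
    intro i
    rw [← abs_le]
    have h1 : (|n i| : ℝ) ≤ ∑ k, |(L i k : ℝ)| := by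
      rw [hn, neg_mul, abs_neg, Finset.sum_mul]
      refine (Finset.abs_sum_le_sum_abs _ _).trans (Finset.sum_le_sum fun k _ => ?_)
      have h2 : t k * p ≤ 1 := by
        have := (ht k).2.le
        rwa [le_div_iff₀ hp'] at this
      have h3 : 0 ≤ t k * p := mul_nonneg (ht k).1 hp'.le
      rw [mul_assoc, abs_mul, abs_of_nonneg h3]
      exact mul_le_of_le_one_right (abs_nonneg _) h2
    have h4 : |n i| ≤ ∑ k, |L i k| := by exact_mod_cast h1
    exact h4.trans (Finset.single_le_sum (f := fun i => ∑ k, |L i k|)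
      (fun i _ => Finset.sum_nonneg fun k _ => abs_nonneg _) (Finset.mem_univ i))
  · ext i
    rw [key i]
    simp only [discPt]
    rw [hn, mul_div_cancel_right₀ _ hp'.ne']

/-- **`J(L,p)` is a bounded disjoint union of cosets of `Λ(p) ∩ ker_𝕋 L`.**
For `L` an `r × m` integer matrix of full rank `r` and `μL` the Haar probability measure on
`ker_𝕋 L`, there is `K_L > 0` depending only on `L` such that for every positive integer `p`
there are `j₁/p, …, j_K/p ∈ J(L,p)` with `K ≤ K_L` and
`J(L,p) = ⨆_{k ∈ [K]} (j_k/p + (Λ(p) ∩ ker_𝕋 L))`, the union being disjoint. -/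
theorem J_cover {r m : ℕ} (L : Matrix (Fin r) (Fin m) ℤ)
    (hrank : (L.map (Int.cast : ℤ → ℚ)).rank = r)
    (μL : Measure (kerT L)) (hHaar : μL.IsAddHaarMeasure) (hprob : IsProbabilityMeasure μL) :
    ∃ KL : ℕ, 0 < KL ∧
      ∀ p : ℕ, 0 < p →
        ∃ K : ℕ, K ≤ KL ∧
          ∃ a : Fin K → (Fin m → 𝕋),
            (∀ k, a k ∈ Jset L p μL) ∧
            (Jset L p μL =
              ⋃ k : Fin K, (fun y => a k + y) '' (ΛSet m p ∩ (kerT L : Set (Fin m → 𝕋)))) ∧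
            Pairwise fun k k' : Fin K =>
              Disjoint ((fun y => a k + y) '' (ΛSet m p ∩ (kerT L : Set (Fin m → 𝕋))))
                ((fun y => a k' + y) '' (ΛSet m p ∩ (kerT L : Set (Fin m → 𝕋)))) := by
  set F := (Fintype.piFinset fun _ : Fin r => Finset.Icc (-bnd L) (bnd L) :
        Finset (Fin r → ℤ)) with hF
  refine ⟨F.card + 1, Nat.succ_pos _, fun p hp => ?_⟩
  have hsub := image_sub L p hp μL
  rw [← hF] at hsub
  have hfinF : (discPt r p '' (F : Set (Fin r → ℤ))).Finite := F.finite_toSet.image _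
  have hfin : (Lhom L 𝕋 '' Jset L p μL).Finite := hfinF.subset hsub
  have hcard : (Lhom L 𝕋 '' Jset L p μL).ncard ≤ F.card + 1 := by
    refine ((ncard_le_ncard hsub hfinF).trans (ncard_image_le F.finite_toSet)).trans ?_
    rw [ncard_coe_finset]
    exact Nat.le_succ _
  haveI : Finite (Lhom L 𝕋 '' Jset L p μL) := hfin
  let e : (Lhom L 𝕋 '' Jset L p μL) ≃ Fin (Lhom L 𝕋 '' Jset L p μL).ncard := Finite.equivFin _
  have hch : ∀ k, ∃ y, y ∈ Jset L p μL ∧ Lhom L 𝕋 y = (e.symm k : Fin r → 𝕋) :=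
    fun k => (e.symm k).2
  choose a ha hae using hch
  refine ⟨_, hcard, a, ha, ?_, ?_⟩
  · ext y
    simp only [mem_iUnion, mem_image]
    constructor
    · intro hy
      refine ⟨e ⟨_, y, hy, rfl⟩, y - a (e ⟨_, y, hy, rfl⟩), ⟨ΛSet_sub hy.1 (ha _).1, ?_⟩, by abel⟩
      change Lhom L 𝕋 _ = 0
      rw [map_sub, hae, Equiv.symm_apply_apply, sub_self]
    · rintro ⟨k, z, ⟨hz, hz'⟩, rfl⟩
      exact Jset_add L p μL hHaar (ha k) hz hz'
  · intro k k' hkk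
    rw [Set.disjoint_left]
    rintro _ ⟨z, ⟨_, hz⟩, rfl⟩ ⟨w, ⟨_, hw⟩, hzw⟩
    apply hkk
    have hz0 : Lhom L 𝕋 z = 0 := hz
    have hw0 : Lhom L 𝕋 w = 0 := hw
    have h := congrArg (Lhom L 𝕋) hzw
    simp only [map_add, hz0, hw0, add_zero, hae] at h
    exact e.symm.injective (Subtype.ext h.symm)
end
end
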